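/- arXiv:2412.04589 — 2 statements merged into one kernel-verified Lean document; each statement's English description precedes it below -/
import Mathlib

section
/- Let X_t = Σ_{k=1}^∞ J_k·1_{{τ_k ≤ t}} and 𝔾 = (𝓖_t)_{t≥0} be given by the Cox construction with infinitely many jumps (with i.i.d. jump sizes (J_k) of law ν, i.i.d. Exp(1) driving variables (E_k), jump times (τ_k), and intensities (λ^k) with c ≤ λ^k ≤ C), and assume each λ^k is 𝔾-predictable. Define λ_t := Σ_{k=1}^∞ 1_{{τ_{k-1} < t ≤ τ_k}} λ^k_t. Let 𝓟 be the σ-algebra on Ω × [0,∞) generated by all sets A × {0} with A ∈ 𝓖_0 and all sets A × (s,t] with A ∈ 𝓖_s and 0 ≤ s < t. Then for every T > 0 and every (𝓟 ⊗ 𝓑(ℝ))-measurable function W : Ω × [0,∞) × ℝ → [0,∞], one has E[Σ_{k≥1 : τ_k ≤ T} W(τ_k, J_k)] = E[∫_0^T ∫_ℝ W(u, ξ) λ_u ν(dξ) du]. (Equivalently, the compensator of the jump measure of X is λ_t ν(dξ) dt.) -/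
open MeasureTheory ProbabilityTheory Filter Set
open scoped ENNReal Topology

noncomputable section

namespace InvMarkovJump

variable {Ω : Type*}

/-- `F` is a filtration (for times `t ≥ 0`) of sub-σ-algebras of `m0`. -/
def IsFiltration (m0 : MeasurableSpace Ω) (F : ℝ → MeasurableSpace Ω) : Prop :=
  (∀ s t : ℝ, 0 ≤ s → s ≤ t → F s ≤ F t) ∧ ∀ t : ℝ, F t ≤ m0

/-- The right-continuous regularization `(⋂_{s > t} F s)_{t ≥ 0}` of a filtration. -/
def rcReg (F : ℝ → MeasurableSpace Ω) : ℝ → MeasurableSpace Ω :=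
  fun t => ⨅ s ∈ Set.Ioi t, F s

/-- All sample paths of `M` are right-continuous (at every time `t ≥ 0`). -/
def RCPaths (M : ℝ → Ω → ℝ) : Prop :=
  ∀ ω, ∀ t : ℝ, 0 ≤ t → ContinuousWithinAt (fun s => M s ω) (Set.Ici t) t

/-- `M` is a martingale (for times `t ≥ 0`) with respect to the filtration `F`
under the measure `μ`: it is adapted, integrable, and `E[M_t | F_s] = M_s` a.s.
for all `0 ≤ s ≤ t`. -/
def IsMartingale {m0 : MeasurableSpace Ω} (μ : Measure Ω)
    (F : ℝ → MeasurableSpace Ω) (M : ℝ → Ω → ℝ) : Prop :=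
  (∀ t : ℝ, 0 ≤ t → Integrable (M t) μ) ∧
  (∀ t : ℝ, 0 ≤ t → Measurable[F t] (M t)) ∧
  ∀ s t : ℝ, 0 ≤ s → s ≤ t → μ[M t|F s] =ᵐ[μ] M s

/-- `F` is immersed in `G`: `F ⊆ G` and every `F`-martingale (with right-continuous
sample paths) is a `G`-martingale. -/
def Immersed {m0 : MeasurableSpace Ω} (μ : Measure Ω)
    (F G : ℝ → MeasurableSpace Ω) : Prop :=
  (∀ t : ℝ, 0 ≤ t → F t ≤ G t) ∧
  ∀ M : ℝ → Ω → ℝ, RCPaths M → IsMartingale μ F M → IsMartingale μ G M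

/-- The usual conditions: the filtration is right-continuous and `F 0` contains
all `μ`-null sets. -/
def UsualConditions {m0 : MeasurableSpace Ω} (μ : Measure Ω)
    (F : ℝ → MeasurableSpace Ω) : Prop :=
  IsFiltration m0 F ∧ (∀ t : ℝ, 0 ≤ t → F t = rcReg F t) ∧
    ∀ s : Set Ω, μ s = 0 → MeasurableSet[F 0] s

/-- `E` is `Exp(1)`-distributed: `P(E > x) = e^{-x}` for all `x ≥ 0`. -/
def IsExpOne {m0 : MeasurableSpace Ω} (μ : Measure Ω) (E : Ω → ℝ) : Prop :=
  Measurable E ∧ ∀ x : ℝ, 0 ≤ x → μ {ω | x < E ω} = ENNReal.ofReal (Real.exp (-x))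

/-- `F_∞ = ⋁_{t ≥ 0} F t`. -/
def Finfty (F : ℝ → MeasurableSpace Ω) : MeasurableSpace Ω :=
  ⨆ t ∈ Set.Ici (0:ℝ), F t

/-- The natural filtration `(σ(Y_s : 0 ≤ s ≤ t))_{t ≥ 0}` of a process `Y`. -/
def natFilt {β : Type*} [MeasurableSpace β] (Y : ℝ → Ω → β) : ℝ → MeasurableSpace Ω :=
  fun t => ⨆ s ∈ Set.Icc (0:ℝ) t, MeasurableSpace.comap (Y s) inferInstance

/-- Progressive measurability of a process `u` with respect to the filtration `F`:
for every `t ≥ 0`, `(s, ω) ↦ u s ω` on `[0, t] × Ω` is `B([0,t]) ⊗ F t`-measurable. -/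
def ProgMeas (F : ℝ → MeasurableSpace Ω) (u : ℝ → Ω → ℝ) : Prop :=
  ∀ t : ℝ, 0 ≤ t →
    Measurable[MeasurableSpace.prod inferInstance (F t)]
      (fun p : Set.Icc (0:ℝ) t × Ω => u p.1 p.2)

/-- The predictable σ-algebra on `Ω × [0,∞)` associated with a filtration `G`: generated by
the sets `A × {0}` with `A ∈ G 0` and `A × (s,t]` with `A ∈ G s`, `0 ≤ s < t`. -/
def predSigma (G : ℝ → MeasurableSpace Ω) : MeasurableSpace (Ω × ℝ) :=
  MeasurableSpace.generateFrom
    {P | (∃ A : Set Ω, MeasurableSet[G 0] A ∧ P = A ×ˢ ({0} : Set ℝ)) ∨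
      (∃ (A : Set Ω) (s t : ℝ), MeasurableSet[G s] A ∧ 0 ≤ s ∧ s < t ∧
        P = A ×ˢ Set.Ioc s t)}


/-- inverse of the integrated intensity -/
def sig (lam : ℝ → ℝ) (S x : ℝ) : ℝ := sInf {t : ℝ | S < t ∧ x ≤ ∫ s in Set.Ioc S t, lam s}

section det
variable {lam : ℝ → ℝ} {c C S : ℝ}

lemma lam_intOn (hm : Measurable lam) (hb : ∀ s, c ≤ lam s ∧ lam s ≤ C) (a b : ℝ) :
    IntegrableOn lam (Ioc a b) := by
  refine Measure.integrableOn_of_bounded (M := max |c| |C|) (by simp) hm.aestronglyMeasurable ?_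
  filter_upwards with s
  exact abs_le_max_abs_abs (hb s).1 (hb s).2

lemma Lam_sub (hm : Measurable lam) (hb : ∀ s, c ≤ lam s ∧ lam s ≤ C) {a b : ℝ}
    (ha : S ≤ a) (hab : a ≤ b) :
    (∫ s in Ioc S b, lam s) = (∫ s in Ioc S a, lam s) + ∫ s in Ioc a b, lam s := by
  rw [← Ioc_union_Ioc_eq_Ioc ha hab]
  exact setIntegral_union (Ioc_disjoint_Ioc_of_le le_rfl) measurableSet_Ioc
    (lam_intOn hm hb _ _) (lam_intOn hm hb _ _)

lemma Lam_bounds (hm : Measurable lam) (hb : ∀ s, c ≤ lam s ∧ lam s ≤ C) {a b : ℝ}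
    (hab : a ≤ b) :
    c * (b - a) ≤ (∫ s in Ioc a b, lam s) ∧ (∫ s in Ioc a b, lam s) ≤ C * (b - a) := by
  have h1 : ∫ s in Ioc a b, c = c * (b - a) := by simp [hab, mul_comm]
  have h2 : ∫ s in Ioc a b, C = C * (b - a) := by simp [hab, mul_comm]
  rw [← h1, ← h2]
  constructor
  · exact setIntegral_mono (by simp) (lam_intOn hm hb _ _) (fun s => (hb s).1)
  · exact setIntegral_mono (lam_intOn hm hb _ _) (by simp) (fun s => (hb s).2)

lemma Lam_strict (hc : 0 < c) (hm : Measurable lam) (hb : ∀ s, c ≤ lam s ∧ lam s ≤ C) {a b : ℝ}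
    (ha : S ≤ a) (hab : a < b) :
    (∫ s in Ioc S a, lam s) < ∫ s in Ioc S b, lam s := by
  rw [Lam_sub hm hb ha hab.le]
  have := (Lam_bounds hm hb hab.le).1
  nlinarith [mul_pos hc (sub_pos.2 hab)]

lemma Lam_le_iff (hc : 0 < c) (hm : Measurable lam) (hb : ∀ s, c ≤ lam s ∧ lam s ≤ C) {a b : ℝ}
    (ha : S ≤ a) (hb' : S ≤ b) :
    (∫ s in Ioc S a, lam s) ≤ (∫ s in Ioc S b, lam s) ↔ a ≤ b := by
  constructor
  · intro h
    by_contra! h'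
    exact absurd (Lam_strict hc hm hb hb' h') (not_lt.2 h)
  · intro h
    rcases h.eq_or_lt with rfl | h
    · rfl
    · exact (Lam_strict hc hm hb ha h).le

lemma Lam_nonneg (hc : 0 < c) (hb : ∀ s, c ≤ lam s ∧ lam s ≤ C) (t : ℝ) :
    0 ≤ ∫ s in Ioc S t, lam s :=
  integral_nonneg (fun s => hc.le.trans (hb s).1)

lemma Lam_cont (hc : 0 < c) (hm : Measurable lam) (hb : ∀ s, c ≤ lam s ∧ lam s ≤ C) :
    ContinuousOn (fun t => ∫ s in Ioc S t, lam s) (Ici S) := by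
  have hC : 0 ≤ C := hc.le.trans ((hb 0).1.trans (hb 0).2)
  refine (LipschitzOnWith.of_le_add_mul (K := C.toNNReal) ?_).continuousOn
  intro a ha b hb'
  rw [Real.coe_toNNReal _ hC, Real.dist_eq]
  rcases le_total a b with h | h
  · have := (Lam_le_iff hc hm hb ha hb').2 h
    nlinarith [mul_nonneg hC (abs_nonneg (a - b))]
  · rw [Lam_sub hm hb hb' h, abs_of_nonneg (sub_nonneg.2 h)]
    linarith [(Lam_bounds hm hb h).2]

lemma Lam_surj (hc : 0 < c) (hm : Measurable lam) (hb : ∀ s, c ≤ lam s ∧ lam s ≤ C) {x : ℝ}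
    (hx : 0 ≤ x) : ∃ t, S ≤ t ∧ (∫ s in Ioc S t, lam s) = x := by
  have hR : S ≤ S + x / c := by have := div_nonneg hx hc.le; linarith
  have h := intermediate_value_Icc hR ((Lam_cont (S := S) hc hm hb).mono Icc_subset_Ici_self)
  have hx' : x ∈ Icc (∫ s in Ioc S S, lam s) (∫ s in Ioc S (S + x / c), lam s) := by
    constructor
    · simpa using hx
    · refine le_trans (le_of_eq ?_) (Lam_bounds hm hb hR).1
      field_simp; ring
  obtain ⟨t, ht, h⟩ := h hx'
  exact ⟨t, ht.1, h⟩

lemma sig_eq (hc : 0 < c) (hm : Measurable lam) (hb : ∀ s, c ≤ lam s ∧ lam s ≤ C) {x t : ℝ}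
    (ht : S ≤ t) (hx : (∫ s in Ioc S t, lam s) = x) : sig lam S x = t := by
  have : {r : ℝ | S < r ∧ x ≤ ∫ s in Set.Ioc S r, lam s} = {r | S < r ∧ t ≤ r} := by
    ext r
    simp only [mem_ofPred_eq, ← hx]
    exact and_congr_right fun h => Lam_le_iff hc hm hb ht h.le
  rw [sig, this]
  rcases ht.eq_or_lt with rfl | h
  · have : {r : ℝ | S < r ∧ S ≤ r} = Ioi S := by ext r; simpa using le_of_lt
    rw [this, csInf_Ioi]
  · have : {r : ℝ | S < r ∧ t ≤ r} = Ici t := by ext r; simpa using h.trans_le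
    rw [this, csInf_Ici]

lemma sig_spec (hc : 0 < c) (hm : Measurable lam) (hb : ∀ s, c ≤ lam s ∧ lam s ≤ C) {x : ℝ}
    (hx : 0 ≤ x) : S ≤ sig lam S x ∧ (∫ s in Ioc S (sig lam S x), lam s) = x := by
  obtain ⟨t, ht, h⟩ := Lam_surj (S := S) hc hm hb hx
  rw [sig_eq hc hm hb ht h]
  exact ⟨ht, h⟩

lemma sig_neg (hc : 0 < c) (hb : ∀ s, c ≤ lam s ∧ lam s ≤ C) {x : ℝ}
    (hx : x ≤ 0) : sig lam S x = S := by
  have : {r : ℝ | S < r ∧ x ≤ ∫ s in Set.Ioc S r, lam s} = Ioi S := by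
    ext r
    simp only [mem_ofPred_eq, mem_Ioi, and_iff_left_iff_imp]
    exact fun _ => hx.trans (Lam_nonneg hc hb r)
  rw [sig, this, csInf_Ioi]

lemma sig_le_iff (hc : 0 < c) (hm : Measurable lam) (hb : ∀ s, c ≤ lam s ∧ lam s ≤ C) {x t : ℝ} :
    sig lam S x ≤ t ↔ S ≤ t ∧ x ≤ ∫ s in Ioc S t, lam s := by
  rcases le_total x 0 with hx | hx
  · rw [sig_neg hc hb hx]
    exact ⟨fun h => ⟨h, hx.trans (Lam_nonneg hc hb t)⟩, fun h => h.1⟩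
  · obtain ⟨h1, h2⟩ := sig_spec (S := S) hc hm hb hx
    constructor
    · intro h
      refine ⟨h1.trans h, ?_⟩
      conv_lhs => rw [← h2]
      exact (Lam_le_iff hc hm hb h1 (h1.trans h)).2 h
    · rintro ⟨h, h'⟩
      rw [← h2] at h'
      exact (Lam_le_iff hc hm hb h1 h).1 h'


def expM : Measure ℝ := (volume.restrict (Ioi 0)).withDensity (fun x => ENNReal.ofReal (Real.exp (-x)))

lemma expM_Ioi {x : ℝ} (hx : 0 ≤ x) : expM (Ioi x) = ENNReal.ofReal (Real.exp (-x)) := by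
  rw [expM, withDensity_apply _ measurableSet_Ioi, Measure.restrict_restrict measurableSet_Ioi,
    Ioi_inter_Ioi, max_eq_left hx, ← ofReal_integral_eq_lintegral_ofReal, integral_exp_neg_Ioi]
  · exact integrableOn_exp_neg_Ioi x
  · filter_upwards with y using (Real.exp_pos _).le

instance : IsProbabilityMeasure expM := by
  constructor
  have h := expM_Ioi (le_refl 0)
  have : expM (Iic 0) = 0 := by
    rw [expM, withDensity_apply _ measurableSet_Iic, Measure.restrict_restrict measurableSet_Iic,
      Iic_inter_Ioi]
    simp
  rw [← Iic_union_Ioi (a := (0:ℝ)), measure_union (by simp) measurableSet_Ioi, this, h]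
  simp

lemma map_eq_expM {Ω : Type*} {m0 : MeasurableSpace Ω} (μ : Measure Ω) [IsProbabilityMeasure μ]
    {E : Ω → ℝ} (hm : Measurable E)
    (h : ∀ x : ℝ, 0 ≤ x → μ {ω | x < E ω} = ENNReal.ofReal (Real.exp (-x))) :
    Measure.map E μ = expM := by
  have : IsProbabilityMeasure (Measure.map E μ) := Measure.isProbabilityMeasure_map hm.aemeasurable
  have key : ∀ x : ℝ, 0 ≤ x → Measure.map E μ (Ioi x) = expM (Ioi x) := by
    intro x hx
    rw [Measure.map_apply hm measurableSet_Ioi, expM_Ioi hx, ← h x hx]; rfl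
  have key' : ∀ x : ℝ, Measure.map E μ (Ioi x) = expM (Ioi x) := by
    intro x
    rcases le_total 0 x with hx | hx
    · exact key x hx
    · have h1 : ∀ (ρ : Measure ℝ) [IsProbabilityMeasure ρ], ρ (Ioi 0) = 1 → ρ (Ioi x) = 1 :=
        fun ρ _ h => le_antisymm prob_le_one (h ▸ measure_mono (Ioi_subset_Ioi hx))
      have h0 : expM (Ioi 0) = 1 := by rw [expM_Ioi le_rfl]; simp
      rw [h1 expM h0, h1 _ ((key 0 le_rfl).trans h0)]
  refine Measure.ext_of_Iic _ _ fun a => ?_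
  rw [← compl_Ioi, prob_compl_eq_one_sub measurableSet_Ioi, prob_compl_eq_one_sub measurableSet_Ioi,
    key']

lemma map_Lam (hc : 0 < c) (hm : Measurable lam) (hb : ∀ s, c ≤ lam s ∧ lam s ≤ C)
    (hΛ : Measurable (fun t => ∫ s in Ioc S t, lam s)) :
    Measure.map (fun t => ∫ s in Ioc S t, lam s)
      ((volume.restrict (Ioi S)).withDensity (fun u => ENNReal.ofReal (lam u)))
      = volume.restrict (Ioi 0) := by
  have key : ∀ a b : ℝ, a < b → Measure.map (fun t => ∫ s in Ioc S t, lam s)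
      ((volume.restrict (Ioi S)).withDensity (fun u => ENNReal.ofReal (lam u))) (Ioc a b)
      = volume.restrict (Ioi 0) (Ioc a b) := by
    intro a b hab
    rw [Measure.map_apply hΛ measurableSet_Ioc, withDensity_apply _ (hΛ measurableSet_Ioc),
      Measure.restrict_restrict (hΛ measurableSet_Ioc), Measure.restrict_apply measurableSet_Ioc,
      Ioc_inter_Ioi]
    rcases le_or_gt b 0 with hb0 | hb0
    · have : ((fun t => ∫ s in Ioc S t, lam s) ⁻¹' (Ioc a b)) ∩ Ioi S = ∅ := by
        ext t
        simp only [mem_inter_iff, mem_preimage, mem_Ioc, mem_Ioi, mem_empty_iff_false, iff_false]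
        rintro ⟨⟨_, h⟩, h'⟩
        have := Lam_strict (S := S) hc hm hb le_rfl h'
        simp at this
        linarith
      rw [this]
      have h2 : Ioc (a ⊔ 0) b = ∅ := Ioc_eq_empty (by simp [hb0])
      simp [h2]
    · have ha0 : (0:ℝ) ≤ a ⊔ 0 := le_max_right _ _
      obtain ⟨p1, p2⟩ := sig_spec (S := S) hc hm hb ha0
      obtain ⟨q1, q2⟩ := sig_spec (S := S) hc hm hb hb0.le
      set p := sig lam S (a ⊔ 0)
      set q := sig lam S b
      have hpq : p ≤ q := by
        rw [← Lam_le_iff hc hm hb p1 q1, p2, q2]; exact max_le hab.le hb0.le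
      have : ((fun t => ∫ s in Ioc S t, lam s) ⁻¹' (Ioc a b)) ∩ Ioi S = Ioc p q := by
        ext t
        simp only [mem_inter_iff, mem_preimage, mem_Ioc, mem_Ioi]
        constructor
        · rintro ⟨⟨h1, h2⟩, h3⟩
          have h4 := Lam_strict (S := S) hc hm hb le_rfl h3
          simp only [Ioc_self, Measure.restrict_empty, integral_zero_measure] at h4
          refine ⟨?_, ?_⟩
          · rw [← not_le, ← Lam_le_iff hc hm hb h3.le p1, not_le, p2]
            exact max_lt h1 h4
          · rwa [← Lam_le_iff hc hm hb h3.le q1, q2]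
        · rintro ⟨h1, h2⟩
          have h3 := p1.trans_lt h1
          rw [← not_le, ← Lam_le_iff hc hm hb h3.le p1, not_le, p2] at h1
          rw [← Lam_le_iff hc hm hb h3.le q1, q2] at h2
          exact ⟨⟨(le_max_left _ _).trans_lt h1, h2⟩, h3⟩
      rw [this, ← ofReal_integral_eq_lintegral_ofReal (lam_intOn hm hb _ _)
        (by filter_upwards with y using hc.le.trans (hb y).1), Real.volume_Ioc]
      congr 1
      have := Lam_sub (S := S) hm hb p1 hpq
      rw [p2, q2] at this
      linarith
  refine Measure.ext_of_Ioc' _ _ ?_ key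
  intro a b hab
  rw [key a b hab]
  exact ((Measure.restrict_apply_le _ _).trans_lt (by simp)).ne

lemma sig_meas (hc : 0 < c) (hm : Measurable lam) (hb : ∀ s, c ≤ lam s ∧ lam s ≤ C) :
    Measurable (sig lam S) := by
  refine measurable_of_Iic fun t => ?_
  have : sig lam S ⁻¹' Iic t = {x | S ≤ t ∧ x ≤ ∫ s in Ioc S t, lam s} := by
    ext x; exact sig_le_iff hc hm hb
  rw [this]
  exact (MeasurableSet.const _).inter measurableSet_Iic

lemma Lam_meas (hc : 0 < c) (hm : Measurable lam) (hb : ∀ s, c ≤ lam s ∧ lam s ≤ C) :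
    Measurable (fun t => ∫ s in Ioc S t, lam s) := by
  have : Monotone (fun t => ∫ s in Ioc S t, lam s) := by
    intro a b hab
    exact setIntegral_mono_set (lam_intOn hm hb _ _)
      (by filter_upwards with y using hc.le.trans (hb y).1)
      (Ioc_subset_Ioc_right hab).eventuallyLE
  exact this.measurable

lemma det_main (hc : 0 < c) (hm : Measurable lam) (hb : ∀ s, c ≤ lam s ∧ lam s ≤ C) (hS : 0 ≤ S)
    {g : ℝ → ℝ≥0∞} (hg : Measurable g) (T : ℝ) :
    ∫⁻ x, (if sig lam S x ≤ T then g (sig lam S x) else 0) ∂expM =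
    ∫⁻ x, (∫⁻ u in Ioc 0 T, g u * ENNReal.ofReal
      (if S < u ∧ u ≤ sig lam S x then lam u else 0)) ∂expM := by
  have hΛ := Lam_meas (S := S) hc hm hb
  have hσ := sig_meas (S := S) hc hm hb
  -- left side
  have hL : ∫⁻ x, (if sig lam S x ≤ T then g (sig lam S x) else 0) ∂expM =
      ∫⁻ u in Ioi S, ENNReal.ofReal (lam u) *
        (ENNReal.ofReal (Real.exp (- ∫ s in Ioc S u, lam s)) * (if u ≤ T then g u else 0)) := by
    have hmeas : Measurable (fun x => if sig lam S x ≤ T then g (sig lam S x) else 0) :=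
      Measurable.ite (hσ measurableSet_Iic) (hg.comp hσ) measurable_const
    rw [expM, lintegral_withDensity_eq_lintegral_mul _ (by fun_prop) hmeas,
      ← map_Lam (S := S) hc hm hb hΛ, lintegral_map (Measurable.mul (by fun_prop) hmeas) hΛ]
    have hmeas2 : Measurable (fun u => ((fun x => ENNReal.ofReal (Real.exp (-x))) *
        fun x => if sig lam S x ≤ T then g (sig lam S x) else 0) (∫ s in Ioc S u, lam s)) :=
      Measurable.comp (Measurable.mul (by fun_prop) hmeas) hΛ
    rw [lintegral_withDensity_eq_lintegral_mul _ (by fun_prop) hmeas2]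
    refine setLIntegral_congr_fun measurableSet_Ioi fun u hu => ?_
    simp only [Pi.mul_apply]
    rw [sig_eq hc hm hb (le_of_lt hu) rfl]
  have hR : ∫⁻ x, (∫⁻ u in Ioc 0 T, g u * ENNReal.ofReal
      (if S < u ∧ u ≤ sig lam S x then lam u else 0)) ∂expM =
      ∫⁻ u in Ioc 0 T, if S < u then g u * ENNReal.ofReal (lam u) * 
        ENNReal.ofReal (Real.exp (- ∫ s in Ioc S u, lam s)) else 0 := by
    rw [lintegral_lintegral_swap]
    · refine lintegral_congr fun u => ?_
      split_ifs with hu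
      · have : ∀ x, g u * ENNReal.ofReal (if S < u ∧ u ≤ sig lam S x then lam u else 0) =
            g u * ENNReal.ofReal (lam u) * (Ici (∫ s in Ioc S u, lam s)).indicator 1 x := by
          intro x
          have : u ≤ sig lam S x ↔ (∫ s in Ioc S u, lam s) ≤ x := by
            rcases le_total x 0 with hx | hx
            · rw [sig_neg hc hb hx]
              have := Lam_strict (S := S) hc hm hb le_rfl hu
              simp only [Ioc_self, Measure.restrict_empty, integral_zero_measure] at this
              constructor <;> intro h <;> linarith
            · obtain ⟨h1, h2⟩ := sig_spec (S := S) hc hm hb hx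
              conv_rhs => rw [← h2]
              rw [Lam_le_iff hc hm hb hu.le h1]
          by_cases h : (∫ s in Ioc S u, lam s) ≤ x
          · simp [hu, this, h]
          · simp [this, h]
        simp_rw [this]
        rw [lintegral_const_mul _ (measurable_one.indicator measurableSet_Ici),
          lintegral_indicator_one measurableSet_Ici, ← expM_Ioi (Lam_nonneg hc hb u)]
        congr 1
        refine (measure_congr ?_).symm
        exact (withDensity_absolutelyContinuous _ _).ae_le
          (ae_restrict_of_ae (s := Ioi (0:ℝ)) Ioi_ae_eq_Ici)
      · simp [hu]
    · refine Measurable.aemeasurable ?_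
      refine (hg.comp measurable_snd).mul (Measurable.ennreal_ofReal ?_)
      refine Measurable.ite ?_ (hm.comp measurable_snd) measurable_const
      exact (measurableSet_lt measurable_const measurable_snd).inter
        (measurableSet_le measurable_snd (hσ.comp measurable_fst))
  rw [hL, hR, ← lintegral_indicator measurableSet_Ioi, ← lintegral_indicator measurableSet_Ioc]
  refine lintegral_congr fun u => ?_
  by_cases h1 : S < u
  · have h0 : 0 < u := hS.trans_lt h1
    by_cases h2 : u ≤ T
    · simp [indicator, h1, h2, h0]; ring
    · simp [indicator, h1, h2]
  · simp [indicator, h1]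

end det

section core
variable {Ω' : Type*} {m' : MeasurableSpace Ω'} {c C : ℝ} {S : Ω' → ℝ} {lam : Ω' × ℝ → ℝ}

lemma sig_meas_joint (hc : 0 < c) (hS : Measurable S) (hm : Measurable lam)
    (hb : ∀ p, c ≤ lam p ∧ lam p ≤ C) :
    Measurable (fun q : Ω' × ℝ => sig (fun s => lam (q.1, s)) (S q.1) q.2) := by
  refine measurable_of_Iic fun t => ?_
  have : (fun q : Ω' × ℝ => sig (fun s => lam (q.1, s)) (S q.1) q.2) ⁻¹' Iic t =
      {q | S q.1 ≤ t ∧ q.2 ≤ ∫ s in Ioc (S q.1) t, lam (q.1, s)} := by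
    ext q
    exact sig_le_iff hc (hm.comp measurable_prodMk_left) (fun s => hb _)
  rw [this]
  refine (measurableSet_le (hS.comp (measurable_fst : Measurable fun p : Ω' × ℝ => p.1)) measurable_const).inter
    (measurableSet_le (measurable_snd : Measurable fun p : Ω' × ℝ => p.2) ?_)
  have h2 : Measurable (fun w => ∫ s in Ioc (S w) t, lam (w, s)) := by
    have : (fun w => ∫ s in Ioc (S w) t, lam (w, s)) =
        fun w => ∫ s, (fun p : Ω' × ℝ => if S p.1 < p.2 ∧ p.2 ≤ t then lam p else 0) (w, s) := by
      ext w
      rw [← integral_indicator measurableSet_Ioc]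
      refine integral_congr_ae (ae_of_all _ fun s => ?_)
      simp [indicator]
    rw [this]
    have hf : Measurable (fun p : Ω' × ℝ => if S p.1 < p.2 ∧ p.2 ≤ t then lam p else 0) := ?_
    · exact hf.stronglyMeasurable.integral_prod_right'.measurable
    refine Measurable.ite ?_ hm measurable_const
    exact (measurableSet_lt (hS.comp measurable_fst) measurable_snd).inter
      (measurableSet_le (measurable_snd : Measurable fun p : Ω' × ℝ => p.2) measurable_const)
  exact h2.comp measurable_fst

lemma core_measL (hc : 0 < c) (hS : Measurable S) (hm : Measurable lam)
    (hb : ∀ p, c ≤ lam p ∧ lam p ≤ C) {W : (Ω' × ℝ) × ℝ → ℝ≥0∞} (hW : Measurable W) (T : ℝ) :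
    Measurable (fun q : Ω' × ℝ × ℝ => if sig (fun s => lam (q.1, s)) (S q.1) q.2.1 ≤ T then
      W ((q.1, sig (fun s => lam (q.1, s)) (S q.1) q.2.1), q.2.2) else 0) := by
  have hσ : Measurable (fun q : Ω' × ℝ × ℝ => sig (fun s => lam (q.1, s)) (S q.1) q.2.1) :=
    (sig_meas_joint hc hS hm hb).comp
      (measurable_fst.prodMk (measurable_fst.comp measurable_snd))
  exact Measurable.ite (hσ measurableSet_Iic) (hW.comp (by fun_prop)) measurable_const

lemma core_measR0 (hc : 0 < c) (hS : Measurable S) (hm : Measurable lam)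
    (hb : ∀ p, c ≤ lam p ∧ lam p ≤ C) {W : (Ω' × ℝ) × ℝ → ℝ≥0∞} (hW : Measurable W)
    (ν : Measure ℝ) [SFinite ν] :
    Measurable (fun r : (Ω' × ℝ) × ℝ => (∫⁻ ξ, W ((r.1.1, r.2), ξ) ∂ν) * ENNReal.ofReal
      (if S r.1.1 < r.2 ∧ r.2 ≤ sig (fun s => lam (r.1.1, s)) (S r.1.1) r.1.2 then
        lam (r.1.1, r.2) else 0)) := by
  have hσ : Measurable (fun q : (Ω' × ℝ) × ℝ => sig (fun s => lam (q.1.1, s)) (S q.1.1) q.1.2) :=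
    (sig_meas_joint hc hS hm hb).comp measurable_fst
  have hg : Measurable (fun p : Ω' × ℝ => ∫⁻ ξ, W (p, ξ) ∂ν) := hW.lintegral_prod_right'
  refine (hg.comp (by fun_prop : Measurable fun r : (Ω' × ℝ) × ℝ => (r.1.1, r.2))).mul
    (Measurable.ennreal_ofReal ?_)
  refine Measurable.ite ?_ (hm.comp (by fun_prop)) measurable_const
  exact (measurableSet_lt (hS.comp (by fun_prop)) (by fun_prop)).inter
    (measurableSet_le measurable_snd hσ)

lemma core_measR (hc : 0 < c) (hS : Measurable S) (hm : Measurable lam)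
    (hb : ∀ p, c ≤ lam p ∧ lam p ≤ C) {W : (Ω' × ℝ) × ℝ → ℝ≥0∞} (hW : Measurable W)
    (ν : Measure ℝ) [SFinite ν] (T : ℝ) :
    Measurable (fun q : Ω' × ℝ => ∫⁻ u in Ioc 0 T, (∫⁻ ξ, W ((q.1, u), ξ) ∂ν) * ENNReal.ofReal
      (if S q.1 < u ∧ u ≤ sig (fun s => lam (q.1, s)) (S q.1) q.2 then lam (q.1, u) else 0)) :=
  (core_measR0 hc hS hm hb hW ν).lintegral_prod_right'

lemma core {Ω : Type*} {m0 : MeasurableSpace Ω} (μ : Measure Ω) [IsProbabilityMeasure μ]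
    {π : Ω → Ω'} (hπ : Measurable π) {E J : Ω → ℝ} (hE : Measurable E) (hJ : Measurable J)
    (hI : IndepFun π (fun ω => (E ω, J ω)) μ) (hEJ : IndepFun E J μ)
    (hEl : Measure.map E μ = expM)
    (hc : 0 < c) (hS : Measurable S) (hS0 : ∀ w, 0 ≤ S w) (hm : Measurable lam)
    (hb : ∀ p, c ≤ lam p ∧ lam p ≤ C) {W : (Ω' × ℝ) × ℝ → ℝ≥0∞} (hW : Measurable W) (T : ℝ) :
    ∫⁻ ω, (if sig (fun s => lam (π ω, s)) (S (π ω)) (E ω) ≤ T then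
      W ((π ω, sig (fun s => lam (π ω, s)) (S (π ω)) (E ω)), J ω) else 0) ∂μ =
    ∫⁻ ω, (∫⁻ u in Ioc 0 T, (∫⁻ ξ, W ((π ω, u), ξ) ∂(Measure.map J μ)) * ENNReal.ofReal
      (if S (π ω) < u ∧ u ≤ sig (fun s => lam (π ω, s)) (S (π ω)) (E ω) then
        lam (π ω, u) else 0)) ∂μ := by
  have hpi : IsProbabilityMeasure (Measure.map π μ) := Measure.isProbabilityMeasure_map hπ.aemeasurable
  have hjp : IsProbabilityMeasure (Measure.map J μ) := Measure.isProbabilityMeasure_map hJ.aemeasurable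
  set ν := Measure.map J μ with hν
  have hlaw3 : Measure.map (fun ω => (π ω, (E ω, J ω))) μ = (Measure.map π μ).prod (expM.prod ν) := by
    rw [(indepFun_iff_map_prod_eq_prod_map_map hπ.aemeasurable (hE.prodMk hJ).aemeasurable).1 hI,
      (indepFun_iff_map_prod_eq_prod_map_map hE.aemeasurable hJ.aemeasurable).1 hEJ, hEl]
  have hI2 : IndepFun π E μ := hI.comp (φ := id) (ψ := Prod.fst) measurable_id measurable_fst
  have hlaw2 : Measure.map (fun ω => (π ω, E ω)) μ = (Measure.map π μ).prod expM := by
    rw [(indepFun_iff_map_prod_eq_prod_map_map hπ.aemeasurable hE.aemeasurable).1 hI2, hEl]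
  have hL := core_measL hc hS hm hb hW T
  have hR := core_measR hc hS hm hb hW ν T
  have e1 := lintegral_map (μ := μ) hL (hπ.prodMk (hE.prodMk hJ))
  have e2 := lintegral_map (μ := μ) hR (hπ.prodMk hE)
  refine e1.symm.trans (Eq.trans ?_ e2)
  rw [hlaw3, hlaw2, lintegral_prod _ hL.aemeasurable, lintegral_prod _ hR.aemeasurable]
  refine lintegral_congr fun w => ?_
  have hLw : Measurable (fun z : ℝ × ℝ => if sig (fun s => lam (w, s)) (S w) z.1 ≤ T then
      W ((w, sig (fun s => lam (w, s)) (S w) z.1), z.2) else 0) := hL.comp measurable_prodMk_left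
  rw [lintegral_prod _ hLw.aemeasurable]
  have hg : Measurable (fun u : ℝ => ∫⁻ ξ, W ((w, u), ξ) ∂ν) :=
    (hW.lintegral_prod_right' (ν := ν)).comp measurable_prodMk_left
  refine Eq.trans ?_ (det_main (lam := fun s => lam (w, s)) hc (hm.comp measurable_prodMk_left)
    (fun s => hb _) (hS0 w) hg T)
  refine lintegral_congr fun x => ?_
  split_ifs <;> simp

end core
section trace

lemma trace_pred {H : MeasurableSpace Ω} {G0 : ℝ → MeasurableSpace Ω} {Ω0 : Set Ω} {θ : Ω → ℝ}
    (hG : ∀ r : ℝ, 0 < r → (G0 r).comap (Subtype.val : {ω // ω ∈ Ω0 ∧ r < θ ω} → Ω) ≤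
      H.comap (Subtype.val : {ω // ω ∈ Ω0 ∧ r < θ ω} → Ω)) :
    (predSigma (rcReg G0)).comap
      (Subtype.val : {p : Ω × ℝ | p.1 ∈ Ω0 ∧ 0 < p.2 ∧ p.2 ≤ θ p.1} → Ω × ℝ) ≤
    (MeasurableSpace.prod H inferInstance).comap
      (Subtype.val : {p : Ω × ℝ | p.1 ∈ Ω0 ∧ 0 < p.2 ∧ p.2 ≤ θ p.1} → Ω × ℝ) := by
  rw [predSigma, MeasurableSpace.comap_generateFrom]
  refine MeasurableSpace.generateFrom_le ?_
  rintro _ ⟨P, (⟨A, hA, rfl⟩ | ⟨A, s, t, hA, hs, hst, rfl⟩), rfl⟩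
  · refine ⟨∅, @MeasurableSet.empty _ _, ?_⟩
    ext ⟨p, hp⟩
    simp only [preimage_empty, mem_empty_iff_false, mem_preimage, mem_prod, mem_singleton_iff,
      false_iff, not_and]
    exact fun _ => hp.2.1.ne'
  · have h1 : ∀ n : ℕ, ∃ A' : Set Ω, MeasurableSet[H] A' ∧
        ∀ ω ∈ Ω0, s + 1 / ((n : ℝ) + 1) < θ ω → (ω ∈ A' ↔ ω ∈ A) := by
      intro n
      have hpos : 0 < 1 / ((n : ℝ) + 1) := by positivity
      have hA' : MeasurableSet[G0 (s + 1 / ((n : ℝ) + 1))] A := by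
        have : rcReg G0 s ≤ G0 (s + 1 / ((n : ℝ) + 1)) :=
          iInf₂_le_of_le (s + 1 / ((n : ℝ) + 1)) (by simpa using hpos) le_rfl
        exact this _ hA
      obtain ⟨A', hA1, hA2⟩ := hG (s + 1 / ((n : ℝ) + 1)) (by linarith) _ ⟨A, hA', rfl⟩
      refine ⟨A', hA1, fun ω h0 hω => ?_⟩
      exact Set.ext_iff.1 hA2 ⟨ω, h0, hω⟩
    choose A' hA1 hA2 using h1
    refine ⟨(liminf A' atTop) ×ˢ Ioc s t, ?_, ?_⟩
    · exact @MeasurableSet.prod _ _ H _ _ _ (@MeasurableSet.measurableSet_liminf _ H _ hA1)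
        measurableSet_Ioc
    · ext ⟨⟨ω, u⟩, h0, hu0, hu⟩
      simp only [mem_preimage, mem_prod, and_congr_left_iff]
      rintro ⟨hsu, hut⟩
      simp only at hu
      have hlt : s < θ ω := hsu.trans_le hu
      have hev : ∀ᶠ n : ℕ in atTop, s + 1 / ((n : ℝ) + 1) < θ ω := by
        have := (tendsto_one_div_add_atTop_nhds_zero_nat (𝕜 := ℝ)).eventually
          (gt_mem_nhds (sub_pos.2 hlt))
        filter_upwards [this] with n hn
        linarith
      rw [mem_liminf_iff_eventually_mem]
      have h3 : ∀ᶠ n : ℕ in atTop, (ω ∈ A' n ↔ ω ∈ A) := by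
        filter_upwards [hev] with n hn using hA2 n ω h0 hn
      rw [eventually_congr h3]
      exact eventually_const

lemma ext_fun {X Z : Type*} [Nonempty Z] [MeasurableSpace Z] [StandardBorelSpace Z]
    {D : Set X} {P Q : MeasurableSpace X}
    (h : P.comap (Subtype.val : D → X) ≤ Q.comap (Subtype.val : D → X))
    {f : X → Z} (hf : Measurable[P] f) :
    ∃ f' : X → Z, Measurable[Q] f' ∧ ∀ p ∈ D, f' p = f p := by
  have h1 : Measurable[Q.comap (Subtype.val : D → X)] (fun d : D => f d) := by
    refine Measurable.mono ?_ h le_rfl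
    exact hf.comp (comap_measurable _)
  obtain ⟨f', hf', h2⟩ := h1.exists_eq_measurable_comp
  exact ⟨f', hf', fun p hp => (congrFun h2 ⟨p, hp⟩).symm⟩

lemma ext_fun2 {X Z : Type*} [Nonempty Z] [MeasurableSpace Z] [StandardBorelSpace Z]
    {D : Set X} {P Q : MeasurableSpace X}
    (h : P.comap (Subtype.val : D → X) ≤ Q.comap (Subtype.val : D → X))
    {f : X × ℝ → Z} (hf : Measurable[MeasurableSpace.prod P inferInstance] f) :
    ∃ f' : X × ℝ → Z, Measurable[MeasurableSpace.prod Q inferInstance] f' ∧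
      ∀ p ∈ D, ∀ ξ, f' (p, ξ) = f (p, ξ) := by
  have h' : (MeasurableSpace.prod P (inferInstance : MeasurableSpace ℝ)).comap
      (Subtype.val : {q : X × ℝ | q.1 ∈ D} → X × ℝ) ≤
      (MeasurableSpace.prod Q (inferInstance : MeasurableSpace ℝ)).comap
      (Subtype.val : {q : X × ℝ | q.1 ∈ D} → X × ℝ) := by
    simp only [MeasurableSpace.prod, MeasurableSpace.comap_sup, MeasurableSpace.comap_comp]
    refine sup_le_sup_right ?_ _
    have e : (Prod.fst ∘ (Subtype.val : {q : X × ℝ | q.1 ∈ D} → X × ℝ)) =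
      (Subtype.val : D → X) ∘ (fun q : {q : X × ℝ | q.1 ∈ D} => (⟨q.1.1, q.2⟩ : D)) := rfl
    rw [e, ← MeasurableSpace.comap_comp, ← MeasurableSpace.comap_comp]
    exact MeasurableSpace.comap_mono h
  obtain ⟨f', h1, h2⟩ := ext_fun h' hf
  exact ⟨f', h1, fun p hp ξ => h2 (p, ξ) hp⟩

lemma section_meas (G : ℝ → MeasurableSpace Ω) (ω : Ω) :
    @Measurable _ _ _ (predSigma G) (fun s : ℝ => (ω, s)) := by
  refine measurable_generateFrom ?_
  rintro _ (⟨A, hA, rfl⟩ | ⟨A, s, t, hA, hs, hst, rfl⟩)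
  · by_cases h : ω ∈ A
    · rw [mk_preimage_prod_right h]; exact measurableSet_singleton _
    · rw [mk_preimage_prod_right_eq_empty h]; exact MeasurableSet.empty
  · by_cases h : ω ∈ A
    · rw [mk_preimage_prod_right h]; exact measurableSet_Ioc
    · rw [mk_preimage_prod_right_eq_empty h]; exact MeasurableSet.empty

lemma ite_meas {m : MeasurableSpace Ω} {S J : Ω → ℝ} (hS : Measurable S) (hJ : Measurable J)
    (s : ℝ) : Measurable (fun ω => if S ω ≤ s then J ω else 0) :=
  Measurable.ite (hS measurableSet_Iic) hJ measurable_const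

lemma pair_meas {β : Type*} [MeasurableSpace β] {m0 H : MeasurableSpace Ω} (h : H ≤ m0)
    {f : Ω → β} (hf : Measurable[m0] f) :
    @Measurable _ _ m0 (MeasurableSpace.prod H inferInstance) (fun ω => (ω, f ω)) := by
  refine Measurable.of_comap_le ?_
  simp only [MeasurableSpace.prod, MeasurableSpace.comap_sup, MeasurableSpace.comap_comp]
  refine sup_le ?_ hf.comap_le
  exact le_trans (le_of_eq (@MeasurableSpace.comap_id _ H)) h

end trace

/-- In the Cox construction with infinitely many jumps, if each `λ^k` is
`Gi`-predictable, then the compensator of the jump measure of `X` is `λ_t ν(dξ) dt`, where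
`ν` is the law of `J_1` and `λ_t = Σ_k 1_{τ_{k-1} < t ≤ τ_k} λ^k_t`: for every `T > 0` and
every nonnegative `𝓟 ⊗ B(ℝ)`-measurable `W`,
`E[Σ_{k : τ_k ≤ T} W(τ_k, J_k)] = E[∫_0^T ∫_ℝ W(u,ξ) λ_u ν(dξ) du]`. -/
theorem cox_compensator {m0 : MeasurableSpace Ω} (μ : Measure Ω) [IsProbabilityMeasure μ]
    (F : ℝ → MeasurableSpace Ω) (hUC : UsualConditions μ F)
    (c C : ℝ) (hc : 0 < c) (hcC : c < C)
    (lam : ℕ → ℝ → Ω → ℝ)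
    (hlam_bdd : ∀ k : ℕ, ∀ᵐ p ∂(μ.prod (volume.restrict (Set.Ici (0:ℝ)))),
      c ≤ lam k p.2 p.1 ∧ lam k p.2 p.1 ≤ C)
    (E J : ℕ → Ω → ℝ)
    (hE : ∀ k, IsExpOne μ (E k))
    (hJmeas : ∀ k, Measurable (J k)) (hJint : ∀ k, Integrable (J k) μ)
    (hJid : ∀ k, Measure.map (J k) μ = Measure.map (J 0) μ)
    (hJnonvanish : ∀ k, μ {ω | J k ω ≠ 0} = 1)
    (hindep : iIndep (fun i : ℕ ⊕ ℕ ⊕ Unit =>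
      Sum.elim (fun k => MeasurableSpace.comap (E k) inferInstance)
        (Sum.elim (fun k => MeasurableSpace.comap (J k) inferInstance)
          (fun _ => Finfty F)) i) μ)
    (τ : ℕ → Ω → ℝ)
    (hτ0 : ∀ ω, τ 0 ω = 0)
    (hτ : ∀ (k : ℕ) (ω : Ω), τ (k + 1) ω =
      sInf {t : ℝ | τ k ω < t ∧ E k ω ≤ ∫ s in Set.Ioc (τ k ω) t, lam k s ω})
    (Gi : ℝ → MeasurableSpace Ω)
    (hGi : Gi = rcReg (fun t => F t ⊔
      ⨆ i : ℕ, natFilt (fun s ω => if τ (i + 1) ω ≤ s then J i ω else 0) t))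
    (hpred : ∀ k : ℕ, Measurable[predSigma Gi] (fun p : Ω × ℝ => lam k p.2 p.1))
    (W : (Ω × ℝ) × ℝ → ℝ≥0∞)
    (hW : Measurable[MeasurableSpace.prod (predSigma Gi) inferInstance] W) :
    ∀ T : ℝ, 0 < T →
      ∫⁻ ω, ∑' k : ℕ, (if τ (k + 1) ω ≤ T then W ((ω, τ (k + 1) ω), J k ω) else 0) ∂μ =
      ∫⁻ ω, (∫⁻ u in Set.Ioc 0 T,
          (∫⁻ ξ, W ((ω, u), ξ) ∂(Measure.map (J 0) μ)) *
            ENNReal.ofReal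
              (∑' k : ℕ, if τ k ω < u ∧ u ≤ τ (k + 1) ω then lam k u ω else 0)) ∂μ := by
  classical
  obtain ⟨⟨hFmono, hFle⟩, -, -⟩ := hUC
  -- the family of sigma-algebras
  set m : ℕ ⊕ ℕ ⊕ Unit → MeasurableSpace Ω := fun i =>
      Sum.elim (fun k => MeasurableSpace.comap (E k) inferInstance)
        (Sum.elim (fun k => MeasurableSpace.comap (J k) inferInstance)
          (fun _ => Finfty F)) i with hm
  have hmle : ∀ i, m i ≤ m0 := by
    rintro (k | k | _)
    · exact (hE k).1.comap_le
    · exact (hJmeas k).comap_le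
    · exact iSup₂_le fun t _ => hFle t
  let I : ℕ → Set (ℕ ⊕ ℕ ⊕ Unit) := fun k =>
    {i | Sum.elim (fun j => j < k) (Sum.elim (fun j => j < k) (fun _ => True)) i}
  let H : ℕ → MeasurableSpace Ω := fun k => ⨆ i ∈ I k, m i
  have hHle : ∀ k, H k ≤ m0 := fun k => iSup₂_le fun i _ => hmle i
  have hImono : ∀ j k, j ≤ k → I j ⊆ I k := by
    rintro j k hjk (i | i | i) hi
    · exact lt_of_lt_of_le (show i < j from hi) hjk
    · exact lt_of_lt_of_le (show i < j from hi) hjk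
    · trivial
  have hHmono : ∀ j k, j ≤ k → H j ≤ H k := fun j k hjk =>
    biSup_mono (hImono j k hjk)
  have hFH : ∀ k r, 0 ≤ r → F r ≤ H k := by
    intro k r hr
    have h1 : F r ≤ Finfty F := le_iSup₂_of_le (f := fun t (_ : t ∈ Ici (0:ℝ)) => F t) r hr le_rfl
    exact h1.trans (le_iSup₂_of_le (f := fun i (_ : i ∈ I k) => m i) (Sum.inr (Sum.inr ()))
      trivial le_rfl)
  have hEH : ∀ i k, i < k → Measurable[H k] (E i) := by
    intro i k hik
    rw [measurable_iff_comap_le]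
    exact le_iSup₂_of_le (f := fun i (_ : i ∈ I k) => m i) (Sum.inl i) hik le_rfl
  have hJH : ∀ i k, i < k → Measurable[H k] (J i) := by
    intro i k hik
    rw [measurable_iff_comap_le]
    exact le_iSup₂_of_le (f := fun i (_ : i ∈ I k) => m i) (Sum.inr (Sum.inl i)) hik le_rfl
  -- independence
  have hEJ : ∀ k, IndepFun (E k) (J k) μ := by
    intro k
    rw [IndepFun_iff_Indep]
    exact hindep.indep (i := Sum.inl k) (j := Sum.inr (Sum.inl k)) (by simp)
  have hIk : ∀ k, @IndepFun _ _ _ m0 (H k) _ (id : Ω → Ω) (fun ω => (E k ω, J k ω)) μ := by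
    intro k
    refine (@IndepFun_iff_Indep _ _ _ m0 (H k) _ _ _ μ).2 ?_
    have hdisj : Disjoint (I k) {Sum.inl k, Sum.inr (Sum.inl k)} := by
      rw [Set.disjoint_right]
      rintro i (rfl | rfl)
      · exact fun h => lt_irrefl k h
      · exact fun h => lt_irrefl k h
    have h1 := indep_iSup_of_disjoint hmle hindep hdisj
    have h2 : MeasurableSpace.comap (fun ω => (E k ω, J k ω)) inferInstance ≤
        ⨆ i ∈ ({Sum.inl k, Sum.inr (Sum.inl k)} : Set (ℕ ⊕ ℕ ⊕ Unit)), m i := by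
      rw [← measurable_iff_comap_le]
      refine Measurable.prodMk ?_ ?_
      · rw [measurable_iff_comap_le]
        exact le_iSup₂_of_le (f := fun i (_ : i ∈ ({Sum.inl k, Sum.inr (Sum.inl k)} :
          Set (ℕ ⊕ ℕ ⊕ Unit))) => m i) (Sum.inl k) (by simp) le_rfl
      · rw [measurable_iff_comap_le]
        exact le_iSup₂_of_le (f := fun i (_ : i ∈ ({Sum.inl k, Sum.inr (Sum.inl k)} :
          Set (ℕ ⊕ ℕ ⊕ Unit))) => m i) (Sum.inr (Sum.inl k)) (by simp) le_rfl
    rw [MeasurableSpace.comap_id]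
    exact indep_of_indep_of_le_right h1 h2
  have hEl : ∀ k, Measure.map (E k) μ = expM := fun k => map_eq_expM μ (hE k).1 (hE k).2
  -- the good set
  let Ω0 : Set Ω := {ω | ∀ k, 0 < E k ω ∧
    ∀ᵐ s ∂(volume.restrict (Set.Ici (0:ℝ))), c ≤ lam k s ω ∧ lam k s ω ≤ C}
  have hΩ0 : ∀ᵐ ω ∂μ, ω ∈ Ω0 := by
    refine ae_all_iff.2 fun k => ?_
    have h1 : ∀ᵐ ω ∂μ, 0 < E k ω := by
      have h := (hE k).2 0 le_rfl
      simp only [neg_zero, Real.exp_zero, ENNReal.ofReal_one] at h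
      exact (prob_compl_eq_zero_iff (measurableSet_lt measurable_const (hE k).1)).2 h
    filter_upwards [h1, Measure.ae_ae_of_ae_prod (hlam_bdd k)] with ω a b using ⟨a, b⟩
  let clamp : ℝ → ℝ := fun x => max c (min C x)
  have hclamp : ∀ x, c ≤ clamp x ∧ clamp x ≤ C := fun x =>
    ⟨le_max_left _ _, max_le hcC.le (min_le_left _ _)⟩
  have hclamp_eq : ∀ x, c ≤ x ∧ x ≤ C → clamp x = x := by
    rintro x ⟨h1, h2⟩
    simp [clamp, h1, h2]
  have hclamp_meas : Measurable clamp := by fun_prop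
  have hlamc_meas : ∀ k ω, Measurable (fun s => clamp (lam k s ω)) := fun k ω =>
    hclamp_meas.comp ((hpred k).comp (section_meas Gi ω))
  have hlamc_ae : ∀ k, ∀ ω ∈ Ω0, ∀ᵐ s ∂(volume.restrict (Set.Ici (0:ℝ))),
      clamp (lam k s ω) = lam k s ω := by
    intro k ω hω
    filter_upwards [(hω k).2] with s hs using hclamp_eq _ hs
  have hτsig : ∀ k, ∀ ω ∈ Ω0, 0 ≤ τ k ω →
      τ (k + 1) ω = sig (fun s => clamp (lam k s ω)) (τ k ω) (E k ω) := by
    intro k ω hω h0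
    rw [hτ, sig]
    congr 1
    ext t
    have : (∫ s in Ioc (τ k ω) t, lam k s ω) = ∫ s in Ioc (τ k ω) t, clamp (lam k s ω) := by
      refine integral_congr_ae ?_
      have hsub : Ioc (τ k ω) t ⊆ Ici 0 := fun s hs => h0.trans hs.1.le
      filter_upwards [ae_restrict_of_ae_restrict_of_subset hsub (hlamc_ae k ω hω)] with s hs
      exact hs.symm
    simp only [mem_ofPred_eq, this]
  have hτnn : ∀ k, ∀ ω ∈ Ω0, 0 ≤ τ k ω := by
    intro k ω hω
    induction k with
    | zero => rw [hτ0]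
    | succ k ih =>
      rw [hτsig k ω hω ih]
      exact ih.trans (sig_spec hc (hlamc_meas k ω) (fun s => hclamp _) (hω k).1.le).1
  have hτlt : ∀ k, ∀ ω ∈ Ω0, τ k ω < τ (k + 1) ω ∧
      (∫ s in Ioc (τ k ω) (τ (k + 1) ω), clamp (lam k s ω)) = E k ω := by
    intro k ω hω
    obtain ⟨h1, h2⟩ := sig_spec (S := τ k ω) hc (hlamc_meas k ω) (fun s => hclamp _) (hω k).1.le
    rw [← hτsig k ω hω (hτnn k ω hω)] at h1 h2
    refine ⟨lt_of_le_of_ne h1 fun h => ?_, h2⟩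
    rw [← h] at h2
    have := (hω k).1
    simp at h2
    linarith
  have hτmono : ∀ ω ∈ Ω0, StrictMono (fun k => τ k ω) := fun ω hω =>
    strictMono_nat_of_lt_succ fun k => (hτlt k ω hω).1
  -- induction property
  let P : ℕ → Prop := fun k => ∃ S : Ω → ℝ, Measurable[H k] S ∧ ∀ ω ∈ Ω0, τ k ω = S ω
  have htrace : ∀ k, (∀ j ≤ k, P j) → (predSigma Gi).comap
      (Subtype.val : {p : Ω × ℝ | p.1 ∈ Ω0 ∧ 0 < p.2 ∧ p.2 ≤ τ (k + 1) p.1} → Ω × ℝ) ≤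
      (MeasurableSpace.prod (H k) inferInstance).comap
      (Subtype.val : {p : Ω × ℝ | p.1 ∈ Ω0 ∧ 0 < p.2 ∧ p.2 ≤ τ (k + 1) p.1} → Ω × ℝ) := by
    intro k hP
    rw [hGi]
    refine trace_pred (θ := τ (k + 1)) fun r hr => ?_
    simp only [MeasurableSpace.comap_sup, MeasurableSpace.comap_iSup, natFilt,
      MeasurableSpace.comap_comp]
    refine sup_le (MeasurableSpace.comap_mono (hFH k r hr.le)) ?_
    refine iSup_le fun i => iSup₂_le fun s hs => ?_
    rw [← measurable_iff_comap_le]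
    rcases lt_or_ge i k with hik | hik
    · obtain ⟨S, hS, hSe⟩ := hP (i + 1) hik
      have hf : Measurable[H k] (fun ω => if S ω ≤ s then J i ω else 0) := by
        exact ite_meas (hS.mono (hHmono _ _ hik) le_rfl) (hJH i k hik) s
      have e : ((fun ω => if τ (i + 1) ω ≤ s then J i ω else 0) ∘
          (Subtype.val : {ω // ω ∈ Ω0 ∧ r < τ (k + 1) ω} → Ω)) =
          (fun ω => if S ω ≤ s then J i ω else 0) ∘ Subtype.val := by
        ext ⟨ω, hω⟩
        simp only [Function.comp, hSe ω hω.1]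
      rw [e]
      exact hf.comp (comap_measurable _)
    · have e : ((fun ω => if τ (i + 1) ω ≤ s then J i ω else 0) ∘
          (Subtype.val : {ω // ω ∈ Ω0 ∧ r < τ (k + 1) ω} → Ω)) = fun _ => 0 := by
        ext ⟨ω, hω⟩
        have h1 : τ (k + 1) ω ≤ τ (i + 1) ω := (hτmono ω hω.1).monotone (by omega)
        have h2 : ¬ τ (i + 1) ω ≤ s := by
          have := hs.2; have := hω.2; linarith
        simp [Function.comp, h2]
      rw [e]
      exact measurable_const
  have hpack : ∀ k, (∀ j ≤ k, P j) → ∃ (S : Ω → ℝ) (lam' : Ω × ℝ → ℝ) (W' : (Ω × ℝ) × ℝ → ℝ≥0∞),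
      Measurable[H k] S ∧ (∀ ω, 0 ≤ S ω) ∧
      Measurable[MeasurableSpace.prod (H k) inferInstance] lam' ∧
      (∀ p, c ≤ lam' p ∧ lam' p ≤ C) ∧
      Measurable[MeasurableSpace.prod (MeasurableSpace.prod (H k) inferInstance) inferInstance] W' ∧
      (∀ ω ∈ Ω0, τ k ω = S ω) ∧
      (∀ ω ∈ Ω0, τ (k + 1) ω = sig (fun s => lam' (ω, s)) (S ω) (E k ω)) ∧
      (∀ ω ∈ Ω0, ∀ u, 0 < u → u ≤ τ (k + 1) ω →
        lam' (ω, u) = clamp (lam k u ω) ∧ ∀ ξ, W' ((ω, u), ξ) = W ((ω, u), ξ)) := by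
    intro k hP
    obtain ⟨S, hS, hSe⟩ := hP k le_rfl
    obtain ⟨l, hl, hle⟩ := ext_fun (htrace k hP) (hpred k)
    obtain ⟨W', hW', hWe⟩ := ext_fun2 (htrace k hP) hW
    have hSe' : ∀ ω ∈ Ω0, τ k ω = max (S ω) 0 := by
      intro ω hω
      rw [← hSe ω hω, max_eq_left (hτnn k ω hω)]
    have hlm : Measurable[MeasurableSpace.prod (H k) inferInstance] (fun p => clamp (l p)) :=
      hclamp_meas.comp hl
    have hag : ∀ ω ∈ Ω0, ∀ u, 0 < u → u ≤ τ (k + 1) ω →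
        clamp (l (ω, u)) = clamp (lam k u ω) ∧ ∀ ξ, W' ((ω, u), ξ) = W ((ω, u), ξ) := by
      intro ω hω u h0 hu
      exact ⟨congrArg clamp (hle (ω, u) ⟨hω, h0, hu⟩), fun ξ => hWe (ω, u) ⟨hω, h0, hu⟩ ξ⟩
    refine ⟨fun ω => max (S ω) 0, fun p => clamp (l p), W', ?_, fun ω => le_max_right _ _, hlm,
      fun p => hclamp _, hW', hSe', ?_, hag⟩
    · exact (measurable_id.max measurable_const : Measurable fun x : ℝ => max x 0).comp hS
    · intro ω hω
      show τ (k + 1) ω = sig (fun s => clamp (l (ω, s))) (max (S ω) 0) (E k ω)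
      rw [← hSe' ω hω]
      obtain ⟨h1, h2⟩ := hτlt k ω hω
      refine (sig_eq hc ?_ (fun s => hclamp _) h1.le ?_).symm
      · exact hlm.comp (@measurable_prodMk_left _ _ (H k) _ ω)
      · rw [← h2]
        refine setIntegral_congr_fun measurableSet_Ioc fun u hu => ?_
        exact (hag ω hω u ((hτnn k ω hω).trans_lt hu.1) hu.2).1
  have hPall : ∀ k, P k := by
    intro k
    induction k using Nat.strong_induction_on with
    | _ k ih =>
      rcases k with _ | k
      · exact ⟨fun _ => 0, @measurable_const _ _ _ (H 0) _, fun ω _ => hτ0 ω⟩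
      · obtain ⟨S, lam', W', hS, -, hl, hlb, -, -, hτe, -⟩ := hpack k (fun j hj => ih j (by omega))
        refine ⟨_, ?_, hτe⟩
        have h1 := @sig_meas_joint _ (H k) _ _ _ _ hc hS hl hlb
        have h2 : @Measurable _ _ (H (k + 1)) (MeasurableSpace.prod (H k) inferInstance)
            (fun ω => (ω, E k ω)) :=
          pair_meas (hHmono k (k + 1) (by omega)) (hEH k (k + 1) (by omega))
        exact h1.comp h2
  choose S lam' W' hS hS0 hl hlb hW' hSe hτe hag using fun k => hpack k (fun j _ => hPall j)
  intro T hT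
  set ν := Measure.map (J 0) μ with hν
  have hνp : IsProbabilityMeasure ν := Measure.isProbabilityMeasure_map (hJmeas 0).aemeasurable
  have hcore : ∀ k,
      ∫⁻ ω, (if sig (fun s => lam' k (ω, s)) (S k ω) (E k ω) ≤ T then
        W' k ((ω, sig (fun s => lam' k (ω, s)) (S k ω) (E k ω)), J k ω) else 0) ∂μ =
      ∫⁻ ω, (∫⁻ u in Ioc 0 T, (∫⁻ ξ, W' k ((ω, u), ξ) ∂ν) * ENNReal.ofReal
        (if S k ω < u ∧ u ≤ sig (fun s => lam' k (ω, s)) (S k ω) (E k ω) then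
          lam' k (ω, u) else 0)) ∂μ := by
    intro k
    have := @core _ (H k) _ _ _ _ _ m0 μ _ id (measurable_id'' (hHle k)) _ _ (hE k).1 (hJmeas k)
      (hIk k) (hEJ k) (hEl k) hc (hS k) (hS0 k) (hl k) (hlb k) _ (hW' k) T
    rw [hJid k] at this
    exact this
  have hmL : ∀ k, Measurable (fun ω => if sig (fun s => lam' k (ω, s)) (S k ω) (E k ω) ≤ T then
        W' k ((ω, sig (fun s => lam' k (ω, s)) (S k ω) (E k ω)), J k ω) else 0) := by
    intro k
    have h1 := @core_measL _ (H k) _ _ _ _ hc (hS k) (hl k) (hlb k) _ (hW' k) T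
    have h2 : @Measurable _ _ m0 (MeasurableSpace.prod (H k) inferInstance)
        (fun ω => (ω, (E k ω, J k ω))) :=
      pair_meas (hHle k) ((hE k).1.prodMk (hJmeas k))
    exact h1.comp h2
  have h2E : ∀ k, @Measurable _ _ m0 (MeasurableSpace.prod (H k) inferInstance)
      (fun ω => (ω, E k ω)) := fun k =>
    pair_meas (hHle k) (hE k).1
  have hmR : ∀ k, Measurable (fun ω => ∫⁻ u in Ioc 0 T, (∫⁻ ξ, W' k ((ω, u), ξ) ∂ν) * ENNReal.ofReal
        (if S k ω < u ∧ u ≤ sig (fun s => lam' k (ω, s)) (S k ω) (E k ω) then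
          lam' k (ω, u) else 0)) := by
    intro k
    have h1 := @core_measR _ (H k) _ _ _ _ hc (hS k) (hl k) (hlb k) _ (hW' k) ν _ T
    exact h1.comp (h2E k)
  have hmU : ∀ k ω, Measurable (fun u => (∫⁻ ξ, W' k ((ω, u), ξ) ∂ν) * ENNReal.ofReal
        (if S k ω < u ∧ u ≤ sig (fun s => lam' k (ω, s)) (S k ω) (E k ω) then
          lam' k (ω, u) else 0)) := by
    intro k ω
    have h1 := @core_measR0 _ (H k) _ _ _ _ hc (hS k) (hl k) (hlb k) _ (hW' k) ν _
    exact h1.comp (@measurable_prodMk_left _ _ (MeasurableSpace.prod (H k) inferInstance) _ (ω, E k ω))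
  calc _ = ∫⁻ ω, ∑' k, (if sig (fun s => lam' k (ω, s)) (S k ω) (E k ω) ≤ T then
        W' k ((ω, sig (fun s => lam' k (ω, s)) (S k ω) (E k ω)), J k ω) else 0) ∂μ := by
        refine lintegral_congr_ae ?_
        filter_upwards [hΩ0] with ω hω
        refine tsum_congr fun k => ?_
        rw [← hτe k ω hω]
        split_ifs with h
        · exact ((hag k ω hω (τ (k + 1) ω)
            ((hτnn k ω hω).trans_lt (hτlt k ω hω).1) le_rfl).2 _).symm
        · rfl
    _ = ∑' k, ∫⁻ ω, (if sig (fun s => lam' k (ω, s)) (S k ω) (E k ω) ≤ T then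
        W' k ((ω, sig (fun s => lam' k (ω, s)) (S k ω) (E k ω)), J k ω) else 0) ∂μ :=
        lintegral_tsum fun k => (hmL k).aemeasurable
    _ = ∑' k, ∫⁻ ω, (∫⁻ u in Ioc 0 T, (∫⁻ ξ, W' k ((ω, u), ξ) ∂ν) * ENNReal.ofReal
        (if S k ω < u ∧ u ≤ sig (fun s => lam' k (ω, s)) (S k ω) (E k ω) then
          lam' k (ω, u) else 0)) ∂μ := tsum_congr hcore
    _ = ∫⁻ ω, ∑' k, (∫⁻ u in Ioc 0 T, (∫⁻ ξ, W' k ((ω, u), ξ) ∂ν) * ENNReal.ofReal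
        (if S k ω < u ∧ u ≤ sig (fun s => lam' k (ω, s)) (S k ω) (E k ω) then
          lam' k (ω, u) else 0)) ∂μ := (lintegral_tsum fun k => (hmR k).aemeasurable).symm
    _ = _ := by
        refine lintegral_congr_ae ?_
        filter_upwards [hΩ0] with ω hω
        rw [← lintegral_tsum fun k => (hmU k ω).aemeasurable]
        have hae : ∀ᵐ u ∂(volume.restrict (Ioc (0:ℝ) T)), ∀ k, clamp (lam k u ω) = lam k u ω :=
          ae_all_iff.2 fun k => ae_restrict_of_ae_restrict_of_subset
            (fun s hs => le_of_lt hs.1) (hlamc_ae k ω hω)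
        refine lintegral_congr_ae ?_
        filter_upwards [hae, ae_restrict_mem measurableSet_Ioc] with u hu hu0
        have hterm : ∀ k, (∫⁻ ξ, W' k ((ω, u), ξ) ∂ν) * ENNReal.ofReal
            (if S k ω < u ∧ u ≤ sig (fun s => lam' k (ω, s)) (S k ω) (E k ω) then
              lam' k (ω, u) else 0) = (∫⁻ ξ, W ((ω, u), ξ) ∂ν) * ENNReal.ofReal
            (if τ k ω < u ∧ u ≤ τ (k + 1) ω then lam k u ω else 0) := by
          intro k
          rw [← hτe k ω hω, ← hSe k ω hω]
          split_ifs with h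
          · obtain ⟨h1, h2⟩ := hag k ω hω u hu0.1 h.2
            rw [h1, hu k]
            simp_rw [h2]
          · simp
        simp_rw [hterm]
        rw [ENNReal.tsum_mul_left]
        congr 1
        by_cases hex : ∃ k, τ k ω < u ∧ u ≤ τ (k + 1) ω
        · obtain ⟨k, hk⟩ := hex
          have hne : ∀ j, j ≠ k → ¬ (τ j ω < u ∧ u ≤ τ (j + 1) ω) := by
            rintro j hj ⟨h1, h2⟩
            rcases lt_or_gt_of_ne hj with h | h
            · have : τ (j + 1) ω ≤ τ k ω := (hτmono ω hω).monotone h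
              linarith [hk.1]
            · have : τ (k + 1) ω ≤ τ j ω := (hτmono ω hω).monotone h
              linarith [hk.2]
          rw [tsum_eq_single k (fun j hj => by simp [hne j hj]),
            tsum_eq_single k (fun j hj => by simp [hne j hj])]
        · push Not at hex
          have : ∀ k, ¬ (τ k ω < u ∧ u ≤ τ (k + 1) ω) := fun k h => absurd h.2 (not_le.2 (hex k h.1))
          simp [this]

end InvMarkovJump
end
end

section
/- Let (Ω, 𝓕, 𝔽 = (𝓕_t)_{t≥0}, P) satisfy the usual conditions. Let 0 < L < U be constants, η a progressively measurable process with L ≤ η ≤ U (P ⊗ dt)-a.e., and λ : [0,∞) × ℕ → [0,∞) a measurable function with L ≤ λ(·, x) ≤ U Lebesgue-a.e. for each x ∈ ℕ. Suppose Ω supports a sequence (E_k)_{k≥1} of i.i.d. Exp(1) random variables independent of 𝓕_∞. Then there exist a filtration 𝔾 ⊇ 𝔽 satisfying the usual conditions and a 𝔾-adapted counting process X (i.e. X_t = Σ_{k=1}^∞ 1_{{τ_k ≤ t}} for a strictly increasing sequence of finite 𝔾-stopping times 0 < τ_1 < τ_2 < ⋯ increasing to ∞ a.s.) such that the process X_t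 − ∫_0^t (η_s / E[η_s | X_{s−}]) λ(s, X_{s−}) ds, t ≥ 0, is a 𝔾-martingale; here E[η_s | X_{s−}] denotes the conditional expectation of η_s given the σ-algebra generated by X_{s−}, which takes values in [L, U]. -/
open MeasureTheory ProbabilityTheory Filter Set
open scoped ENNReal Topology

noncomputable section

namespace InvMarkovJump

variable {Ω : Type*}

/-- The number of jumps of the counting process up to and including time `t`
(`τ (k+1)` is the `(k+1)`-st jump time): `X_t = #{k ≥ 1 : τ_k ≤ t}`. -/
def countX (τ : ℕ → Ω → ℝ) (t : ℝ) (ω : Ω) : ℕ :=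
  Nat.card {k : ℕ // τ (k + 1) ω ≤ t}

/-- The left limit `X_{t-} = #{k ≥ 1 : τ_k < t}` of the counting process. -/
def countXminus (τ : ℕ → Ω → ℝ) (t : ℝ) (ω : Ω) : ℕ :=
  Nat.card {k : ℕ // τ (k + 1) ω < t}


/-- Cumulative hazard after time `τ`. -/
def Lam (τ : Ω → ℝ) (η : ℝ → Ω → ℝ) (a : ℝ → ℝ) (t : ℝ) (ω : Ω) : ℝ :=
  ∫ r in Set.Ioc 0 t, (if τ ω < r then η r ω * a r else 0)

lemma hz_meas_joint {m : MeasurableSpace Ω} {τ : Ω → ℝ} (hτ : Measurable τ) {η : ℝ → Ω → ℝ}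
    (hη : Measurable (Function.uncurry η)) {a : ℝ → ℝ} (ha : Measurable a) :
    Measurable (fun p : ℝ × Ω => if τ p.2 < p.1 then η p.1 p.2 * a p.1 else 0) := by
  refine Measurable.ite ?_ ?_ measurable_const
  · exact measurableSet_lt (hτ.comp measurable_snd) measurable_fst
  · exact hη.mul (ha.comp measurable_fst)

lemma hz_meas {m : MeasurableSpace Ω} {η : ℝ → Ω → ℝ}
    (hη : Measurable (Function.uncurry η)) {a : ℝ → ℝ} (ha : Measurable a) (c : ℝ) (ω : Ω) :
    Measurable (fun r : ℝ => if c < r then η r ω * a r else 0) := by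
  refine Measurable.ite measurableSet_Ioi ?_ measurable_const
  exact (hη.comp (measurable_id.prodMk measurable_const)).mul ha

lemma hz_bd {η : ℝ → Ω → ℝ} {a : ℝ → ℝ} {U M : ℝ} (hη0 : ∀ s ω, 0 ≤ η s ω)
    (hηU : ∀ s ω, η s ω ≤ U) (ha0 : ∀ s, 0 ≤ a s) (haM : ∀ s, a s ≤ M) (c : ℝ) (ω : Ω) (r : ℝ) :
    0 ≤ (if c < r then η r ω * a r else 0) ∧ (if c < r then η r ω * a r else 0) ≤ U * M := by
  have h1 := hη0 r ω
  have h2 := hηU r ω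
  have h3 := ha0 r
  have h4 := haM r
  have : η r ω * a r ≤ U * M := by gcongr; linarith
  have h5 := mul_nonneg h1 h3
  split_ifs
  · exact ⟨h5, this⟩
  · exact ⟨le_rfl, h5.trans this⟩

lemma hz_intble {m : MeasurableSpace Ω} {η : ℝ → Ω → ℝ}
    (hη : Measurable (Function.uncurry η)) {a : ℝ → ℝ} (ha : Measurable a)
    {U M : ℝ} (hη0 : ∀ s ω, 0 ≤ η s ω)
    (hηU : ∀ s ω, η s ω ≤ U) (ha0 : ∀ s, 0 ≤ a s) (haM : ∀ s, a s ≤ M) (c : ℝ) (ω : Ω) (s t : ℝ) :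
    IntegrableOn (fun r : ℝ => if c < r then η r ω * a r else 0) (Set.Ioc s t) := by
  refine Measure.integrableOn_of_bounded (M := U * M) (by simp) (hz_meas hη ha c ω).aestronglyMeasurable ?_
  refine ae_of_all _ fun r => ?_
  have := hz_bd hη0 hηU ha0 haM c ω r
  rw [Real.norm_of_nonneg this.1]; exact this.2

lemma Lam_meas_joint {m : MeasurableSpace Ω} {τ : Ω → ℝ} (hτ : Measurable τ) {η : ℝ → Ω → ℝ}
    (hη : Measurable (Function.uncurry η)) {a : ℝ → ℝ} (ha : Measurable a) :
    Measurable (fun p : ℝ × Ω => Lam τ η a p.1 p.2) := by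
  have h1 : (fun p : ℝ × Ω => Lam τ η a p.1 p.2) = fun p : ℝ × Ω =>
      ∫ r, (if 0 < r ∧ r ≤ p.1 then (if τ p.2 < r then η r p.2 * a r else 0) else 0) := by
    funext p
    unfold Lam
    rw [← integral_indicator measurableSet_Ioc]
    congr 1
    funext r
    simp [Set.indicator, Set.mem_Ioc]
  rw [h1]
  have h2 : Measurable (fun q : (ℝ × Ω) × ℝ =>
      (if 0 < q.2 ∧ q.2 ≤ q.1.1 then (if τ q.1.2 < q.2 then η q.2 q.1.2 * a q.2 else 0) else 0)) := by
    refine Measurable.ite ?_ ?_ measurable_const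
    · exact (measurableSet_lt measurable_const measurable_snd).inter
        (measurableSet_le measurable_snd (measurable_fst.comp measurable_fst))
    · exact (hz_meas_joint hτ hη ha).comp
        (measurable_snd.prodMk (measurable_snd.comp measurable_fst))
  exact (h2.stronglyMeasurable.integral_prod_right' (ν := volume)).measurable

lemma Lam_meas_s10 {m : MeasurableSpace Ω} {τ : Ω → ℝ} (hτ : Measurable τ) {η : ℝ → Ω → ℝ}
    (hη : Measurable (Function.uncurry η)) {a : ℝ → ℝ} (ha : Measurable a) (t : ℝ) :
    Measurable (Lam τ η a t) :=
  (Lam_meas_joint hτ hη ha).comp (measurable_const.prodMk measurable_id)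

lemma Lam_nonneg_s10 {τ : Ω → ℝ} {η : ℝ → Ω → ℝ} {a : ℝ → ℝ} (hη0 : ∀ s ω, 0 ≤ η s ω) (ha0 : ∀ s, 0 ≤ a s) (t : ℝ) (ω : Ω) :
    0 ≤ Lam τ η a t ω := by
  refine integral_nonneg fun r => ?_
  show 0 ≤ (if τ ω < r then η r ω * a r else 0)
  split_ifs
  · exact mul_nonneg (hη0 _ _) (ha0 _)
  · exact le_rfl

lemma Lam_mono {m : MeasurableSpace Ω} {τ : Ω → ℝ} {η : ℝ → Ω → ℝ}
    (hη : Measurable (Function.uncurry η)) {a : ℝ → ℝ} (ha : Measurable a)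
    {U M : ℝ} (hη0 : ∀ s ω, 0 ≤ η s ω)
    (hηU : ∀ s ω, η s ω ≤ U) (ha0 : ∀ s, 0 ≤ a s) (haM : ∀ s, a s ≤ M)
    (ω : Ω) : Monotone (fun t => Lam τ η a t ω) := by
  intro s t hst
  refine setIntegral_mono_set (hz_intble hη ha hη0 hηU ha0 haM _ _ _ _) ?_ ?_
  · exact ae_of_all _ fun r => (hz_bd hη0 hηU ha0 haM (τ ω) ω r).1
  · exact (Set.Ioc_subset_Ioc_right hst).eventuallyLE

lemma Lam_le {m : MeasurableSpace Ω} {τ : Ω → ℝ} {η : ℝ → Ω → ℝ}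
    (hη : Measurable (Function.uncurry η)) {a : ℝ → ℝ} (ha : Measurable a)
    {U M : ℝ} (hη0 : ∀ s ω, 0 ≤ η s ω)
    (hηU : ∀ s ω, η s ω ≤ U) (ha0 : ∀ s, 0 ≤ a s) (haM : ∀ s, a s ≤ M)
    (t : ℝ) (ht : 0 ≤ t) (ω : Ω) : Lam τ η a t ω ≤ U * M * t := by
  have : Lam τ η a t ω ≤ ∫ r in Set.Ioc 0 t, U * M := by
    refine setIntegral_mono (hz_intble hη ha hη0 hηU ha0 haM _ _ _ _)
      continuous_const.integrableOn_Ioc fun r => ?_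
    exact (hz_bd hη0 hηU ha0 haM (τ ω) ω r).2
  simpa [ht, mul_comm] using this

lemma Lam_continuous {m : MeasurableSpace Ω} {τ : Ω → ℝ} {η : ℝ → Ω → ℝ}
    (hη : Measurable (Function.uncurry η)) {a : ℝ → ℝ} (ha : Measurable a)
    {U M : ℝ} (hη0 : ∀ s ω, 0 ≤ η s ω)
    (hηU : ∀ s ω, η s ω ≤ U) (ha0 : ∀ s, 0 ≤ a s) (haM : ∀ s, a s ≤ M)
    (ω : Ω) : Continuous (fun t => Lam τ η a t ω) := by
  have h : (fun t => Lam τ η a t ω) = fun t =>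
      ∫ r in (0:ℝ)..(max t 0), (if τ ω < r then η r ω * a r else 0) := by
    funext t
    rw [intervalIntegral.integral_of_le (le_max_right _ _)]
    rcases le_total t 0 with h | h
    · simp [Lam, h]
    · simp [Lam, h]
  rw [h]
  refine (intervalIntegral.continuous_primitive (fun u v => ?_) 0).comp (by fun_prop)
  exact ⟨hz_intble hη ha hη0 hηU ha0 haM _ _ _ _, hz_intble hη ha hη0 hηU ha0 haM _ _ _ _⟩

lemma Lam_eq_zero {τ : Ω → ℝ} {η : ℝ → Ω → ℝ} {a : ℝ → ℝ} (t : ℝ) (ω : Ω) (h : t ≤ τ ω) : Lam τ η a t ω = 0 := by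
  unfold Lam
  rw [setIntegral_congr_fun (g := fun _ => (0:ℝ)) measurableSet_Ioc]
  · simp
  · intro r hr
    simp [not_lt.mpr (hr.2.trans h)]

lemma Lam_ge {m : MeasurableSpace Ω} {τ : Ω → ℝ} {η : ℝ → Ω → ℝ}
    (hη : Measurable (Function.uncurry η)) {a : ℝ → ℝ} (ha : Measurable a)
    {U M : ℝ} (hη0 : ∀ s ω, 0 ≤ η s ω)
    (hηU : ∀ s ω, η s ω ≤ U) (ha0 : ∀ s, 0 ≤ a s) (haM : ∀ s, a s ≤ M)
    {L l : ℝ} (hl : 0 ≤ l) (hηL : ∀ s ω, L ≤ η s ω) (hal : ∀ s, l ≤ a s)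
    (t : ℝ) (ω : Ω) (hτ0 : 0 ≤ τ ω) (h : τ ω ≤ t) : L * l * (t - τ ω) ≤ Lam τ η a t ω := by
  have h1 : ∫ r in Set.Ioc (τ ω) t, L * l ≤
      ∫ r in Set.Ioc (τ ω) t, (if τ ω < r then η r ω * a r else 0) := by
    refine setIntegral_mono_on continuous_const.integrableOn_Ioc (hz_intble hη ha hη0 hηU ha0 haM _ _ _ _)
      measurableSet_Ioc fun r hr => ?_
    rw [if_pos hr.1]
    exact mul_le_mul (hηL _ _) (hal _) hl (hη0 _ _)
  have h2 : ∫ r in Set.Ioc (τ ω) t, (if τ ω < r then η r ω * a r else 0) ≤ Lam τ η a t ω := by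
    refine setIntegral_mono_set (hz_intble hη ha hη0 hηU ha0 haM _ _ _ _) ?_ ?_
    · exact ae_of_all _ fun r => (hz_bd hη0 hηU ha0 haM (τ ω) ω r).1
    · exact (Set.Ioc_subset_Ioc_left hτ0).eventuallyLE
  refine le_trans (le_of_eq ?_) (h1.trans h2)
  simp [h, mul_comm]

/-- The next jump time. -/
lemma exists_next {m : MeasurableSpace Ω} {τ : Ω → ℝ} {η : ℝ → Ω → ℝ}
    (hη : Measurable (Function.uncurry η)) {a : ℝ → ℝ} (ha : Measurable a)
    {U M : ℝ} (hη0 : ∀ s ω, 0 ≤ η s ω)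
    (hηU : ∀ s ω, η s ω ≤ U) (ha0 : ∀ s, 0 ≤ a s) (haM : ∀ s, a s ≤ M)
    {L l : ℝ} (hL : 0 < L) (hl : 0 < l) (hηL : ∀ s ω, L ≤ η s ω)
    (hal : ∀ s, l ≤ a s) (hτ0 : ∀ ω, 0 ≤ τ ω) (e : Ω → ℝ) (he : ∀ ω, 0 < e ω) :
    ∃ τ' : Ω → ℝ, (∀ ω, τ ω < τ' ω) ∧ (∀ t ω, t < τ' ω ↔ Lam τ η a t ω < e ω) ∧
      (∀ ω, Lam τ η a (τ' ω) ω = e ω) := by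
  have key : ∀ ω, ∃ T, τ ω < T ∧ (∀ t, t < T ↔ Lam τ η a t ω < e ω) ∧ Lam τ η a T ω = e ω := by
    intro ω
    have hmono := Lam_mono (τ := τ) hη ha hη0 hηU ha0 haM ω
    have hcont := Lam_continuous (τ := τ) hη ha hη0 hηU ha0 haM ω
    set S : Set ℝ := {t | e ω ≤ Lam τ η a t ω} with hS
    have hcl : IsClosed S := isClosed_le continuous_const hcont
    have hne : S.Nonempty := by
      refine ⟨τ ω + e ω / (L * l), ?_⟩
      have hp : 0 < e ω / (L * l) := div_pos (he ω) (mul_pos hL hl)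
      have := Lam_ge (τ := τ) hη ha hη0 hηU ha0 haM hl.le hηL hal (τ ω + e ω / (L * l)) ω
        (hτ0 ω) (by linarith)
      have h2 : L * l * (τ ω + e ω / (L * l) - τ ω) = e ω := by
        have := (mul_pos hL hl).ne'
        field_simp
        ring
      rw [h2] at this
      exact this
    have hlow : ∀ t ∈ S, τ ω < t := by
      intro t ht
      by_contra hcon
      have := Lam_eq_zero (τ := τ) (η := η) (a := a) t ω (not_lt.mp hcon)
      have h3 : e ω ≤ Lam τ η a t ω := ht
      linarith [he ω]
    have hbdd : BddBelow S := ⟨τ ω, fun t ht => (hlow t ht).le⟩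
    have hmem : sInf S ∈ S := hcl.csInf_mem hne hbdd
    have hiff : ∀ t, t < sInf S ↔ Lam τ η a t ω < e ω := by
      intro t
      constructor
      · intro h
        by_contra hcon
        exact absurd (csInf_le hbdd (show t ∈ S from not_lt.mp hcon)) (not_le.mpr h)
      · intro h
        by_contra hcon
        have h1 : e ω ≤ Lam τ η a (sInf S) ω := hmem
        have h2 := hmono (not_lt.mp hcon)
        simp only at h2
        linarith
    refine ⟨sInf S, hlow _ hmem, hiff, le_antisymm ?_ hmem⟩
    have h5 : Tendsto (fun t => Lam τ η a t ω) (𝓝[<] (sInf S)) (𝓝 (Lam τ η a (sInf S) ω)) :=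
      (hcont.tendsto _).mono_left nhdsWithin_le_nhds
    refine le_of_tendsto h5 ?_
    filter_upwards [self_mem_nhdsWithin] with t ht
    exact ((hiff t).1 ht).le
  choose T h1 h2 h3 using key
  exact ⟨T, h1, fun t ω => h2 ω t, h3⟩

/-- The compensator part of a single jump. -/
lemma cell_integral {τ : Ω → ℝ} {η : ℝ → Ω → ℝ} {a : ℝ → ℝ}
    {τ' : Ω → ℝ} {e : Ω → ℝ} (h2 : ∀ t ω, t < τ' ω ↔ Lam τ η a t ω < e ω)
    (h3 : ∀ ω, Lam τ η a (τ' ω) ω = e ω) (t : ℝ) (ω : Ω) :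
    ∫ r in Set.Ioc 0 t, (if τ ω < r ∧ r ≤ τ' ω then η r ω * a r else 0)
      = min (Lam τ η a t ω) (e ω) := by
  rcases lt_or_ge t (τ' ω) with h | h
  · rw [min_eq_left ((h2 t ω).1 h).le]
    unfold Lam
    refine setIntegral_congr_fun measurableSet_Ioc fun r hr => ?_
    simp [hr.2.trans h.le]
  · have h4 : e ω ≤ Lam τ η a t ω := by
      by_contra hcon
      exact absurd ((h2 t ω).2 (not_le.mp hcon)) (not_lt.mpr h)
    rw [min_eq_right h4, ← h3 ω]
    unfold Lam
    have h5 : Set.Ioc 0 (τ' ω) ⊆ Set.Ioc 0 t := Set.Ioc_subset_Ioc_right h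
    refine (setIntegral_eq_of_subset_of_forall_sdiff_eq_zero measurableSet_Ioc h5 ?_).trans ?_
    rotate_left
    · refine setIntegral_congr_fun measurableSet_Ioc fun r hr => ?_
      simp [hr.2]
    · intro r hr
      rw [if_neg]
      intro hc
      exact hr.2 ⟨hr.1.1, hc.2⟩


/-- Conditional probability of sitting in the current level. -/
def wgt (τ : Ω → ℝ) (η : ℝ → Ω → ℝ) (a : ℝ → ℝ) (s : ℝ) (ω : Ω) : ℝ :=
  if τ ω < s then Real.exp (-Lam τ η a s ω) else 0

lemma exp_diff (x y : ℝ) (hx : 0 ≤ x) (hy : 0 ≤ y) :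
    |Real.exp (-x) - Real.exp (-y)| ≤ |x - y| := by
  have key : ∀ x y : ℝ, 0 ≤ x → x ≤ y → |Real.exp (-x) - Real.exp (-y)| ≤ |x - y| := by
    intro x y hx hxy
    have h1 : Real.exp (-y) ≤ Real.exp (-x) := Real.exp_le_exp.2 (by linarith)
    rw [abs_of_nonneg (by linarith), abs_of_nonpos (by linarith)]
    have h2 : Real.exp (-y) = Real.exp (-x) * Real.exp (x - y) := by
      rw [← Real.exp_add]; congr 1; ring
    have h3 := Real.add_one_le_exp (x - y)
    have h4 : Real.exp (-x) ≤ 1 := Real.exp_le_one_iff.2 (by linarith)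
    have h5 := Real.exp_pos (-x)
    rw [h2]
    nlinarith
  rcases le_total x y with h | h
  · exact key x y hx h
  · rw [abs_sub_comm, abs_sub_comm x y]; exact key y x hy h

lemma Lam_diff {m : MeasurableSpace Ω} {τ : Ω → ℝ} {η : ℝ → Ω → ℝ}
    (hη : Measurable (Function.uncurry η)) {a b : ℝ → ℝ} (ha : Measurable a) (hb : Measurable b)
    {U M : ℝ} (hη0 : ∀ s ω, 0 ≤ η s ω)
    (hηU : ∀ s ω, η s ω ≤ U) (ha0 : ∀ s, 0 ≤ a s) (haM : ∀ s, a s ≤ M)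
    (hb0 : ∀ s, 0 ≤ b s) (hbM : ∀ s, b s ≤ M) (s : ℝ) (ω : Ω) :
    |Lam τ η a s ω - Lam τ η b s ω| ≤ U * ∫ r in Set.Ioc 0 s, |a r - b r| := by
  unfold Lam
  rw [← integral_sub (hz_intble hη ha hη0 hηU ha0 haM _ _ _ _)
    (hz_intble hη hb hη0 hηU hb0 hbM _ _ _ _), ← integral_const_mul, ← Real.norm_eq_abs]
  refine norm_integral_le_of_norm_le ?_ (ae_of_all _ fun r => ?_)
  · refine Integrable.const_mul ?_ _
    refine Measure.integrableOn_of_bounded (M := M) (by simp)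
      (ha.sub hb).abs.aestronglyMeasurable (ae_of_all _ fun r => ?_)
    rw [Real.norm_eq_abs, abs_abs, abs_le]
    constructor <;> linarith [ha0 r, haM r, hb0 r, hbM r]
  · have h1 := hη0 r ω
    have h2 := hηU r ω
    have h3 := abs_nonneg (a r - b r)
    split_ifs
    · rw [← mul_sub, Real.norm_eq_abs, abs_mul, abs_of_nonneg h1]
      gcongr
    · simp only [sub_self, norm_zero]
      exact mul_nonneg (h1.trans h2) h3

lemma wgt_meas_joint {m : MeasurableSpace Ω} {τ : Ω → ℝ} (hτ : Measurable τ) {η : ℝ → Ω → ℝ}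
    (hη : Measurable (Function.uncurry η)) {a : ℝ → ℝ} (ha : Measurable a) :
    Measurable (fun p : ℝ × Ω => wgt τ η a p.1 p.2) := by
  refine Measurable.ite (measurableSet_lt (hτ.comp measurable_snd) measurable_fst) ?_
    measurable_const
  exact (Lam_meas_joint hτ hη ha).neg.exp

lemma wgt_meas {m : MeasurableSpace Ω} {τ : Ω → ℝ} (hτ : Measurable τ) {η : ℝ → Ω → ℝ}
    (hη : Measurable (Function.uncurry η)) {a : ℝ → ℝ} (ha : Measurable a) (s : ℝ) :
    Measurable (wgt τ η a s) :=
  (wgt_meas_joint hτ hη ha).comp (measurable_const.prodMk measurable_id)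

lemma wgt_nonneg (τ : Ω → ℝ) (η : ℝ → Ω → ℝ) (a : ℝ → ℝ) (s : ℝ) (ω : Ω) :
    0 ≤ wgt τ η a s ω := by
  unfold wgt
  split_ifs
  · positivity
  · exact le_rfl

lemma wgt_le {τ : Ω → ℝ} {η : ℝ → Ω → ℝ} {a : ℝ → ℝ}
    (hη0 : ∀ s ω, 0 ≤ η s ω) (ha0 : ∀ s, 0 ≤ a s) (s : ℝ) (ω : Ω) :
    wgt τ η a s ω ≤ {ω | τ ω < s}.indicator 1 ω := by
  unfold wgt
  have := Lam_nonneg_s10 (τ := τ) hη0 ha0 s ω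
  by_cases h : τ ω < s
  · simp [h, this]
  · simp [h]

lemma wgt_le_one {τ : Ω → ℝ} {η : ℝ → Ω → ℝ} {a : ℝ → ℝ}
    (hη0 : ∀ s ω, 0 ≤ η s ω) (ha0 : ∀ s, 0 ≤ a s) (s : ℝ) (ω : Ω) :
    wgt τ η a s ω ≤ 1 := by
  refine (wgt_le hη0 ha0 s ω).trans ?_
  exact Set.indicator_le_self' (by simp) ω

section fix
variable {m : MeasurableSpace Ω}

def Nf (μ : Measure Ω) (τ : Ω → ℝ) (η : ℝ → Ω → ℝ) (a : ℝ → ℝ) (s : ℝ) : ℝ :=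
  ∫ ω, wgt τ η a s ω ∂μ

def Df (μ : Measure Ω) (τ : Ω → ℝ) (η : ℝ → Ω → ℝ) (a : ℝ → ℝ) (s : ℝ) : ℝ :=
  ∫ ω, η s ω * wgt τ η a s ω ∂μ

def Phi (μ : Measure Ω) (U : ℝ) (l : ℝ → ℝ) (τ : Ω → ℝ) (η : ℝ → Ω → ℝ) (a : ℝ → ℝ) (s : ℝ) : ℝ :=
  l s * max (1 / U) (Nf μ τ η a s / Df μ τ η a s)

lemma Phi_meas (μ : Measure Ω) [IsProbabilityMeasure μ] (U : ℝ) {l : ℝ → ℝ} (hl : Measurable l)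
    {τ : Ω → ℝ} (hτ : Measurable τ)
    {η : ℝ → Ω → ℝ} (hη : Measurable (Function.uncurry η)) {a : ℝ → ℝ} (ha : Measurable a) :
    Measurable (Phi μ U l τ η a) := by
  have h1 : Measurable (Nf μ τ η a) :=
    ((wgt_meas_joint hτ hη ha).stronglyMeasurable.integral_prod_right' (ν := μ)).measurable
  have h2 : Measurable (Df μ τ η a) :=
    ((hη.mul (wgt_meas_joint hτ hη ha)).stronglyMeasurable.integral_prod_right' (ν := μ)).measurable
  exact hl.mul (measurable_const.max (h1.div h2))

lemma wgt_int (μ : Measure Ω) [IsProbabilityMeasure μ] {τ : Ω → ℝ} (hτ : Measurable τ)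
    {η : ℝ → Ω → ℝ} (hη : Measurable (Function.uncurry η)) {a : ℝ → ℝ} (ha : Measurable a)
    (hη0 : ∀ s ω, 0 ≤ η s ω) (ha0 : ∀ s, 0 ≤ a s) (s : ℝ) :
    Integrable (wgt τ η a s) μ := by
  refine Integrable.of_bound (wgt_meas hτ hη ha s).aestronglyMeasurable 1 (ae_of_all _ fun ω => ?_)
  rw [Real.norm_of_nonneg (wgt_nonneg _ _ _ _ _)]
  exact wgt_le_one hη0 ha0 s ω

lemma eta_wgt_int (μ : Measure Ω) [IsProbabilityMeasure μ] {τ : Ω → ℝ} (hτ : Measurable τ)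
    {η : ℝ → Ω → ℝ} (hη : Measurable (Function.uncurry η)) {a : ℝ → ℝ} (ha : Measurable a)
    {U : ℝ} (hη0 : ∀ s ω, 0 ≤ η s ω) (hηU : ∀ s ω, η s ω ≤ U) (ha0 : ∀ s, 0 ≤ a s) (s : ℝ) :
    Integrable (fun ω => η s ω * wgt τ η a s ω) μ := by
  have hm : Measurable (η s) := hη.comp (measurable_const.prodMk measurable_id)
  refine Integrable.bdd_mul (c := U) (wgt_int μ hτ hη ha hη0 ha0 s) hm.aestronglyMeasurable
    (ae_of_all _ fun ω => ?_)
  rw [Real.norm_of_nonneg (hη0 _ _)]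
  exact hηU s ω

/-- All bounds on numerator and denominator. -/
lemma ND_bounds (μ : Measure Ω) [IsProbabilityMeasure μ] {τ : Ω → ℝ} (hτ : Measurable τ)
    (hτ0 : ∀ ω, 0 ≤ τ ω)
    {η : ℝ → Ω → ℝ} (hη : Measurable (Function.uncurry η)) {a : ℝ → ℝ} (ha : Measurable a)
    {L U M : ℝ} (hL : 0 < L) (hηL : ∀ s ω, L ≤ η s ω) (hηU : ∀ s ω, η s ω ≤ U)
    (ha0 : ∀ s, 0 ≤ a s) (haM : ∀ s, a s ≤ M) (s : ℝ) :
    μ.real {ω | τ ω < s} * Real.exp (-(U * M * s)) ≤ Nf μ τ η a s ∧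
    Nf μ τ η a s ≤ μ.real {ω | τ ω < s} ∧
    L * Nf μ τ η a s ≤ Df μ τ η a s ∧ Df μ τ η a s ≤ U * Nf μ τ η a s := by
  have hη0 : ∀ s ω, 0 ≤ η s ω := fun s ω => hL.le.trans (hηL s ω)
  have hset : MeasurableSet {ω | τ ω < s} := measurableSet_lt hτ measurable_const
  have hw := wgt_int μ hτ hη ha hη0 ha0 s
  have hew := eta_wgt_int μ hτ hη ha hη0 hηU ha0 s
  refine ⟨?_, ?_, ?_, ?_⟩
  · have : μ.real {ω | τ ω < s} * Real.exp (-(U * M * s)) =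
        ∫ ω, {ω | τ ω < s}.indicator (fun _ => Real.exp (-(U * M * s))) ω ∂μ := by
      rw [integral_indicator_const _ hset, smul_eq_mul]
    rw [this]
    refine integral_mono ((integrable_const _).indicator hset) hw fun ω => ?_
    by_cases h : τ ω < s
    · have := Lam_le (τ := τ) hη ha hη0 hηU ha0 haM s ((hτ0 ω).trans h.le) ω
      simp only [Set.indicator, Set.mem_ofPred_eq, h, if_true, wgt]
      exact Real.exp_le_exp.2 (by linarith)
    · simp [wgt, h]
  · have : μ.real {ω | τ ω < s} = ∫ ω, {ω | τ ω < s}.indicator 1 ω ∂μ := by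
      rw [integral_indicator_one hset]
    rw [this]
    exact integral_mono hw ((integrable_const (1:ℝ)).indicator hset) (wgt_le hη0 ha0 s)
  · unfold Nf Df
    rw [← integral_const_mul]
    exact integral_mono (hw.const_mul _) hew
      fun ω => mul_le_mul_of_nonneg_right (hηL s ω) (wgt_nonneg _ _ _ _ _)
  · unfold Nf Df
    rw [← integral_const_mul]
    exact integral_mono hew (hw.const_mul _)
      fun ω => mul_le_mul_of_nonneg_right (hηU s ω) (wgt_nonneg _ _ _ _ _)

lemma ND_diff (μ : Measure Ω) [IsProbabilityMeasure μ] {τ : Ω → ℝ} (hτ : Measurable τ)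
    {η : ℝ → Ω → ℝ} (hη : Measurable (Function.uncurry η)) {a b : ℝ → ℝ} (ha : Measurable a)
    (hb : Measurable b)
    {U M : ℝ} (hU : 0 ≤ U) (hη0 : ∀ s ω, 0 ≤ η s ω) (hηU : ∀ s ω, η s ω ≤ U)
    (ha0 : ∀ s, 0 ≤ a s) (haM : ∀ s, a s ≤ M)
    (hb0 : ∀ s, 0 ≤ b s) (hbM : ∀ s, b s ≤ M) (s : ℝ) :
    |Nf μ τ η a s - Nf μ τ η b s| ≤
      μ.real {ω | τ ω < s} * (U * ∫ r in Set.Ioc 0 s, |a r - b r|) ∧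
    |Df μ τ η a s - Df μ τ η b s| ≤
      μ.real {ω | τ ω < s} * (U * (U * ∫ r in Set.Ioc 0 s, |a r - b r|)) := by
  have hset : MeasurableSet {ω | τ ω < s} := measurableSet_lt hτ measurable_const
  set δ := U * ∫ r in Set.Ioc 0 s, |a r - b r| with hδ
  have hδ0 : 0 ≤ δ := mul_nonneg hU (integral_nonneg fun r => abs_nonneg _)
  have hpt : ∀ ω, |wgt τ η a s ω - wgt τ η b s ω| ≤ {ω | τ ω < s}.indicator (fun _ => δ) ω := by
    intro ω
    by_cases h : τ ω < s
    · simp only [Set.indicator, Set.mem_ofPred_eq, h, if_true, wgt]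
      exact (exp_diff _ _ (Lam_nonneg_s10 hη0 ha0 _ _) (Lam_nonneg_s10 hη0 hb0 _ _)).trans
        (Lam_diff hη ha hb hη0 hηU ha0 haM hb0 hbM s ω)
    · simp [wgt, h]
  constructor
  · unfold Nf
    rw [← integral_sub (wgt_int μ hτ hη ha hη0 ha0 s) (wgt_int μ hτ hη hb hη0 hb0 s),
      ← smul_eq_mul, ← integral_indicator_const _ hset, ← Real.norm_eq_abs]
    exact norm_integral_le_of_norm_le ((integrable_const _).indicator hset)
      (ae_of_all _ fun ω => hpt ω)
  · unfold Df
    rw [← integral_sub (eta_wgt_int μ hτ hη ha hη0 hηU ha0 s)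
      (eta_wgt_int μ hτ hη hb hη0 hηU hb0 s),
      ← smul_eq_mul, ← integral_indicator_const _ hset, ← Real.norm_eq_abs]
    refine norm_integral_le_of_norm_le ((integrable_const _).indicator hset)
      (ae_of_all _ fun ω => ?_)
    rw [← mul_sub, Real.norm_eq_abs, abs_mul, abs_of_nonneg (hη0 _ _)]
    have h1 := hpt ω
    have h2 : {ω | τ ω < s}.indicator (fun _ => U * δ) ω =
        U * {ω | τ ω < s}.indicator (fun _ => δ) ω := by
      by_cases h : τ ω < s <;> simp [h]
    rw [h2]
    exact mul_le_mul (hηU s ω) h1 (abs_nonneg _) hU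

lemma ratio_diff {P x L U N1 N2 D1 D2 δ : ℝ} (hP : 0 < P) (hx : 0 < x) (hL : 0 < L) (hU : 0 < U)
    (hδ : 0 ≤ δ)
    (h1 : P * x ≤ N1) (h2 : P * x ≤ N2) (h4 : N2 ≤ P)
    (hD1 : L * N1 ≤ D1) (hD2 : L * N2 ≤ D2) (hD2' : D2 ≤ U * N2)
    (hN : |N1 - N2| ≤ P * (U * δ)) (hD : |D1 - D2| ≤ P * (U * (U * δ))) :
    |N1 / D1 - N2 / D2| ≤ 2 * U ^ 2 / L ^ 2 * (1 / x) ^ 2 * δ := by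
  have hPx : 0 < P * x := mul_pos hP hx
  have hN2 : 0 < N2 := hPx.trans_le h2
  have e1 : L * (P * x) ≤ D1 := (mul_le_mul_of_nonneg_left h1 hL.le).trans hD1
  have e2 : L * (P * x) ≤ D2 := (mul_le_mul_of_nonneg_left h2 hL.le).trans hD2
  have hl : 0 < L * (P * x) := mul_pos hL hPx
  have hD1p : 0 < D1 := hl.trans_le e1
  have hD2p : 0 < D2 := hl.trans_le e2
  have e3 : D2 ≤ U * P := hD2'.trans (mul_le_mul_of_nonneg_left h4 hU.le)
  have e4 : N1 / D1 - N2 / D2 = ((N1 - N2) * D2 - N2 * (D1 - D2)) / (D1 * D2) := by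
    field_simp
    ring
  rw [e4, abs_div, abs_of_pos (mul_pos hD1p hD2p), div_le_iff₀ (mul_pos hD1p hD2p)]
  have e5 : |(N1 - N2) * D2 - N2 * (D1 - D2)| ≤ P * (U * δ) * (U * P) + P * (P * (U * (U * δ))) := by
    refine (abs_sub _ _).trans ?_
    rw [abs_mul, abs_mul, abs_of_pos hD2p, abs_of_pos hN2]
    gcongr
  have e6 : (L * (P * x)) * (L * (P * x)) ≤ D1 * D2 := mul_le_mul e1 e2 hl.le hD1p.le
  have e7 : 0 ≤ 2 * U ^ 2 / L ^ 2 * (1 / x) ^ 2 * δ := by positivity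
  refine e5.trans (le_trans (le_of_eq ?_) (mul_le_mul_of_nonneg_left e6 e7))
  field_simp
  ring

lemma Phi_bounds (μ : Measure Ω) [IsProbabilityMeasure μ] {τ : Ω → ℝ} (hτ : Measurable τ)
    (hτ0 : ∀ ω, 0 ≤ τ ω)
    {η : ℝ → Ω → ℝ} (hη : Measurable (Function.uncurry η)) {a : ℝ → ℝ} (ha : Measurable a)
    {L U M : ℝ} (hL : 0 < L) (hLU : L < U) (hηL : ∀ s ω, L ≤ η s ω) (hηU : ∀ s ω, η s ω ≤ U)
    (ha0 : ∀ s, 0 ≤ a s) (haM : ∀ s, a s ≤ M)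
    {l : ℝ → ℝ} (hlL : ∀ s, L ≤ l s) (hlU : ∀ s, l s ≤ U) (s : ℝ) :
    L / U ≤ Phi μ U l τ η a s ∧ Phi μ U l τ η a s ≤ U / L := by
  obtain ⟨h1, h2, h3, h4⟩ := ND_bounds μ hτ hτ0 hη ha hL hηL hηU ha0 haM s
  have hU : 0 < U := hL.trans hLU
  have hl := hL.trans_le (hlL s)
  have hr : Nf μ τ η a s / Df μ τ η a s ≤ 1 / L := by
    have hN : 0 ≤ Nf μ τ η a s := le_trans (by positivity) h1
    rcases hN.eq_or_lt with h | h
    · rw [← h]; simp [hL.le]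
    · rw [div_le_div_iff₀ (lt_of_lt_of_le (by positivity) h3) hL]
      linarith
  have hm : max (1 / U) (Nf μ τ η a s / Df μ τ η a s) ≤ 1 / L :=
    max_le (one_div_le_one_div_of_le hL hLU.le) hr
  have hm' : 1 / U ≤ max (1 / U) (Nf μ τ η a s / Df μ τ η a s) := le_max_left _ _
  unfold Phi
  constructor
  · rw [div_eq_mul_one_div]
    exact mul_le_mul (hlL s) hm' (by positivity) hl.le
  · rw [div_eq_mul_one_div U L]
    exact mul_le_mul (hlU s) hm (le_trans (by positivity) hm') hU.le

lemma Phi_lip (μ : Measure Ω) [IsProbabilityMeasure μ] {τ : Ω → ℝ} (hτ : Measurable τ)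
    (hτ0 : ∀ ω, 0 ≤ τ ω)
    {η : ℝ → Ω → ℝ} (hη : Measurable (Function.uncurry η)) {a b : ℝ → ℝ} (ha : Measurable a)
    (hb : Measurable b)
    {L U M : ℝ} (hL : 0 < L) (hLU : L < U) (hηL : ∀ s ω, L ≤ η s ω) (hηU : ∀ s ω, η s ω ≤ U)
    (ha0 : ∀ s, 0 ≤ a s) (haM : ∀ s, a s ≤ M) (hb0 : ∀ s, 0 ≤ b s) (hbM : ∀ s, b s ≤ M)
    {l : ℝ → ℝ} (hlL : ∀ s, L ≤ l s) (hlU : ∀ s, l s ≤ U) (s : ℝ) :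
    |Phi μ U l τ η a s - Phi μ U l τ η b s| ≤
      U * (2 * U ^ 2 / L ^ 2 * (1 / Real.exp (-(U * M * s))) ^ 2) *
        ∫ r in Set.Ioc 0 s, |a r - b r| := by
  have hU : 0 < U := hL.trans hLU
  have hη0 : ∀ s ω, 0 ≤ η s ω := fun s ω => hL.le.trans (hηL s ω)
  obtain ⟨h1, h2, h3, h4⟩ := ND_bounds μ hτ hτ0 hη ha hL hηL hηU ha0 haM s
  obtain ⟨k1, k2, k3, k4⟩ := ND_bounds μ hτ hτ0 hη hb hL hηL hηU hb0 hbM s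
  obtain ⟨d1, d2⟩ := ND_diff μ hτ hη ha hb hU.le hη0 hηU ha0 haM hb0 hbM s
  set δ := ∫ r in Set.Ioc 0 s, |a r - b r| with hδ
  have hδ0 : 0 ≤ δ := integral_nonneg fun r => abs_nonneg _
  have hr : |Nf μ τ η a s / Df μ τ η a s - Nf μ τ η b s / Df μ τ η b s| ≤
      2 * U ^ 2 / L ^ 2 * (1 / Real.exp (-(U * M * s))) ^ 2 * δ := by
    rcases (measureReal_nonneg (μ := μ) (s := {ω | τ ω < s})).eq_or_lt with h | h
    · rw [← h] at h1 h2 k1 k2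
      have e1 : Nf μ τ η a s = 0 := by linarith
      have e2 : Nf μ τ η b s = 0 := by linarith
      rw [e1, e2]
      simp only [zero_div, sub_zero, abs_zero]
      positivity
    · exact ratio_diff h (Real.exp_pos _) hL hU hδ0 h1 k1 k2 h3 k3 k4 d1 d2
  unfold Phi
  rw [← mul_sub, abs_mul, abs_of_pos (hL.trans_le (hlL s)), mul_assoc]
  refine mul_le_mul (hlU s) ?_ (abs_nonneg _) hU.le
  exact (abs_max_sub_max_le_abs _ _ _).trans hr |> fun h => by simpa [max_comm] using h

end fix


lemma exists_fix {m : MeasurableSpace Ω} (μ : Measure Ω) [IsProbabilityMeasure μ]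
    {τ : Ω → ℝ} (hτ : Measurable τ) (hτ0 : ∀ ω, 0 ≤ τ ω)
    {η : ℝ → Ω → ℝ} (hη : Measurable (Function.uncurry η))
    {L U : ℝ} (hL : 0 < L) (hLU : L < U) (hηL : ∀ s ω, L ≤ η s ω) (hηU : ∀ s ω, η s ω ≤ U)
    {l : ℝ → ℝ} (hl : Measurable l) (hlL : ∀ s, L ≤ l s) (hlU : ∀ s, l s ≤ U) :
    ∃ a : ℝ → ℝ, Measurable a ∧ (∀ s, L / U ≤ a s) ∧ (∀ s, a s ≤ U / L) ∧
      ∀ s, 0 < μ.real {ω | τ ω < s} → a s * Df μ τ η a s = l s * Nf μ τ η a s := by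
  have hU : 0 < U := hL.trans hLU
  set M := U / L with hM
  have hM0 : 0 < M := div_pos hU hL
  have hLUpos : 0 < L / U := div_pos hL hU
  have hLUM : L / U ≤ M := by
    have h1 : L / U ≤ 1 := (div_le_one hU).2 hLU.le
    have h2 : 1 ≤ M := (one_le_div hL).2 hLU.le
    linarith
  let A : ℕ → ℝ → ℝ := fun n => Nat.rec (fun _ => L / U) (fun _ b => Phi μ U l τ η b) n
  have hA0 : A 0 = fun _ => L / U := rfl
  have hAs : ∀ n, A (n + 1) = Phi μ U l τ η (A n) := fun n => rfl
  clear_value A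
  have hAprop : ∀ n, Measurable (A n) ∧ (∀ s, L / U ≤ A n s) ∧ (∀ s, A n s ≤ M) := by
    intro n
    induction n with
    | zero =>
      rw [hA0]
      exact ⟨measurable_const, fun _ => le_rfl, fun _ => hLUM⟩
    | succ n ih =>
      obtain ⟨i1, i2, i3⟩ := ih
      have hb := Phi_bounds μ hτ hτ0 hη i1 hL hLU hηL hηU (fun s => hLUpos.le.trans (i2 s)) i3
        hlL hlU
      rw [hAs]
      exact ⟨Phi_meas μ U hl hτ hη i1, fun s => (hb s).1, fun s => (hb s).2⟩
  have hAm := fun n => (hAprop n).1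
  have hAlow := fun n => (hAprop n).2.1
  have hAnn : ∀ n s, 0 ≤ A n s := fun n s => hLUpos.le.trans (hAlow n s)
  have hAM := fun n => (hAprop n).2.2
  let K : ℝ → ℝ := fun T => U * (2 * U ^ 2 / L ^ 2 * (1 / Real.exp (-(U * M * T))) ^ 2)
  have hK : ∀ T, 0 < K T := fun T => by positivity
  have hKmono : ∀ s T, s ≤ T → K s ≤ K T := by
    intro s T hsT
    show U * (2 * U ^ 2 / L ^ 2 * (1 / Real.exp (-(U * M * s))) ^ 2) ≤
      U * (2 * U ^ 2 / L ^ 2 * (1 / Real.exp (-(U * M * T))) ^ 2)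
    gcongr
  have hdiff : ∀ T, ∀ n, ∀ s ≤ T, |A n s - A (n + 1) s| ≤
      M * Real.exp (2 * K T * max s 0) / 2 ^ n := by
    intro T n
    induction n with
    | zero =>
      intro s _
      have h1 : 1 ≤ Real.exp (2 * K T * max s 0) := by
        apply Real.one_le_exp
        have := hK T
        positivity
      have h2 : |A 0 s - A (0 + 1) s| ≤ M := by
        rw [abs_le]
        constructor <;> linarith [hAnn 0 s, hAnn (0+1) s, hAM 0 s, hAM (0+1) s]
      simp only [pow_zero, div_one]
      nlinarith
    | succ n ih =>
      intro s hs
      rw [hAs n, hAs (n + 1)]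
      refine (Phi_lip μ hτ hτ0 hη (hAm n) (hAm (n + 1)) hL hLU hηL hηU (hAnn n) (hAM n)
        (hAnn (n + 1)) (hAM (n + 1)) hlL hlU s).trans ?_
      have hI : ∫ r in Set.Ioc 0 s, |A n r - A (n + 1) r| ≤
          M * Real.exp (2 * K T * max s 0) / 2 ^ n / (2 * K T) := by
        rcases le_or_gt s 0 with h | h
        · rw [Set.Ioc_eq_empty (not_lt.mpr h)]
          simp only [Measure.restrict_empty, integral_zero_measure]
          have := hK T
          positivity
        · have hle : ∫ r in Set.Ioc 0 s, |A n r - A (n + 1) r| ≤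
              ∫ r in Set.Ioc 0 s, M / 2 ^ n * Real.exp (2 * K T * r) := by
            refine setIntegral_mono_on ?_ ?_ measurableSet_Ioc fun r hr => ?_
            · refine Measure.integrableOn_of_bounded (M := M) (by simp)
                ((hAm n).sub (hAm (n+1))).abs.aestronglyMeasurable (ae_of_all _ fun r => ?_)
              rw [Real.norm_eq_abs, abs_abs, abs_le]
              constructor <;> linarith [hAnn n r, hAM n r, hAnn (n+1) r, hAM (n+1) r]
            · exact Continuous.integrableOn_Ioc (by fun_prop)
            · refine (ih r (hr.2.trans hs)).trans (le_of_eq ?_)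
              rw [max_eq_left hr.1.le]
              ring
          refine hle.trans ?_
          rw [← intervalIntegral.integral_of_le h.le, intervalIntegral.integral_const_mul]
          have hIntv : ∫ r in (0:ℝ)..s, Real.exp (2 * K T * r) =
              (Real.exp (2 * K T * s) - 1) / (2 * K T) := by
            rw [intervalIntegral.integral_comp_mul_left (fun x => Real.exp x)
              (by have := hK T; positivity), integral_exp]
            simp
            ring
          rw [hIntv, max_eq_left h.le]
          have := hK T
          have e : M * Real.exp (2 * K T * s) / 2 ^ n / (2 * K T) =
            M / 2 ^ n * (Real.exp (2 * K T * s) / (2 * K T)) := by ring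
          rw [e]
          gcongr
          linarith
      have hI0 : 0 ≤ ∫ r in Set.Ioc 0 s, |A n r - A (n + 1) r| :=
        integral_nonneg fun r => abs_nonneg _
      refine (mul_le_mul_of_nonneg_right (hKmono s T hs) hI0).trans ?_
      refine (mul_le_mul_of_nonneg_left hI (hK T).le).trans (le_of_eq ?_)
      have := (hK T).ne'
      rw [pow_succ]
      field_simp
  have hlim : ∀ s, ∃ x, Tendsto (fun n => A n s) atTop (𝓝 x) := by
    intro s
    apply cauchySeq_tendsto_of_complete
    refine cauchySeq_of_le_geometric_two (C := 2 * (M * Real.exp (2 * K s * max s 0))) fun n => ?_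
    rw [Real.dist_eq]
    refine (hdiff s n s le_rfl).trans (le_of_eq ?_)
    ring
  choose a ha using hlim
  have ham : Measurable a := measurable_of_tendsto_metrizable hAm (tendsto_pi_nhds.2 ha)
  have halow : ∀ s, L / U ≤ a s := fun s => ge_of_tendsto' (ha s) fun n => hAlow n s
  have haM : ∀ s, a s ≤ M := fun s => le_of_tendsto' (ha s) fun n => hAM n s
  have hann : ∀ s, 0 ≤ a s := fun s => hLUpos.le.trans (halow s)
  have hfix : ∀ s, a s = Phi μ U l τ η a s := by
    intro s
    have h1 : Tendsto (fun n => A (n + 1) s) atTop (𝓝 (a s)) :=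
      (ha s).comp (tendsto_add_atTop_nat 1)
    refine tendsto_nhds_unique h1 ?_
    have h2 : Tendsto (fun n => ∫ r in Set.Ioc 0 s, |A n r - a r|) atTop (𝓝 0) := by
      have hz : ∫ r in Set.Ioc 0 s, (0:ℝ) = 0 := by simp
      suffices h : Tendsto (fun n => ∫ r in Set.Ioc 0 s, |A n r - a r|) atTop
          (𝓝 (∫ r in Set.Ioc 0 s, (0:ℝ))) by rwa [hz] at h
      refine tendsto_integral_of_dominated_convergence (μ := volume.restrict (Set.Ioc 0 s)) (F := fun n r => |A n r - a r|) (f := fun _ => (0:ℝ)) (fun _ => M) ?_ ?_ ?_ ?_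
      · exact fun n => ((hAm n).sub ham).abs.aestronglyMeasurable
      · exact continuous_const.integrableOn_Ioc
      · intro n
        refine ae_of_all _ fun r => ?_
        rw [Real.norm_eq_abs, abs_abs, abs_le]
        constructor <;> linarith [hAnn n r, hAM n r, hann r, haM r]
      · refine ae_of_all _ fun r => ?_
        have := ((ha r).sub_const (a r)).abs
        simpa using this
    rw [tendsto_iff_dist_tendsto_zero]
    refine squeeze_zero (fun _ => dist_nonneg) (g := fun n => K s * ∫ r in Set.Ioc 0 s, |A n r - a r|)
      (fun n => ?_) ?_
    · rw [Real.dist_eq, hAs n]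
      exact Phi_lip μ hτ hτ0 hη (hAm n) ham hL hLU hηL hηU (hAnn n) (hAM n)
        hann haM hlL hlU s
    · simpa using h2.const_mul (K s)
  refine ⟨a, ham, halow, haM, fun s hs => ?_⟩
  obtain ⟨h1, h2, h3, h4⟩ := ND_bounds μ hτ hτ0 hη ham hL hηL hηU hann haM s
  have hN : 0 < Nf μ τ η a s := lt_of_lt_of_le (mul_pos hs (Real.exp_pos _)) h1
  have hD : 0 < Df μ τ η a s := lt_of_lt_of_le (mul_pos hL hN) h3
  have hmax : max (1 / U) (Nf μ τ η a s / Df μ τ η a s) = Nf μ τ η a s / Df μ τ η a s := by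
    apply max_eq_right
    rw [div_le_div_iff₀ hU hD]
    linarith
  have h5 := hfix s
  unfold Phi at h5
  rw [hmax] at h5
  rw [h5, mul_assoc, div_mul_cancel₀ _ hD.ne']


lemma indep_integral {H : MeasurableSpace Ω} {m0 : MeasurableSpace Ω}
    (μ : Measure Ω) [IsProbabilityMeasure μ] (hH : H ≤ m0) {e : Ω → ℝ} (he : Measurable e)
    (hind : Indep H (MeasurableSpace.comap e inferInstance) μ)
    {β : Type*} [MeasurableSpace β] {Y : Ω → β} (hY : Measurable[H] Y)
    {g : β → ℝ → ℝ} (hg : Measurable (Function.uncurry g)) {C : ℝ} (hC : ∀ y x, |g y x| ≤ C) :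
    ∫ ω, g (Y ω) (e ω) ∂μ = ∫ ω, (∫ x, g (Y ω) x ∂(μ.map e)) ∂μ := by
  have hY0 : Measurable Y := hY.mono hH le_rfl
  have hif : IndepFun Y e μ := by
    rw [IndepFun_iff_Indep]
    exact indep_of_indep_of_le_left hind hY.comap_le
  have hmap := hif.map_prod_eq_prod_map_map hY0.aemeasurable he.aemeasurable
  have : IsProbabilityMeasure (μ.map e) := Measure.isProbabilityMeasure_map he.aemeasurable
  have : IsProbabilityMeasure (μ.map Y) := Measure.isProbabilityMeasure_map hY0.aemeasurable
  have h1 : ∫ ω, g (Y ω) (e ω) ∂μ = ∫ p, Function.uncurry g p ∂(μ.map (fun ω => (Y ω, e ω))) := by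
    rw [integral_map (hY0.prodMk he).aemeasurable hg.aestronglyMeasurable]
    rfl
  rw [h1, hmap, integral_prod]
  · rw [integral_map hY0.aemeasurable]
    · rfl
    · exact (hg.stronglyMeasurable.integral_prod_right' (ν := μ.map e)).aestronglyMeasurable
  · exact Integrable.of_bound hg.aestronglyMeasurable C (ae_of_all _ fun p => hC p.1 p.2)

/-- Law of an exponential variable. -/
lemma exp_real {m0 : MeasurableSpace Ω} (μ : Measure Ω) {e : Ω → ℝ} (he : IsExpOne μ e) (x : ℝ)
    (hx : 0 ≤ x) : (μ.map e).real (Set.Ioi x) = Real.exp (-x) := by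
  rw [Measure.real, Measure.map_apply he.1 measurableSet_Ioi]
  have := he.2 x hx
  have h2 : e ⁻¹' Set.Ioi x = {ω | x < e ω} := rfl
  rw [h2, this, ENNReal.toReal_ofReal (Real.exp_pos _).le]

lemma indep_exp {H : MeasurableSpace Ω} {m0 : MeasurableSpace Ω}
    (μ : Measure Ω) [IsProbabilityMeasure μ] (hH : H ≤ m0) {e : Ω → ℝ} (he : IsExpOne μ e)
    (hind : Indep H (MeasurableSpace.comap e inferInstance) μ)
    {Z V : Ω → ℝ} (hZ : Measurable[H] Z) (hV : Measurable[H] V) (hV0 : ∀ ω, 0 ≤ V ω)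
    {C : ℝ} (hC : ∀ ω, |Z ω| ≤ C) :
    ∫ ω, (if V ω < e ω then Z ω else 0) ∂μ = ∫ ω, Z ω * Real.exp (-V ω) ∂μ := by
  have hC0 : 0 ≤ C := by
    obtain ⟨ω⟩ : Nonempty Ω := nonempty_of_isProbabilityMeasure μ
    exact (abs_nonneg _).trans (hC ω)
  set g : ℝ × ℝ → ℝ → ℝ := fun y x => if y.2 < x then max (-C) (min C y.1) else 0 with hg
  have hgm : Measurable (Function.uncurry g) := by
    refine Measurable.ite (measurableSet_lt (by fun_prop) (by fun_prop)) (by fun_prop)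
      measurable_const
  have hgC : ∀ y x, |g y x| ≤ C := by
    intro y x
    simp only [hg]
    split_ifs
    · rw [abs_le]
      exact ⟨le_max_left _ _, max_le (by linarith) (min_le_left _ _)⟩
    · simpa using hC0
  have hclip : ∀ ω, max (-C) (min C (Z ω)) = Z ω := fun ω => by
    have := abs_le.1 (hC ω)
    rw [min_eq_right this.2, max_eq_right this.1]
  have key := indep_integral μ hH he.1 hind (Y := fun ω => (Z ω, V ω)) (hZ.prodMk hV) hgm hgC
  simp only [hg, hclip] at key
  rw [key]
  congr 1
  funext ω
  have : (fun x => if V ω < x then Z ω else 0) = (Set.Ioi (V ω)).indicator (fun _ => Z ω) := by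
    funext x
    simp [Set.indicator]
  rw [this, integral_indicator_const _ measurableSet_Ioi, exp_real μ he _ (hV0 ω), smul_eq_mul,
    mul_comm]

lemma exp_ioc {m0 : MeasurableSpace Ω} (μ : Measure Ω) [IsProbabilityMeasure μ]
    {e : Ω → ℝ} (he : IsExpOne μ e) (v w : ℝ) (hv : 0 ≤ v) (hvw : v ≤ w) :
    (μ.map e).real (Set.Ioc v w) = Real.exp (-v) - Real.exp (-w) := by
  have : IsProbabilityMeasure (μ.map e) := Measure.isProbabilityMeasure_map he.1.aemeasurable
  have h1 : Set.Ioc v w = Set.Ioi v \ Set.Ioi w := by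
    ext x; simp
  rw [h1, measureReal_sdiff (Set.Ioi_subset_Ioi hvw) measurableSet_Ioi, exp_real μ he v hv,
    exp_real μ he w (hv.trans hvw)]

lemma exp_min {m0 : MeasurableSpace Ω} (μ : Measure Ω) [IsProbabilityMeasure μ]
    {e : Ω → ℝ} (he : IsExpOne μ e) (v w : ℝ) (hv : 0 ≤ v) (hvw : v ≤ w) :
    ∫ x, (if v < x then min w x - v else 0) ∂(μ.map e) = Real.exp (-v) - Real.exp (-w) := by
  have : IsProbabilityMeasure (μ.map e) := Measure.isProbabilityMeasure_map he.1.aemeasurable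
  have h1 : ∀ x, (if v < x then min w x - v else 0) =
      ∫ r in Set.Ioc v w, (if r < x then (1:ℝ) else 0) := by
    intro x
    have : (fun r => if r < x then (1:ℝ) else 0) = (Set.Iio x).indicator (fun _ => 1) := by
      funext r; simp [Set.indicator]
    rw [this, setIntegral_indicator measurableSet_Iio, setIntegral_const, smul_eq_mul, mul_one]
    have h2 : volume.real (Set.Ioc v w ∩ Set.Iio x) = volume.real (Set.Ioc v (min w x)) := by
      refine measureReal_congr ?_
      have h3 : (Set.Ioc v w ∩ Set.Iio x : Set ℝ) =ᵐ[volume] (Set.Ioc v w ∩ Set.Iic x : Set ℝ) :=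
        ae_eq_set_inter (ae_eq_refl _) Iio_ae_eq_Iic
      refine h3.trans (Eq.eventuallyEq ?_)
      ext r
      simp [and_assoc]
    rw [h2, Real.volume_real_Ioc]
    split_ifs with hx
    · rw [max_eq_left]
      have := le_min hvw hx.le
      linarith
    · rw [max_eq_right]
      have := (min_le_right w x).trans (not_lt.mp hx)
      linarith
  simp_rw [h1]
  rw [integral_integral_swap]
  · have h4 : ∫ r in Set.Ioc v w, (∫ x, (if r < x then (1:ℝ) else 0) ∂(μ.map e)) =
        ∫ r in Set.Ioc v w, Real.exp (-r) := by
      refine setIntegral_congr_fun measurableSet_Ioc fun r hr => ?_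
      have : (fun x => if r < x then (1:ℝ) else 0) = (Set.Ioi r).indicator 1 := by
        funext x; simp [Set.indicator]
      rw [this, integral_indicator_one measurableSet_Ioi, exp_real μ he r (hv.trans hr.1.le)]
    rw [h4, ← intervalIntegral.integral_of_le hvw]
    simp [intervalIntegral.integral_comp_neg (fun x => Real.exp x)]
  · refine Integrable.of_bound (C := 1) ?_ (ae_of_all _ fun p => ?_)
    · refine Measurable.aestronglyMeasurable ?_
      exact Measurable.ite (measurableSet_lt measurable_snd measurable_fst) measurable_const
        measurable_const
    · simp only [Function.uncurry]
      split_ifs <;> simp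

lemma indep_mart {H : MeasurableSpace Ω} {m0 : MeasurableSpace Ω}
    (μ : Measure Ω) [IsProbabilityMeasure μ] (hH : H ≤ m0) {e : Ω → ℝ} (he : IsExpOne μ e)
    (hind : Indep H (MeasurableSpace.comap e inferInstance) μ)
    {V W : Ω → ℝ} (hV : Measurable[H] V) (hW : Measurable[H] W) (hV0 : ∀ ω, 0 ≤ V ω)
    (hVW : ∀ ω, V ω ≤ W ω) {C : ℝ} (hC : ∀ ω, W ω ≤ C) {A : Set Ω} (hA : MeasurableSet[H] A) :
    ∫ ω in A, (if V ω < e ω then ((if e ω ≤ W ω then 1 else 0) - (min (W ω) (e ω) - V ω)) else 0)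
      ∂μ = 0 := by
  have hC0 : 0 ≤ C := by
    obtain ⟨ω⟩ : Nonempty Ω := nonempty_of_isProbabilityMeasure μ
    exact (hV0 ω).trans ((hVW ω).trans (hC ω))
  have : IsProbabilityMeasure (μ.map e) := Measure.isProbabilityMeasure_map he.1.aemeasurable
  set Z : Ω → ℝ := A.indicator 1 with hZdef
  have hZ : Measurable[H] Z := (@measurable_const _ _ _ H (1:ℝ)).indicator hA
  set g : ℝ × ℝ × ℝ → ℝ → ℝ := fun y x => max (-1) (min 1 y.1) *
    (if max 0 (min C y.2.1) < x then
      ((if x ≤ max 0 (min C y.2.2) then 1 else 0) -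
        (min (max 0 (min C y.2.2)) x - max 0 (min C y.2.1))) else 0) with hg
  have hgm : Measurable (Function.uncurry g) := by
    refine Measurable.mul (by fun_prop) ?_
    refine Measurable.ite (measurableSet_lt (by fun_prop) (by fun_prop)) ?_ measurable_const
    refine Measurable.sub ?_ (by fun_prop)
    exact Measurable.ite (measurableSet_le (by fun_prop) (by fun_prop)) measurable_const
      measurable_const
  have hgC : ∀ y x, |g y x| ≤ 1 * (1 + C) := by
    intro y x
    simp only [hg]
    rw [abs_mul]
    have h0 : ∀ u, 0 ≤ max 0 (min C u) ∧ max 0 (min C u) ≤ C := fun u =>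
      ⟨le_max_left _ _, max_le hC0 (min_le_left _ _)⟩
    obtain ⟨a1, a2⟩ := h0 y.2.1
    obtain ⟨b1, b2⟩ := h0 y.2.2
    set p := max 0 (min C y.2.1)
    set q := max 0 (min C y.2.2)
    refine mul_le_mul ?_ ?_ (abs_nonneg _) zero_le_one
    · rw [abs_le]
      exact ⟨le_max_left _ _, max_le (by norm_num) (min_le_left _ _)⟩
    · split_ifs with c1 c2
      · rw [min_eq_right c2, abs_le]; constructor <;> linarith
      · rw [min_eq_left (not_le.mp c2).le, abs_le]; constructor <;> linarith
      · simp; linarith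
  have hclip : ∀ ω, max (-1) (min 1 (Z ω)) = Z ω := fun ω => by
    by_cases h : ω ∈ A <;> simp [hZdef, h]
  have hclipV : ∀ ω, max 0 (min C (V ω)) = V ω := fun ω => by
    rw [min_eq_right ((hVW ω).trans (hC ω)), max_eq_right (hV0 ω)]
  have hclipW : ∀ ω, max 0 (min C (W ω)) = W ω := fun ω => by
    rw [min_eq_right (hC ω), max_eq_right ((hV0 ω).trans (hVW ω))]
  have key := indep_integral μ hH he.1 hind (Y := fun ω => (Z ω, V ω, W ω))
    (hZ.prodMk (hV.prodMk hW)) hgm hgC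
  simp only [hg, hclip, hclipV, hclipW] at key
  have hl : ∫ ω in A, (if V ω < e ω then
      ((if e ω ≤ W ω then (1:ℝ) else 0) - (min (W ω) (e ω) - V ω)) else 0) ∂μ =
      ∫ ω, Z ω * (if V ω < e ω then
      ((if e ω ≤ W ω then 1 else 0) - (min (W ω) (e ω) - V ω)) else 0) ∂μ := by
    rw [← integral_indicator (hH _ hA)]
    congr 1
    funext ω
    by_cases h : ω ∈ A <;> simp [hZdef, h]
  rw [hl, key]
  have hzero : ∀ ω, ∫ x, Z ω * (if V ω < x then
      ((if x ≤ W ω then 1 else 0) - (min (W ω) x - V ω)) else 0) ∂(μ.map e) = 0 := by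
    intro ω
    rw [integral_const_mul]
    have h1 : (fun x => if V ω < x then
      ((if x ≤ W ω then (1:ℝ) else 0) - (min (W ω) x - V ω)) else 0) =
      fun x => (Set.Ioc (V ω) (W ω)).indicator 1 x -
        (if V ω < x then min (W ω) x - V ω else 0) := by
      funext x
      by_cases h : V ω < x <;> by_cases h' : x ≤ W ω <;> simp [Set.indicator, h, h']
    rw [h1, integral_sub, integral_indicator_one measurableSet_Ioc,
      exp_ioc μ he _ _ (hV0 ω) (hVW ω), exp_min μ he _ _ (hV0 ω) (hVW ω), sub_self, mul_zero]
    · exact (integrable_const (1:ℝ)).indicator measurableSet_Ioc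
    · refine Integrable.of_bound (C := W ω) ?_ (ae_of_all _ fun x => ?_)
      · refine Measurable.aestronglyMeasurable ?_
        exact Measurable.ite measurableSet_Ioi (by fun_prop) measurable_const
      · have h1 := hV0 ω
        have h2 := hVW ω
        split_ifs with h
        · have h3 := le_min h2 h.le
          have h4 := min_le_left (W ω) x
          rw [Real.norm_of_nonneg (by linarith)]
          linarith
        · simp; linarith
  simp only [hzero, integral_zero]

lemma indep_noatom {H : MeasurableSpace Ω} {m0 : MeasurableSpace Ω}
    (μ : Measure Ω) [IsProbabilityMeasure μ] (hH : H ≤ m0) {e : Ω → ℝ} (he : IsExpOne μ e)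
    (hind : Indep H (MeasurableSpace.comap e inferInstance) μ)
    {V : Ω → ℝ} (hV : Measurable[H] V) (hV0 : ∀ ω, 0 ≤ V ω) : μ {ω | e ω = V ω} = 0 := by
  have : IsProbabilityMeasure (μ.map e) := Measure.isProbabilityMeasure_map he.1.aemeasurable
  set g : ℝ → ℝ → ℝ := fun y x => if x = y then 1 else 0 with hg
  have hgm : Measurable (Function.uncurry g) :=
    Measurable.ite (measurableSet_eq_fun (by fun_prop) (by fun_prop)) measurable_const
      measurable_const
  have hgC : ∀ y x, |g y x| ≤ 1 := by
    intro y x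
    simp only [hg]
    split_ifs <;> simp
  have key := indep_integral μ hH he.1 hind hV hgm hgC
  have hpt : ∀ v, 0 ≤ v → (μ.map e).real {v} = 0 := by
    intro v hv
    by_contra hne
    have hpos : 0 < (μ.map e).real {v} := lt_of_le_of_ne measureReal_nonneg (Ne.symm hne)
    rcases hv.eq_or_lt with h0 | h0
    · have h1 : (μ.map e).real ({v} ∪ Set.Ioi v) = (μ.map e).real {v} + 1 := by
        rw [measureReal_union (by simp) measurableSet_Ioi, exp_real μ he v hv, ← h0]
        simp
      have h2 : (μ.map e).real ({v} ∪ Set.Ioi v) ≤ 1 := measureReal_le_one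
      linarith
    · have hc : Tendsto (fun u => Real.exp (-u) - Real.exp (-v)) (𝓝[<] v) (𝓝 0) := by
        have : Continuous (fun u => Real.exp (-u) - Real.exp (-v)) := by fun_prop
        have h3 := this.tendsto v
        simp only [sub_self] at h3
        exact h3.mono_left nhdsWithin_le_nhds
      have h4 : (μ.map e).real {v} ≤ 0 := by
        refine ge_of_tendsto hc ?_
        have h5 : ∀ᶠ u in 𝓝[<] v, 0 < u := by
          filter_upwards [Ioo_mem_nhdsLT h0] with u hu using hu.1
        filter_upwards [h5, self_mem_nhdsWithin] with u hu huv
        rw [← exp_ioc μ he u v hu.le (le_of_lt huv)]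
        refine measureReal_mono ?_
        intro x hx
        rw [Set.mem_singleton_iff.1 hx]
        exact ⟨huv, le_rfl⟩
      linarith
  have hr : ∀ ω, ∫ x, g (V ω) x ∂(μ.map e) = 0 := by
    intro ω
    have : g (V ω) = ({V ω} : Set ℝ).indicator 1 := by
      funext x; simp [hg, Set.indicator]
    rw [this, integral_indicator_one (measurableSet_singleton _), hpt _ (hV0 ω)]
  simp only [hr, integral_zero] at key
  have hms : MeasurableSet {ω | e ω = V ω} := measurableSet_eq_fun he.1 (hV.mono hH le_rfl)
  have h6 : (fun ω => g (V ω) (e ω)) = {ω | e ω = V ω}.indicator 1 := by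
    funext ω; simp [hg, Set.indicator]
  rw [h6, integral_indicator_one hms, measureReal_eq_zero_iff] at key
  exact key


lemma meas_of_Ioi' {m : MeasurableSpace Ω} {f : Ω → ℝ} (h : ∀ t, MeasurableSet {ω | t < f ω}) :
    Measurable f := measurable_of_Ioi h

lemma mset_lt' {m : MeasurableSpace Ω} {f g : Ω → ℝ} (hf : Measurable f) (hg : Measurable g) :
    MeasurableSet {ω | f ω < g ω} := measurableSet_lt hf hg

/-- The data of the construction. -/
structure Sys {m0 : MeasurableSpace Ω} (μ : Measure Ω) (H : ℕ → MeasurableSpace Ω)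
    (η : ℝ → Ω → ℝ) (L U : ℝ) (e : ℕ → Ω → ℝ) (l : ℕ → ℝ → ℝ) (τ : ℕ → Ω → ℝ) (a : ℕ → ℝ → ℝ) :
    Prop where
  Hle : ∀ k, H k ≤ m0
  Hmono : Monotone H
  Hnull : ∀ s, μ s = 0 → MeasurableSet[H 0] s
  ηm : ∀ k, Measurable[MeasurableSpace.prod inferInstance (H k)] (Function.uncurry η)
  ηm0 : Measurable (Function.uncurry η)
  Lpos : 0 < L
  LU : L < U
  ηL : ∀ s ω, L ≤ η s ω
  ηU : ∀ s ω, η s ω ≤ U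
  eexp : ∀ k, IsExpOne μ (e k)
  epos : ∀ k ω, 0 < e k ω
  em : ∀ k, Measurable[H (k + 1)] (e k)
  ind : ∀ k, Indep (H k) (MeasurableSpace.comap (e k) inferInstance) μ
  τ0 : ∀ ω, τ 0 ω = 0
  τm : ∀ k, Measurable[H k] (τ k)
  τlt : ∀ k ω, τ k ω < τ (k + 1) ω
  am : ∀ k, Measurable (a k)
  alow : ∀ k s, L / U ≤ a k s
  aM : ∀ k s, a k s ≤ U / L
  iff : ∀ k t ω, t < τ (k + 1) ω ↔ Lam (τ k) η (a k) t ω < e k ω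
  eq : ∀ k ω, Lam (τ k) η (a k) (τ (k + 1) ω) ω = e k ω
  fix : ∀ k s, 0 < μ.real {ω | τ k ω < s} →
    a k s * Df μ (τ k) η (a k) s = l k s * Nf μ (τ k) η (a k) s

lemma exists_sys {m0 : MeasurableSpace Ω} (μ : Measure Ω) [IsProbabilityMeasure μ]
    (H : ℕ → MeasurableSpace Ω)
    (η : ℝ → Ω → ℝ) (L U : ℝ) (e : ℕ → Ω → ℝ) (l : ℕ → ℝ → ℝ)
    (Hle : ∀ k, H k ≤ m0)
    (Hmono : Monotone H)
    (Hnull : ∀ s, μ s = 0 → MeasurableSet[H 0] s)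
    (ηm : ∀ k, Measurable[MeasurableSpace.prod inferInstance (H k)] (Function.uncurry η))
    (ηm0 : Measurable (Function.uncurry η))
    (Lpos : 0 < L) (LU : L < U) (ηL : ∀ s ω, L ≤ η s ω) (ηU : ∀ s ω, η s ω ≤ U)
    (eexp : ∀ k, IsExpOne μ (e k))
    (epos : ∀ k ω, 0 < e k ω)
    (em : ∀ k, Measurable[H (k + 1)] (e k))
    (ind : ∀ k, Indep (H k) (MeasurableSpace.comap (e k) inferInstance) μ)
    (hl : ∀ k, Measurable (l k)) (hlL : ∀ k s, L ≤ l k s) (hlU : ∀ k s, l k s ≤ U) :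
    ∃ τ a, Sys μ H η L U e l τ a := by
  have hU : 0 < U := Lpos.trans LU
  have hη0 : ∀ s ω, 0 ≤ η s ω := fun s ω => Lpos.le.trans (ηL s ω)
  have step : ∀ k (x : {τ : Ω → ℝ // Measurable[H k] τ ∧ ∀ ω, 0 ≤ τ ω}),
      ∃ y : {τ : Ω → ℝ // Measurable[H (k + 1)] τ ∧ ∀ ω, 0 ≤ τ ω}, ∃ a : ℝ → ℝ,
        (∀ ω, x.1 ω < y.1 ω) ∧ Measurable a ∧ (∀ s, L / U ≤ a s) ∧ (∀ s, a s ≤ U / L) ∧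
        (∀ t ω, t < y.1 ω ↔ Lam x.1 η a t ω < e k ω) ∧ (∀ ω, Lam x.1 η a (y.1 ω) ω = e k ω) ∧
        (∀ s, 0 < μ.real {ω | x.1 ω < s} →
          a s * Df μ x.1 η a s = l k s * Nf μ x.1 η a s) := by
    rintro k ⟨τ, hτ, hτ0⟩
    obtain ⟨a, ha1, ha2, ha3, ha4⟩ := exists_fix μ (hτ.mono (Hle k) le_rfl) hτ0 ηm0 Lpos LU ηL ηU
      (hl k) (hlL k) (hlU k)
    have ha0 : ∀ s, 0 ≤ a s := fun s => (div_pos Lpos hU).le.trans (ha2 s)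
    obtain ⟨τ', h1, h2, h3⟩ := exists_next (τ := τ) ηm0 ha1 hη0 ηU ha0 ha3 Lpos (div_pos Lpos hU)
      ηL ha2 hτ0 (e k) (epos k)
    refine ⟨⟨τ', ?_, fun ω => (hτ0 ω).trans (h1 ω).le⟩, a, h1, ha1, ha2, ha3, h2, h3, ha4⟩
    refine meas_of_Ioi' (m := H (k + 1)) fun t => ?_
    have hset : {ω | t < τ' ω} = {ω | Lam τ η a t ω < e k ω} := by
      ext ω
      exact h2 t ω
    rw [hset]
    have hLm : Measurable[H (k + 1)] (Lam τ η a t) :=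
      (Lam_meas_s10 (m := H k) hτ (ηm k) ha1 t).mono (Hmono (Nat.le_succ k)) le_rfl
    exact mset_lt' (m := H (k + 1)) hLm (em k)
  choose nx na hn1 hn2 hn3 hn4 hn5 hn6 hn7 using step
  let x0 : {τ : Ω → ℝ // Measurable[H 0] τ ∧ ∀ ω, 0 ≤ τ ω} :=
    ⟨fun _ => 0, @measurable_const _ _ _ (H 0) _, fun _ => le_rfl⟩
  let sq : ∀ k, {τ : Ω → ℝ // Measurable[H k] τ ∧ ∀ ω, 0 ≤ τ ω} :=
    fun k => Nat.rec x0 (fun k x => nx k x) k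
  exact ⟨fun k => (sq k).1, fun k => na k (sq k), Hle, Hmono, Hnull, ηm, ηm0, Lpos, LU, ηL, ηU,
    eexp, epos, em, ind, fun _ => rfl, fun k => (sq k).2.1, fun k => hn1 k (sq k),
    fun k => hn2 k (sq k), fun k => hn3 k (sq k), fun k => hn4 k (sq k), fun k => hn5 k (sq k),
    fun k => hn6 k (sq k), fun k => hn7 k (sq k)⟩

/-- The compensated indicator of the `k+1`-st jump. -/
def Nk (η : ℝ → Ω → ℝ) (e : ℕ → Ω → ℝ) (τ : ℕ → Ω → ℝ) (a : ℕ → ℝ → ℝ) (k : ℕ) (t : ℝ) (ω : Ω) : ℝ :=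
  (if τ (k + 1) ω ≤ t then 1 else 0) - min (Lam (τ k) η (a k) t ω) (e k ω)

/-- The enlarged filtration. -/
def Gs (m0 : MeasurableSpace Ω) (H : ℕ → MeasurableSpace Ω) (τ : ℕ → Ω → ℝ) (t : ℝ) :
    MeasurableSpace Ω where
  MeasurableSet' A := MeasurableSet[m0] A ∧ ∀ k, ∃ A', MeasurableSet[H k] A' ∧
    ∀ ω, t < τ (k + 1) ω → (ω ∈ A ↔ ω ∈ A')
  measurableSet_empty := ⟨@MeasurableSet.empty _ m0, fun k => ⟨∅, @MeasurableSet.empty _ (H k), by simp⟩⟩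
  measurableSet_compl A hA := ⟨@MeasurableSet.compl _ _ m0 hA.1, fun k => by
    obtain ⟨A', h1, h2⟩ := hA.2 k
    refine ⟨A'ᶜ, @MeasurableSet.compl _ _ (H k) h1, fun ω hω => ?_⟩
    simp [h2 ω hω]⟩
  measurableSet_iUnion f hf := ⟨@MeasurableSet.iUnion _ _ m0 _ _ fun n => (hf n).1, fun k => by
    choose A' h1 h2 using fun n => (hf n).2 k
    refine ⟨⋃ n, A' n, @MeasurableSet.iUnion _ _ (H k) _ _ h1, fun ω hω => ?_⟩
    simp [h2 _ ω hω]⟩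

lemma Gs_iff (m0 : MeasurableSpace Ω) (H : ℕ → MeasurableSpace Ω) (τ : ℕ → Ω → ℝ) (t : ℝ)
    (A : Set Ω) : MeasurableSet[Gs m0 H τ t] A ↔ MeasurableSet[m0] A ∧
      ∀ k, ∃ A', MeasurableSet[H k] A' ∧ ∀ ω, t < τ (k + 1) ω → (ω ∈ A ↔ ω ∈ A') := Iff.rfl

lemma Gs_mono (m0 : MeasurableSpace Ω) (H : ℕ → MeasurableSpace Ω) (τ : ℕ → Ω → ℝ) {s t : ℝ}
    (hst : s ≤ t) : Gs m0 H τ s ≤ Gs m0 H τ t := by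
  intro A hA
  rw [Gs_iff] at hA ⊢
  refine ⟨hA.1, fun k => ?_⟩
  obtain ⟨A', h1, h2⟩ := hA.2 k
  exact ⟨A', h1, fun ω hω => h2 ω (hst.trans_lt hω)⟩

lemma Gs_rc (m0 : MeasurableSpace Ω) (H : ℕ → MeasurableSpace Ω) (τ : ℕ → Ω → ℝ) (t : ℝ) (A : Set Ω)
    (hA : ∀ s, t < s → MeasurableSet[Gs m0 H τ s] A) : MeasurableSet[Gs m0 H τ t] A := by
  rw [Gs_iff]
  refine ⟨((Gs_iff _ _ _ _ _).1 (hA (t + 1) (by linarith))).1, fun k => ?_⟩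
  have h : ∀ n : ℕ, ∃ A', MeasurableSet[H k] A' ∧
      ∀ ω, t + 1 / ((n : ℝ) + 1) < τ (k + 1) ω → (ω ∈ A ↔ ω ∈ A') := fun n =>
    ((Gs_iff _ _ _ _ _).1 (hA (t + 1 / ((n : ℝ) + 1))
      (by have : (0:ℝ) < 1 / ((n : ℝ) + 1) := by positivity
          linarith))).2 k
  choose A' h1 h2 using h
  refine ⟨⋃ n, ⋂ i, A' (n + i), ?_, fun ω hω => ?_⟩
  · exact @MeasurableSet.iUnion _ _ (H k) _ _ fun n =>
      @MeasurableSet.iInter _ _ (H k) _ _ fun i => h1 _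
  · obtain ⟨n, hn⟩ := exists_nat_one_div_lt (sub_pos.2 hω)
    have h3 : ∀ i, (ω ∈ A ↔ ω ∈ A' (n + i)) := by
      intro i
      apply h2
      have : 1 / (((n + i : ℕ) : ℝ) + 1) ≤ 1 / ((n : ℝ) + 1) := by
        apply one_div_le_one_div_of_le (by positivity)
        push_cast
        have : (0:ℝ) ≤ i := Nat.cast_nonneg i
        linarith
      linarith
    simp only [Set.mem_iUnion, Set.mem_iInter]
    constructor
    · intro hωA
      exact ⟨n, fun i => (h3 i).1 hωA⟩
    · rintro ⟨p, hp⟩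
      have := hp n
      rw [add_comm] at this
      exact (h3 p).2 this


namespace Sys

section
variable {m0 : MeasurableSpace Ω} {μ : Measure Ω} {H : ℕ → MeasurableSpace Ω}
    {η : ℝ → Ω → ℝ} {L U : ℝ} {e : ℕ → Ω → ℝ} {l : ℕ → ℝ → ℝ} {τ : ℕ → Ω → ℝ} {a : ℕ → ℝ → ℝ}

lemma U0 (S : Sys μ H η L U e l τ a) : 0 < U := S.Lpos.trans S.LU

lemma η0 (S : Sys μ H η L U e l τ a) (s : ℝ) (ω : Ω) : 0 ≤ η s ω := S.Lpos.le.trans (S.ηL s ω)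

lemma a0 (S : Sys μ H η L U e l τ a) (k : ℕ) (s : ℝ) : 0 ≤ a k s :=
  (div_pos S.Lpos S.U0).le.trans (S.alow k s)

lemma tmono (S : Sys μ H η L U e l τ a) (ω : Ω) : StrictMono (fun k => τ k ω) :=
  strictMono_nat_of_lt_succ fun k => S.τlt k ω

lemma tnn (S : Sys μ H η L U e l τ a) (k : ℕ) (ω : Ω) : 0 ≤ τ k ω := by
  have := (S.tmono ω).monotone (Nat.zero_le k)
  simpa [S.τ0 ω] using this

lemma tm0 (S : Sys μ H η L U e l τ a) (k : ℕ) : Measurable (τ k) := (S.τm k).mono (S.Hle k) le_rfl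

lemma em0 (S : Sys μ H η L U e l τ a) (k : ℕ) : Measurable (e k) := (S.eexp k).1

lemma Lm (S : Sys μ H η L U e l τ a) (k : ℕ) (t : ℝ) : Measurable[H k] (Lam (τ k) η (a k) t) :=
  Lam_meas_s10 (m := H k) (S.τm k) (S.ηm k) (S.am k) t

lemma Lm0 (S : Sys μ H η L U e l τ a) (k : ℕ) (t : ℝ) : Measurable (Lam (τ k) η (a k) t) :=
  (S.Lm k t).mono (S.Hle k) le_rfl

lemma Lnn (S : Sys μ H η L U e l τ a) (k : ℕ) (t : ℝ) (ω : Ω) : 0 ≤ Lam (τ k) η (a k) t ω :=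
  Lam_nonneg_s10 S.η0 (S.a0 k) t ω

lemma Lmono (S : Sys μ H η L U e l τ a) (k : ℕ) (ω : Ω) :
    Monotone (fun t => Lam (τ k) η (a k) t ω) :=
  Lam_mono S.ηm0 (S.am k) S.η0 S.ηU (S.a0 k) (S.aM k) ω

lemma Lle (S : Sys μ H η L U e l τ a) (k : ℕ) (t : ℝ) (ht : 0 ≤ t) (ω : Ω) :
    Lam (τ k) η (a k) t ω ≤ U * (U / L) * t :=
  Lam_le S.ηm0 (S.am k) S.η0 S.ηU (S.a0 k) (S.aM k) t ht ω

lemma iff' (S : Sys μ H η L U e l τ a) (k : ℕ) (t : ℝ) (ω : Ω) :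
    τ (k + 1) ω ≤ t ↔ e k ω ≤ Lam (τ k) η (a k) t ω := by
  rw [← not_lt, S.iff, not_lt]

lemma Nk_meas (S : Sys μ H η L U e l τ a) (k : ℕ) (t : ℝ) : Measurable (Nk η e τ a k t) := by
  unfold Nk
  refine Measurable.sub ?_ ((S.Lm0 k t).min (S.em0 k))
  exact Measurable.ite (measurableSet_le (S.tm0 _) measurable_const) measurable_const
    measurable_const

lemma min_nn (S : Sys μ H η L U e l τ a) (k : ℕ) (t : ℝ) (ω : Ω) :
    0 ≤ min (Lam (τ k) η (a k) t ω) (e k ω) := le_min (S.Lnn k t ω) (S.epos k ω).le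

lemma min_int (S : Sys μ H η L U e l τ a) [IsProbabilityMeasure μ] (k : ℕ) (t : ℝ) (ht : 0 ≤ t) :
    Integrable (fun ω => min (Lam (τ k) η (a k) t ω) (e k ω)) μ := by
  refine Integrable.of_bound ((S.Lm0 k t).min (S.em0 k)).aestronglyMeasurable (U * (U / L) * t) ?_
  refine ae_of_all _ fun ω => ?_
  rw [Real.norm_of_nonneg (S.min_nn k t ω)]
  exact (min_le_left _ _).trans (S.Lle k t ht ω)

lemma ite_int (S : Sys μ H η L U e l τ a) [IsProbabilityMeasure μ] (k : ℕ) (t : ℝ) :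
    Integrable (fun ω => if τ (k + 1) ω ≤ t then (1:ℝ) else 0) μ := by
  refine Integrable.of_bound (Measurable.ite (measurableSet_le (S.tm0 _) measurable_const)
    measurable_const measurable_const).aestronglyMeasurable 1 ?_
  refine ae_of_all _ fun ω => ?_
  split_ifs <;> simp

lemma Nk_int (S : Sys μ H η L U e l τ a) [IsProbabilityMeasure μ] (k : ℕ) (t : ℝ) (ht : 0 ≤ t) :
    Integrable (Nk η e τ a k t) μ := (S.ite_int k t).sub (S.min_int k t ht)

lemma Nk_diff (S : Sys μ H η L U e l τ a) (k : ℕ) {s t : ℝ} (hst : s ≤ t) (ω : Ω) :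
    Nk η e τ a k t ω - Nk η e τ a k s ω =
      if Lam (τ k) η (a k) s ω < e k ω then ((if e k ω ≤ Lam (τ k) η (a k) t ω then 1 else 0) -
        (min (Lam (τ k) η (a k) t ω) (e k ω) - Lam (τ k) η (a k) s ω)) else 0 := by
  unfold Nk
  have h1 := S.iff' k s ω
  have h2 := S.iff' k t ω
  have h3 := S.Lmono k ω hst
  simp only at h3
  by_cases h : Lam (τ k) η (a k) s ω < e k ω
  · simp only [h1, h2, h, not_le.2 h, if_true, if_false, min_eq_left h.le]
    ring
  · have h4 := not_lt.1 h
    simp only [h1, h2, h, h4, h4.trans h3, if_true, if_false, min_eq_right h4,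
      min_eq_right (h4.trans h3)]
    ring

lemma Nk_mart_H (S : Sys μ H η L U e l τ a) [IsProbabilityMeasure μ] (k : ℕ) {s t : ℝ} (hs : 0 ≤ s)
    (hst : s ≤ t) {A : Set Ω} (hA : MeasurableSet[H k] A) :
    ∫ ω in A, (Nk η e τ a k t ω - Nk η e τ a k s ω) ∂μ = 0 := by
  rw [← indep_mart μ (S.Hle k) (S.eexp k) (S.ind k) (S.Lm k s) (S.Lm k t) (S.Lnn k s)
    (fun ω => S.Lmono k ω hst) (S.Lle k t (hs.trans hst)) hA]
  congr 1
  funext ω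
  exact S.Nk_diff k hst ω

lemma Nk_mart_G (S : Sys μ H η L U e l τ a) [IsProbabilityMeasure μ] (k : ℕ) {s t : ℝ} (hs : 0 ≤ s)
    (hst : s ≤ t) {A : Set Ω} (hA : MeasurableSet[Gs m0 H τ s] A) :
    ∫ ω in A, Nk η e τ a k t ω ∂μ = ∫ ω in A, Nk η e τ a k s ω ∂μ := by
  rw [Gs_iff] at hA
  obtain ⟨hA0, hA1⟩ := hA
  obtain ⟨A', h1, h2⟩ := hA1 k
  rw [← sub_eq_zero, ← integral_sub (S.Nk_int k t (hs.trans hst)).integrableOn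
    (S.Nk_int k s hs).integrableOn, ← S.Nk_mart_H k hs hst h1, ← integral_indicator hA0,
    ← integral_indicator (S.Hle k _ h1)]
  congr 1
  funext ω
  by_cases h : s < τ (k + 1) ω
  · have := h2 ω h
    by_cases hω : ω ∈ A'
    · simp [Set.indicator, this.2 hω, hω]
    · have h5 : ω ∉ A := fun h6 => hω (this.1 h6)
      simp [Set.indicator, h5, hω]
  · have h3 : Nk η e τ a k t ω - Nk η e τ a k s ω = 0 := by
      rw [S.Nk_diff k hst, if_neg]
      rwa [← S.iff]
    simp [Set.indicator, h3]

lemma Nk_zero (S : Sys μ H η L U e l τ a) (k : ℕ) {t : ℝ} {ω : Ω} (h : t ≤ τ k ω) :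
    Nk η e τ a k t ω = 0 := by
  have h1 := S.τlt k ω
  unfold Nk
  rw [if_neg (by linarith), Lam_eq_zero t ω h, min_eq_left (S.epos k ω).le, sub_zero]

lemma exp_id (S : Sys μ H η L U e l τ a) [IsProbabilityMeasure μ] (k : ℕ) (t : ℝ) (ht : 0 ≤ t) :
    ∫ ω, min (Lam (τ k) η (a k) t ω) (e k ω) ∂μ = μ.real {ω | τ (k + 1) ω ≤ t} := by
  have h := S.Nk_mart_H k le_rfl ht (@MeasurableSet.univ _ (H k))
  simp only [S.Nk_zero k (S.tnn k _), sub_zero, Measure.restrict_univ] at h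
  unfold Nk at h
  rw [integral_sub (S.ite_int k t) (S.min_int k t ht)] at h
  have h2 : ∫ ω, (if τ (k + 1) ω ≤ t then (1:ℝ) else 0) ∂μ = μ.real {ω | τ (k + 1) ω ≤ t} := by
    rw [← integral_indicator_one (measurableSet_le (S.tm0 _) measurable_const)]
    congr 1
  linarith

lemma min_sum (S : Sys μ H η L U e l τ a) (n : ℕ) (t : ℝ) (ht : 0 ≤ t) (ω : Ω) :
    ∑ k ∈ Finset.range n, min (Lam (τ k) η (a k) t ω) (e k ω) ≤ U * (U / L) * t := by
  have hI : ∀ k, IntegrableOn (fun r => if τ k ω < r ∧ r ≤ τ (k + 1) ω then η r ω * a k r else 0)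
      (Set.Ioc 0 t) := by
    intro k
    refine Measure.integrableOn_of_bounded (M := U * (U / L)) (by simp) ?_ ?_
    · refine (Measurable.ite ?_ ?_ measurable_const).aestronglyMeasurable
      · exact measurableSet_Ioc
      · exact (S.ηm0.comp (measurable_id.prodMk measurable_const)).mul (S.am k)
    · refine ae_of_all _ fun r => ?_
      have h0 : 0 ≤ U * (U / L) := mul_nonneg S.U0.le (div_pos S.U0 S.Lpos).le
      split_ifs
      · rw [Real.norm_of_nonneg (mul_nonneg (S.η0 _ _) (S.a0 _ _))]
        exact mul_le_mul (S.ηU _ _) (S.aM _ _) (S.a0 _ _) S.U0.le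
      · simpa using h0
  simp_rw [fun k => (cell_integral (S.iff k) (S.eq k) t ω).symm]
  rw [← integral_finsetSum _ fun k _ => hI k]
  have h0 : 0 ≤ U * (U / L) := mul_nonneg S.U0.le (div_pos S.U0 S.Lpos).le
  have : ∫ r in Set.Ioc 0 t, U * (U / L) = U * (U / L) * t := by
    simp [ht, mul_comm]
  rw [← this]
  refine setIntegral_mono (integrable_finsetSum _ fun k _ => hI k)
      continuous_const.integrableOn_Ioc fun r => ?_
  simp only
  by_cases hex : ∃ j, τ j ω < r ∧ r ≤ τ (j + 1) ω
  · obtain ⟨j, hj⟩ := hex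
    have hz : ∀ k, k ≠ j → ¬ (τ k ω < r ∧ r ≤ τ (k + 1) ω) := by
      rintro k hk ⟨h1, h2⟩
      rcases lt_or_gt_of_ne hk with h | h
      · have := (S.tmono ω).monotone (Nat.succ_le_of_lt h)
        simp only [Nat.succ_eq_add_one] at this
        linarith [hj.1]
      · have := (S.tmono ω).monotone (Nat.succ_le_of_lt h)
        simp only [Nat.succ_eq_add_one] at this
        linarith [hj.2]
    have h3 : ∀ k, (if τ k ω < r ∧ r ≤ τ (k + 1) ω then η r ω * a k r else 0) ≤
        if k = j then U * (U / L) else 0 := by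
      intro k
      by_cases hk : k = j
      · subst hk
        simp only [hj.1, hj.2, and_self, if_true]
        exact mul_le_mul (S.ηU _ _) (S.aM _ _) (S.a0 _ _) S.U0.le
      · rw [if_neg (hz k hk), if_neg hk]
    refine (Finset.sum_le_sum fun k _ => h3 k).trans ?_
    rw [Finset.sum_ite_eq']
    split_ifs
    · exact le_rfl
    · exact h0
  · push Not at hex
    rw [Finset.sum_eq_zero]
    · exact h0
    · intro k _
      rw [if_neg]
      rintro ⟨h1, h2⟩
      exact absurd (hex k h1) (not_lt.2 h2)

lemma summ (S : Sys μ H η L U e l τ a) [IsProbabilityMeasure μ] (t : ℝ) (ht : 0 ≤ t) :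
    Summable (fun k => μ.real {ω | τ (k + 1) ω ≤ t}) := by
  refine summable_of_sum_range_le (c := U * (U / L) * t) (fun _ => measureReal_nonneg) fun n => ?_
  simp_rw [fun k => (S.exp_id k t ht).symm]
  rw [← integral_finsetSum _ fun k _ => S.min_int k t ht]
  have : ∫ ω, U * (U / L) * t ∂μ = U * (U / L) * t := by simp
  rw [← this]
  exact integral_mono (integrable_finsetSum _ fun k _ => S.min_int k t ht) (integrable_const _)
    fun ω => S.min_sum n t ht ω

lemma nonexpl (S : Sys μ H η L U e l τ a) [IsProbabilityMeasure μ] :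
    ∀ᵐ ω ∂μ, Tendsto (fun k => τ k ω) atTop atTop := by
  have h : ∀ n : ℕ, ∀ᵐ ω ∂μ, ∀ᶠ k in atTop, ω ∉ {ω | τ (k + 1) ω ≤ n} := by
    intro n
    refine ae_eventually_notMem ?_
    have := (S.summ n (Nat.cast_nonneg n)).tsum_ofReal_ne_top
    simpa [Measure.real] using this
  rw [← ae_all_iff] at h
  filter_upwards [h] with ω hω
  refine (S.tmono ω).monotone.tendsto_atTop_atTop fun b => ?_
  obtain ⟨n, hn⟩ := exists_nat_ge b
  obtain ⟨k, hk⟩ := (hω n).exists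
  refine ⟨k + 1, ?_⟩
  simp at hk
  linarith

end

end Sys

namespace Sys

section
variable {m0 : MeasurableSpace Ω} {μ : Measure Ω} {H : ℕ → MeasurableSpace Ω}
    {η : ℝ → Ω → ℝ} {L U : ℝ} {e : ℕ → Ω → ℝ} {l : ℕ → ℝ → ℝ} {τ : ℕ → Ω → ℝ} {a : ℕ → ℝ → ℝ}

lemma null0 (S : Sys μ H η L U e l τ a) {s : Set Ω} (hs : μ s = 0) : MeasurableSet s :=
  S.Hle 0 _ (S.Hnull s hs)

lemma nullG (S : Sys μ H η L U e l τ a) {s : Set Ω} (hs : μ s = 0) (t : ℝ) :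
    MeasurableSet[Gs m0 H τ t] s := by
  rw [Gs_iff]
  exact ⟨S.null0 hs, fun k => ⟨s, S.Hmono (Nat.zero_le k) _ (S.Hnull s hs), fun _ _ => Iff.rfl⟩⟩

lemma H0G (S : Sys μ H η L U e l τ a) (t : ℝ) : H 0 ≤ Gs m0 H τ t := by
  intro s hs
  rw [Gs_iff]
  exact ⟨S.Hle 0 _ hs, fun k => ⟨s, S.Hmono (Nat.zero_le k) _ hs, fun _ _ => Iff.rfl⟩⟩

lemma expl_null (S : Sys μ H η L U e l τ a) [IsProbabilityMeasure μ] (t : ℝ) :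
    μ {ω | ∀ j, τ (j + 1) ω ≤ t} = 0 := by
  refine measure_mono_null (fun ω hω => ?_) (ae_iff.1 S.nonexpl)
  intro h
  obtain ⟨k, hk⟩ := (h.eventually (eventually_gt_atTop t)).exists
  have := hω k
  have h2 := S.τlt k ω
  linarith

lemma meas_G (S : Sys μ H η L U e l τ a) [IsProbabilityMeasure μ] {β : Type*} [MeasurableSpace β]
    {t : ℝ} {f : Ω → β} (g : ℕ → Ω → β) (hg : ∀ j, Measurable[H j] (g j))
    (h : ∀ j ω, t < τ (j + 1) ω → f ω = g j ω) : Measurable[Gs m0 H τ t] f := by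
  intro B hB
  rw [Gs_iff]
  refine ⟨?_, fun k => ⟨g k ⁻¹' B, hg k hB, fun ω hω => by simp [h k ω hω]⟩⟩
  have h1 : f ⁻¹' B = (⋃ j, ({ω | t < τ (j + 1) ω} ∩ g j ⁻¹' B)) ∪
      (f ⁻¹' B ∩ {ω | ∀ j, τ (j + 1) ω ≤ t}) := by
    ext ω
    simp only [Set.mem_preimage, Set.mem_union, Set.mem_iUnion, Set.mem_inter_iff,
      Set.mem_ofPred_eq]
    constructor
    · intro hω
      by_cases hj : ∃ j, t < τ (j + 1) ω
      · obtain ⟨j, hj⟩ := hj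
        exact Or.inl ⟨j, hj, by rwa [← h j ω hj]⟩
      · push Not at hj
        exact Or.inr ⟨hω, hj⟩
    · rintro (⟨j, h2, h3⟩ | h2)
      · rwa [h j ω h2]
      · exact h2.1
  rw [h1]
  refine MeasurableSet.union (MeasurableSet.iUnion fun j => ?_) ?_
  · exact (measurableSet_lt measurable_const (S.tm0 _)).inter (S.Hle j _ (hg j hB))
  · exact S.null0 (measure_mono_null Set.inter_subset_right (S.expl_null t))

lemma countX_eq (S : Sys μ H η L U e l τ a) (j : ℕ) {t : ℝ} {ω : Ω} (h : t < τ (j + 1) ω) :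
    countX τ t ω = ∑ k ∈ Finset.range j, if τ (k + 1) ω ≤ t then 1 else 0 := by
  unfold countX
  rw [← Finset.card_filter]
  refine Nat.subtype_card _ fun k => ?_
  simp only [Finset.mem_filter, Finset.mem_range, and_iff_right_iff_imp]
  intro hk
  by_contra hc
  have := (S.tmono ω).monotone (Nat.succ_le_succ (not_lt.1 hc))
  simp only [Nat.succ_eq_add_one] at this
  linarith

lemma countXminus_eq (S : Sys μ H η L U e l τ a) (j : ℕ) {t : ℝ} {ω : Ω} (h1 : τ j ω < t)
    (h : t ≤ τ (j + 1) ω) : countXminus τ t ω = j := by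
  unfold countXminus
  conv_rhs => rw [← Finset.card_range j]
  refine Nat.subtype_card _ fun k => ?_
  simp only [Finset.mem_range]
  constructor
  · intro hk
    have := (S.tmono ω).monotone (Nat.succ_le_of_lt hk)
    simp only [Nat.succ_eq_add_one] at this
    linarith
  · intro hk
    by_contra hc
    have := (S.tmono ω).monotone (Nat.succ_le_succ (not_lt.1 hc))
    simp only [Nat.succ_eq_add_one] at this
    linarith

lemma countX_meas (S : Sys μ H η L U e l τ a) [IsProbabilityMeasure μ] (t : ℝ) :
    Measurable[Gs m0 H τ t] (fun ω => countX τ t ω) := by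
  refine S.meas_G (fun j ω => ∑ k ∈ Finset.range j, if τ (k + 1) ω ≤ t then 1 else 0) (fun j => ?_)
    fun j ω h => S.countX_eq j h
  refine Finset.measurable_sum (m := H j) _ fun k hk => ?_
  have h1 : Measurable[H j] (τ (k + 1)) :=
    (S.τm (k + 1)).mono (S.Hmono (Nat.succ_le_of_lt (Finset.mem_range.1 hk))) le_rfl
  have h2 : MeasurableSet[H j] {ω | τ (k + 1) ω ≤ t} := h1 measurableSet_Iic
  exact Measurable.ite (m := H j) h2 (@measurable_const _ _ _ (H j) _)
    (@measurable_const _ _ _ (H j) _)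

lemma jump_meas (S : Sys μ H η L U e l τ a) (k : ℕ) (t : ℝ) :
    MeasurableSet[Gs m0 H τ t] {ω | τ k ω ≤ t} := by
  rw [Gs_iff]
  refine ⟨measurableSet_le (S.tm0 _) measurable_const, fun j => ?_⟩
  rcases le_or_gt k j with h | h
  · have h1 : Measurable[H j] (τ k) := (S.τm k).mono (S.Hmono h) le_rfl
    exact ⟨_, h1 measurableSet_Iic, fun _ _ => Iff.rfl⟩
  · refine ⟨∅, @MeasurableSet.empty _ (H j), fun ω hω => ?_⟩
    have := (S.tmono ω).monotone (Nat.succ_le_of_lt h)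
    simp only [Nat.succ_eq_add_one] at this
    simp only [Set.mem_ofPred_eq, Set.mem_empty_iff_false, iff_false, not_le]
    linarith

lemma Nk_later (S : Sys μ H η L U e l τ a) {j k : ℕ} (hk : j < k) {t : ℝ} {ω : Ω}
    (h : t < τ (j + 1) ω) : Nk η e τ a k t ω = 0 := by
  refine S.Nk_zero k ?_
  have := (S.tmono ω).monotone (Nat.succ_le_of_lt hk)
  simp only [Nat.succ_eq_add_one] at this
  linarith

lemma tsum_eq (S : Sys μ H η L U e l τ a) (j : ℕ) {t : ℝ} {ω : Ω} (h : t < τ (j + 1) ω) :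
    ∑' k, Nk η e τ a k t ω = ∑ k ∈ Finset.range (j + 1), Nk η e τ a k t ω := by
  refine tsum_eq_sum fun k hk => S.Nk_later (j := j) ?_ h
  simp at hk
  omega

lemma tsum_meas (S : Sys μ H η L U e l τ a) [IsProbabilityMeasure μ] (t : ℝ) :
    Measurable[Gs m0 H τ t] (fun ω => ∑' k, Nk η e τ a k t ω) := by
  refine S.meas_G (fun j ω => (∑ k ∈ Finset.range j, Nk η e τ a k t ω) - Lam (τ j) η (a j) t ω)
    (fun j => ?_) fun j ω h => ?_
  · refine Measurable.sub (m := H j) (Finset.measurable_sum (m := H j) _ fun k hk => ?_) (S.Lm j t)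
    have hkj := Finset.mem_range.1 hk
    have h1 : Measurable[H j] (τ (k + 1)) :=
      (S.τm (k + 1)).mono (S.Hmono (Nat.succ_le_of_lt hkj)) le_rfl
    have h2 : MeasurableSet[H j] {ω | τ (k + 1) ω ≤ t} := h1 measurableSet_Iic
    have h3 : Measurable[H j] (Lam (τ k) η (a k) t) := (S.Lm k t).mono (S.Hmono hkj.le) le_rfl
    have h4 : Measurable[H j] (e k) :=
      (S.em k).mono (S.Hmono (Nat.succ_le_of_lt hkj)) le_rfl
    exact Measurable.sub (m := H j) (Measurable.ite (m := H j) h2 (@measurable_const _ _ _ (H j) _)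
      (@measurable_const _ _ _ (H j) _)) (Measurable.min h3 h4)
  · rw [S.tsum_eq j h, Finset.sum_range_succ]
    have : Nk η e τ a j t ω = - Lam (τ j) η (a j) t ω := by
      unfold Nk
      rw [if_neg (not_le.2 h), min_eq_left ((S.iff j t ω).1 h).le, zero_sub]
    rw [this]
    ring

lemma Gs_le (m0 : MeasurableSpace Ω) (H : ℕ → MeasurableSpace Ω) (τ : ℕ → Ω → ℝ) (t : ℝ) :
    Gs m0 H τ t ≤ m0 := fun A hA => ((Gs_iff _ _ _ _ _).1 hA).1

lemma norm_summ (S : Sys μ H η L U e l τ a) [IsProbabilityMeasure μ] (t : ℝ) (ht : 0 ≤ t) :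
    Summable fun k => ∫ ω, ‖Nk η e τ a k t ω‖ ∂μ := by
  refine Summable.of_nonneg_of_le (fun k => integral_nonneg fun ω => norm_nonneg _) (fun k => ?_)
    ((S.summ t ht).mul_left 2)
  have h2 : ∫ ω, (if τ (k + 1) ω ≤ t then (1:ℝ) else 0) ∂μ = μ.real {ω | τ (k + 1) ω ≤ t} := by
    rw [← integral_indicator_one (measurableSet_le (S.tm0 _) measurable_const)]
    congr 1
  have h3 : 2 * μ.real {ω | τ (k + 1) ω ≤ t} = ∫ ω, ((if τ (k + 1) ω ≤ t then (1:ℝ) else 0) +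
      min (Lam (τ k) η (a k) t ω) (e k ω)) ∂μ := by
    rw [integral_add (S.ite_int k t) (S.min_int k t ht), h2, S.exp_id k t ht]
    ring
  rw [h3]
  refine integral_mono (S.Nk_int k t ht).norm ((S.ite_int k t).add (S.min_int k t ht)) fun ω => ?_
  unfold Nk
  have h4 := S.min_nn k t ω
  refine (norm_sub_le _ _).trans ?_
  rw [Real.norm_of_nonneg h4, Real.norm_of_nonneg (by split_ifs <;> norm_num)]

lemma tsum_int (S : Sys μ H η L U e l τ a) [IsProbabilityMeasure μ] (t : ℝ) (ht : 0 ≤ t) :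
    Integrable (fun ω => ∑' k, Nk η e τ a k t ω) μ := by
  refine ⟨((S.tsum_meas t).mono (Gs_le _ _ _ _) le_rfl).aestronglyMeasurable, ?_⟩
  have h1 : ∫⁻ ω, ‖∑' k, Nk η e τ a k t ω‖ₑ ∂μ ≤ ∫⁻ ω, ∑' k, ‖Nk η e τ a k t ω‖ₑ ∂μ :=
    lintegral_mono fun ω => enorm_tsum_le_tsum_enorm
  refine lt_of_le_of_lt h1 ?_
  rw [lintegral_tsum fun k => (S.Nk_meas k t).enorm.aemeasurable]
  simp_rw [fun k => (ofReal_integral_norm_eq_lintegral_enorm (S.Nk_int k t ht)).symm]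
  exact (S.norm_summ t ht).tsum_ofReal_lt_top

lemma tsum_set (S : Sys μ H η L U e l τ a) [IsProbabilityMeasure μ] {s t : ℝ} (hs : 0 ≤ s)
    (hst : s ≤ t) {A : Set Ω} (hA : MeasurableSet[Gs m0 H τ s] A) :
    ∫ ω in A, (∑' k, Nk η e τ a k t ω) ∂μ = ∫ ω in A, (∑' k, Nk η e τ a k s ω) ∂μ := by
  have key : ∀ t, 0 ≤ t → ∑' k, ∫ ω in A, Nk η e τ a k t ω ∂μ =
      ∫ ω in A, (∑' k, Nk η e τ a k t ω) ∂μ := by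
    intro t ht
    refine integral_tsum_of_summable_integral_norm (fun k => (S.Nk_int k t ht).integrableOn) ?_
    refine Summable.of_nonneg_of_le (fun k => integral_nonneg fun ω => norm_nonneg _) (fun k => ?_)
      (S.norm_summ t ht)
    exact setIntegral_le_integral (S.Nk_int k t ht).norm (ae_of_all _ fun ω => norm_nonneg _)
  rw [← key t (hs.trans hst), ← key s hs]
  congr 1
  funext k
  exact S.Nk_mart_G k hs hst hA

end

end Sys

lemma sect_meas {m : MeasurableSpace Ω} {η : ℝ → Ω → ℝ} (hη : Measurable (Function.uncurry η))
    (s : ℝ) : Measurable (η s) := hη.comp (measurable_const.prodMk measurable_id)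

lemma condExp_fiber {m0 : MeasurableSpace Ω} (μ : Measure Ω) [IsProbabilityMeasure μ] {f : Ω → ℝ}
    (hf : Integrable f μ) {Y : Ω → ℕ} (hY : Measurable Y) :
    ∀ ω, (μ[f | MeasurableSpace.comap Y inferInstance]) ω * μ.real {x | Y x = Y ω} =
      ∫ x in {x | Y x = Y ω}, f x ∂μ := by
  intro ω
  have hm : MeasurableSpace.comap Y inferInstance ≤ m0 := hY.comap_le
  have hs : MeasurableSet[MeasurableSpace.comap Y inferInstance] {x | Y x = Y ω} :=
    ⟨{Y ω}, measurableSet_singleton _, rfl⟩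
  rw [← setIntegral_condExp hm hf hs]
  have hg : Measurable[MeasurableSpace.comap Y inferInstance]
      (μ[f | MeasurableSpace.comap Y inferInstance]) := stronglyMeasurable_condExp.measurable
  set g := μ[f | MeasurableSpace.comap Y inferInstance] with hgdef
  have hconst : ∀ x ∈ {x | Y x = Y ω}, g x = g ω := by
    intro x hx
    obtain ⟨T, -, hT⟩ := hg (measurableSet_singleton (g ω))
    have h1 : ω ∈ Y ⁻¹' T := by rw [hT]; simp
    have h2 : x ∈ Y ⁻¹' T := by
      have hx' : Y x = Y ω := hx
      simp only [Set.mem_preimage] at h1 ⊢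
      rwa [hx']
    rw [hT] at h2
    simpa using h2
  rw [setIntegral_congr_fun (hm _ hs) hconst, setIntegral_const, smul_eq_mul, mul_comm]

namespace Sys

section
variable {m0 : MeasurableSpace Ω} {μ : Measure Ω} {H : ℕ → MeasurableSpace Ω}
    {η : ℝ → Ω → ℝ} {L U : ℝ} {e : ℕ → Ω → ℝ} {l : ℕ → ℝ → ℝ} {τ : ℕ → Ω → ℝ} {a : ℕ → ℝ → ℝ}

lemma cell_int (S : Sys μ H η L U e l τ a) (k : ℕ) (t : ℝ) (ω : Ω) :
    IntegrableOn (fun r => if τ k ω < r ∧ r ≤ τ (k + 1) ω then η r ω * a k r else 0)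
      (Set.Ioc 0 t) := by
  refine Measure.integrableOn_of_bounded (M := U * (U / L)) (by simp) ?_ ?_
  · refine (Measurable.ite ?_ ?_ measurable_const).aestronglyMeasurable
    · exact measurableSet_Ioc
    · exact (S.ηm0.comp (measurable_id.prodMk measurable_const)).mul (S.am k)
  · refine ae_of_all _ fun r => ?_
    have h0 : 0 ≤ U * (U / L) := mul_nonneg S.U0.le (div_pos S.U0 S.Lpos).le
    split_ifs
    · rw [Real.norm_of_nonneg (mul_nonneg (S.η0 _ _) (S.a0 _ _))]
      exact mul_le_mul (S.ηU _ _) (S.aM _ _) (S.a0 _ _) S.U0.le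
    · simpa using h0

lemma cell_unique (S : Sys μ H η L U e l τ a) {j k : ℕ} {r : ℝ} {ω : Ω}
    (hj : τ j ω < r ∧ r ≤ τ (j + 1) ω) (hk : τ k ω < r ∧ r ≤ τ (k + 1) ω) : k = j := by
  rw [← S.countXminus_eq j hj.1 hj.2, ← S.countXminus_eq k hk.1 hk.2]

lemma cell_exists (S : Sys μ H η L U e l τ a) {j : ℕ} {r : ℝ} (hr : 0 < r) {ω : Ω}
    (hj : r ≤ τ (j + 1) ω) : ∃ k, k ≤ j ∧ τ k ω < r ∧ r ≤ τ (k + 1) ω := by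
  induction j with
  | zero => exact ⟨0, le_rfl, by rwa [S.τ0], hj⟩
  | succ j ih =>
    by_cases h : r ≤ τ (j + 1) ω
    · obtain ⟨k, h1, h2⟩ := ih h
      exact ⟨k, h1.trans (Nat.le_succ j), h2⟩
    · exact ⟨j + 1, le_rfl, not_le.1 h, hj⟩

lemma Xminus_iff (S : Sys μ H η L U e l τ a) {s : ℝ} (hs : 0 < s) {ω : Ω}
    (hω : ¬ ∀ j, τ (j + 1) ω ≤ s) (k : ℕ) :
    countXminus τ s ω = k ↔ τ k ω < s ∧ s ≤ τ (k + 1) ω := by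
  push Not at hω
  obtain ⟨j, hj⟩ := hω
  obtain ⟨i, -, hi⟩ := S.cell_exists hs hj.le
  constructor
  · intro h
    rw [S.countXminus_eq i hi.1 hi.2] at h
    rwa [← h]
  · intro h
    exact S.countXminus_eq k h.1 h.2

lemma Xminus_meas (S : Sys μ H η L U e l τ a) [IsProbabilityMeasure μ] {s : ℝ} (hs : 0 < s) :
    Measurable (countXminus τ s) := by
  refine measurable_to_countable' fun k => ?_
  have h1 : countXminus τ s ⁻¹' {k} =
      ({ω | τ k ω < s ∧ s ≤ τ (k + 1) ω} \ {ω | ∀ j, τ (j + 1) ω ≤ s}) ∪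
      (countXminus τ s ⁻¹' {k} ∩ {ω | ∀ j, τ (j + 1) ω ≤ s}) := by
    ext ω
    by_cases h : ∀ j, τ (j + 1) ω ≤ s
    · simp [h]
    · have := S.Xminus_iff hs h k
      simp only [Set.mem_preimage, Set.mem_singleton_iff, Set.mem_union, Set.mem_sdiff,
        Set.mem_inter_iff, Set.mem_ofPred_eq, h, this, not_false_eq_true, and_true, and_false,
        or_false]
  rw [h1]
  refine MeasurableSet.union (MeasurableSet.diff ?_ (S.null0 (S.expl_null s)))
    (S.null0 (measure_mono_null Set.inter_subset_right (S.expl_null s)))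
  exact (measurableSet_lt (S.tm0 _) measurable_const).inter
    (measurableSet_le measurable_const (S.tm0 _))

lemma fiber_ae (S : Sys μ H η L U e l τ a) [IsProbabilityMeasure μ] {s : ℝ} (hs : 0 < s) (k : ℕ) :
    ({ω | countXminus τ s ω = k} : Set Ω) =ᵐ[μ]
      ({ω | τ k ω < s ∧ Lam (τ k) η (a k) s ω < e k ω} : Set Ω) := by
  have h1 : ∀ᵐ ω ∂μ, ¬ ∀ j, τ (j + 1) ω ≤ s := by
    rw [ae_iff]
    simpa using S.expl_null s
  have h2 : ∀ᵐ ω ∂μ, e k ω ≠ Lam (τ k) η (a k) s ω := by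
    rw [ae_iff]
    simpa using indep_noatom μ (S.Hle k) (S.eexp k) (S.ind k) (S.Lm k s) (S.Lnn k s)
  rw [eventuallyEq_set]
  filter_upwards [h1, h2] with ω h3 h4
  change countXminus τ s ω = k ↔ (τ k ω < s ∧ Lam (τ k) η (a k) s ω < e k ω)
  rw [S.Xminus_iff hs h3 k]
  constructor
  · rintro ⟨h5, h6⟩
    refine ⟨h5, lt_of_le_of_ne ?_ h4.symm⟩
    rw [← S.eq k ω]
    exact S.Lmono k ω h6
  · rintro ⟨h5, h6⟩
    exact ⟨h5, ((S.iff k s ω).2 h6).le⟩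

lemma fiber_integral (S : Sys μ H η L U e l τ a) [IsProbabilityMeasure μ] {s : ℝ} (hs : 0 < s)
    (k : ℕ) {Z : Ω → ℝ} (hZ : Measurable[H k] Z) {C : ℝ} (hC : ∀ ω, |Z ω| ≤ C) :
    ∫ ω in {ω | countXminus τ s ω = k}, Z ω ∂μ = ∫ ω, Z ω * wgt (τ k) η (a k) s ω ∂μ := by
  have hset : MeasurableSet {ω | τ k ω < s ∧ Lam (τ k) η (a k) s ω < e k ω} :=
    (measurableSet_lt (S.tm0 _) measurable_const).inter (measurableSet_lt (S.Lm0 k s) (S.em0 k))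
  rw [setIntegral_congr_set (S.fiber_ae hs k), ← integral_indicator hset]
  have hset' : MeasurableSet[H k] {ω | τ k ω < s} := (S.τm k) measurableSet_Iio
  have key := indep_exp μ (S.Hle k) (S.eexp k) (S.ind k)
    (Z := {ω | τ k ω < s}.indicator Z) (V := Lam (τ k) η (a k) s)
    (hZ.indicator hset') (S.Lm k s) (S.Lnn k s) (C := C) (by
      intro ω
      by_cases h : τ k ω < s
      · simpa [Set.indicator, h] using hC ω
      · simpa [Set.indicator, h] using (abs_nonneg _).trans (hC ω))
  have e1 : ∀ ω, ({ω | τ k ω < s ∧ Lam (τ k) η (a k) s ω < e k ω}.indicator Z) ω =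
      if Lam (τ k) η (a k) s ω < e k ω then {ω | τ k ω < s}.indicator Z ω else 0 := by
    intro ω
    by_cases h : τ k ω < s <;> by_cases h' : Lam (τ k) η (a k) s ω < e k ω <;>
      simp [Set.indicator, h, h']
  have e2 : ∀ ω, Z ω * wgt (τ k) η (a k) s ω =
      {ω | τ k ω < s}.indicator Z ω * Real.exp (-Lam (τ k) η (a k) s ω) := by
    intro ω
    by_cases h : τ k ω < s <;> simp [Set.indicator, h, wgt]
  simp_rw [e1, e2]
  exact key

lemma ηmk (S : Sys μ H η L U e l τ a) (k : ℕ) (s : ℝ) : Measurable[H k] (η s) :=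
  sect_meas (m := H k) (S.ηm k) s

lemma fiber_N (S : Sys μ H η L U e l τ a) [IsProbabilityMeasure μ] {s : ℝ} (hs : 0 < s)
    (k : ℕ) : μ.real {ω | countXminus τ s ω = k} = Nf μ (τ k) η (a k) s := by
  have := S.fiber_integral hs k (Z := fun _ => 1) (@measurable_const _ _ _ (H k) _) (C := 1) (by simp)
  simpa [Nf] using this

lemma fiber_D (S : Sys μ H η L U e l τ a) [IsProbabilityMeasure μ] {s : ℝ} (hs : 0 < s)
    (k : ℕ) : ∫ ω in {ω | countXminus τ s ω = k}, η s ω ∂μ = Df μ (τ k) η (a k) s :=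
  S.fiber_integral hs k (S.ηmk k s) (C := U) (fun ω => by
    rw [abs_of_nonneg (S.η0 s ω)]; exact S.ηU s ω)

lemma pos_ae (S : Sys μ H η L U e l τ a) [IsProbabilityMeasure μ] :
    ∀ᵐ ω ∂μ, ∀ k s, τ k ω < s → 0 < μ.real {ω | τ k ω < s} := by
  have h : ∀ k, ∀ q : ℚ, ∀ᵐ ω ∂μ, τ k ω < q → 0 < μ.real {ω | τ k ω < q} := by
    intro k q
    by_cases h0 : μ {ω | τ k ω < q} = 0
    · have : ∀ᵐ ω ∂μ, ¬ (τ k ω < q) := by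
        rw [ae_iff]
        simpa using h0
      filter_upwards [this] with ω hω h
      exact absurd h hω
    · refine ae_of_all _ fun ω _ => ?_
      exact ENNReal.toReal_pos h0 (measure_ne_top _ _)
  have h' : ∀ k, ∀ᵐ ω ∂μ, ∀ q : ℚ, τ k ω < q → 0 < μ.real {ω | τ k ω < q} :=
    fun k => ae_all_iff.2 (h k)
  filter_upwards [ae_all_iff.2 h'] with ω hω k s hs
  obtain ⟨q, hq1, hq2⟩ := exists_rat_btwn hs
  refine (hω k q hq1).trans_le (measureReal_mono fun x hx => ?_)
  exact lt_trans hx hq2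

lemma ratio (S : Sys μ H η L U e l τ a) [IsProbabilityMeasure μ] {ηo : ℝ → Ω → ℝ} {s : ℝ}
    (hs : 0 < s) (hη : ηo s =ᵐ[μ] η s) {k : ℕ} {ω : Ω} (hω1 : τ k ω < s) (hω2 : s ≤ τ (k + 1) ω)
    (hpos : 0 < μ.real {ω | τ k ω < s}) :
    η s ω / (μ[ηo s | MeasurableSpace.comap (countXminus τ s) inferInstance]) ω * l k s =
      η s ω * a k s := by
  have hIntv : Integrable (η s) μ := by
    refine Integrable.of_bound ((S.ηmk 0 s).mono (S.Hle 0) le_rfl).aestronglyMeasurable U ?_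
    refine ae_of_all _ fun ω => ?_
    rw [Real.norm_of_nonneg (S.η0 s ω)]
    exact S.ηU s ω
  have hIntO : Integrable (ηo s) μ := hIntv.congr hη.symm
  have h1 := condExp_fiber μ hIntO (S.Xminus_meas hs) ω
  rw [S.countXminus_eq k hω1 hω2, S.fiber_N hs k] at h1
  rw [setIntegral_congr_ae (g := η s) (by exact (S.Xminus_meas hs) (measurableSet_singleton k))
    (by filter_upwards [hη] with x hx _ using hx), S.fiber_D hs k] at h1
  obtain ⟨b1, b2, b3, b4⟩ := ND_bounds μ (S.tm0 k) (S.tnn k) S.ηm0 (S.am k) S.Lpos S.ηL S.ηU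
    (S.a0 k) (S.aM k) s
  have hN : 0 < Nf μ (τ k) η (a k) s := lt_of_lt_of_le (mul_pos hpos (Real.exp_pos _)) b1
  have hD : 0 < Df μ (τ k) η (a k) s := lt_of_lt_of_le (mul_pos S.Lpos hN) b3
  have hfix := S.fix k s hpos
  set c := (μ[ηo s | MeasurableSpace.comap (countXminus τ s) inferInstance]) ω
  have hc : c ≠ 0 := by
    rintro hc
    rw [hc, zero_mul] at h1
    linarith
  rw [← h1] at hfix
  have h5 : a k s * c = l k s := by
    have : (a k s * c - l k s) * Nf μ (τ k) η (a k) s = 0 := by linarith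
    rcases mul_eq_zero.1 this with h | h
    · linarith
    · linarith
  rw [← h5]
  field_simp

lemma path (S : Sys μ H η L U e l τ a) [IsProbabilityMeasure μ] {ηo : ℝ → Ω → ℝ}
    {lam : ℝ → ℕ → ℝ}
    (hlam : ∀ k, ∀ᵐ s ∂(volume.restrict (Set.Ioi (0:ℝ))), lam s k = l k s)
    (h1 : ∀ᵐ s ∂(volume.restrict (Set.Ioi (0:ℝ))), ηo s =ᵐ[μ] η s)
    (h2 : ∀ᵐ ω ∂μ, ∀ᵐ s ∂(volume.restrict (Set.Ioi (0:ℝ))), ηo s ω = η s ω) :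
    ∀ᵐ ω ∂μ, ∀ t : ℝ, (countX τ t ω : ℝ) - ∫ s in Set.Ioc 0 t, ηo s ω /
      (μ[ηo s | MeasurableSpace.comap (countXminus τ s) inferInstance]) ω *
        lam s (countXminus τ s ω) = ∑' k, Nk η e τ a k t ω := by
  filter_upwards [h2, S.pos_ae, S.nonexpl] with ω h3 h4 h5 t
  obtain ⟨j, hj⟩ : ∃ j, t < τ (j + 1) ω := by
    obtain ⟨k, hk⟩ := (h5.eventually (eventually_gt_atTop t)).exists
    exact ⟨k, hk.trans (S.τlt k ω)⟩
  rw [S.tsum_eq j hj, S.countX_eq (j + 1) (hj.trans (S.τlt (j + 1) ω))]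
  unfold Nk
  rw [Finset.sum_sub_distrib]
  push_cast
  congr 1
  simp_rw [fun k => (cell_integral (S.iff k) (S.eq k) t ω).symm]
  rw [← integral_finsetSum _ fun k _ => S.cell_int k t ω]
  refine setIntegral_congr_ae measurableSet_Ioc ?_
  rw [ae_restrict_iff' measurableSet_Ioi] at h1 h3
  have hlam' := ae_all_iff.2 hlam
  rw [ae_restrict_iff' measurableSet_Ioi] at hlam'
  filter_upwards [h1, h3, hlam'] with s g1 g3 g4 hst
  have hs : 0 < s := hst.1
  obtain ⟨k, hkj, hk⟩ := S.cell_exists hs (hst.2.trans hj.le)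
  have g5 := S.ratio hs (g1 hs) hk.1 hk.2 (h4 k s hk.1)
  rw [S.countXminus_eq k hk.1 hk.2, g3 hs, g4 hs k, g5, Finset.sum_eq_single k]
  · rw [if_pos hk]
  · intro i _ hi
    rw [if_neg]
    intro hi'
    exact hi (S.cell_unique hk hi')
  · intro h
    simp at h
    omega

end

end Sys

lemma meas_of_ae {m : MeasurableSpace Ω} {m0 : MeasurableSpace Ω} {μ : Measure Ω}
    (hnull : ∀ s, μ s = 0 → MeasurableSet[m] s) {f g : Ω → ℝ} (hf : Measurable[m] f)
    (hfg : ∀ᵐ ω ∂μ, g ω = f ω) : Measurable[m] g := by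
  intro B hB
  have h1 : μ {ω | ¬ g ω = f ω} = 0 := ae_iff.1 hfg
  have h2 : g ⁻¹' B = (f ⁻¹' B \ {ω | ¬ g ω = f ω}) ∪ (g ⁻¹' B ∩ {ω | ¬ g ω = f ω}) := by
    ext ω
    by_cases h : g ω = f ω <;> simp [h]
  rw [h2]
  exact MeasurableSet.union (m := m) (MeasurableSet.diff (m := m) (hf hB) (hnull _ h1))
    (hnull _ (measure_mono_null Set.inter_subset_right h1))

lemma Sys.mart {m0 : MeasurableSpace Ω} {μ : Measure Ω} [IsProbabilityMeasure μ]
    {H : ℕ → MeasurableSpace Ω}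
    {η : ℝ → Ω → ℝ} {L U : ℝ} {e : ℕ → Ω → ℝ} {l : ℕ → ℝ → ℝ} {τ : ℕ → Ω → ℝ} {a : ℕ → ℝ → ℝ}
    (S : Sys μ H η L U e l τ a) {M : ℝ → Ω → ℝ}
    (hM : ∀ᵐ ω ∂μ, ∀ t : ℝ, M t ω = ∑' k, Nk η e τ a k t ω) :
    IsMartingale μ (Gs m0 H τ) M := by
  have hMt : ∀ t, ∀ᵐ ω ∂μ, M t ω = ∑' k, Nk η e τ a k t ω := fun t =>
    hM.mono fun ω h => h t
  have hI : ∀ t : ℝ, 0 ≤ t → Integrable (M t) μ := fun t ht => (S.tsum_int t ht).congr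
    ((hMt t).mono fun ω h => h.symm)
  have hm : ∀ t : ℝ, 0 ≤ t → Measurable[Gs m0 H τ t] (M t) := fun t _ =>
    meas_of_ae (μ := μ) (fun s hs => S.nullG hs t) (S.tsum_meas t) (hMt t)
  refine ⟨hI, hm, fun s t hs hst => ?_⟩
  refine (ae_eq_condExp_of_forall_setIntegral_eq (Sys.Gs_le m0 H τ s) (hI t (hs.trans hst))
    (fun A _ _ => (hI s hs).integrableOn) (fun A hA _ => ?_) ?_).symm
  · have hA0 := Sys.Gs_le m0 H τ s A hA
    rw [setIntegral_congr_ae hA0 ((hMt s).mono fun ω h _ => h),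
      setIntegral_congr_ae hA0 ((hMt t).mono fun ω h _ => h)]
    exact (S.tsum_set hs hst hA).symm
  · exact (hm s hs).stronglyMeasurable.aestronglyMeasurable

/-- The clamped process. -/
def clampη (L U : ℝ) (η : ℝ → Ω → ℝ) (s : ℝ) (ω : Ω) : ℝ :=
  if 0 ≤ s then max L (min U (η s ω)) else L

lemma clampη_meas {m : MeasurableSpace Ω} (L U : ℝ) {η : ℝ → Ω → ℝ}
    (h : ∀ n : ℕ, Measurable (fun p : Set.Icc (0:ℝ) n × Ω => η p.1 p.2)) :
    Measurable (Function.uncurry (clampη L U η)) := by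
  have h1 : ∀ n : ℕ, Measurable (fun p : ℝ × Ω => if 0 ≤ p.1 then
      max L (min U (η (Set.projIcc (0:ℝ) n (Nat.cast_nonneg n) p.1) p.2)) else L) := by
    intro n
    have h2 : Measurable (fun p : ℝ × Ω =>
        η (Set.projIcc (0:ℝ) n (Nat.cast_nonneg n) p.1) p.2) :=
      (h n).comp (((continuous_projIcc (h := Nat.cast_nonneg (α := ℝ) n)).measurable.comp measurable_fst).prodMk measurable_snd)
    exact Measurable.ite (measurableSet_le measurable_const measurable_fst)
      (measurable_const.max (measurable_const.min h2)) measurable_const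
  refine measurable_of_tendsto_metrizable h1 ?_
  rw [tendsto_pi_nhds]
  rintro ⟨s, ω⟩
  refine tendsto_const_nhds.congr' ?_
  obtain ⟨N, hN⟩ := exists_nat_ge s
  filter_upwards [eventually_ge_atTop N] with n hn
  simp only [Function.uncurry, clampη]
  by_cases hs : 0 ≤ s
  · have : s ∈ Set.Icc (0:ℝ) n := ⟨hs, hN.trans (by exact_mod_cast hn)⟩
    rw [if_pos hs, if_pos hs, Set.projIcc_of_mem _ this]
  · rw [if_neg hs, if_neg hs]

lemma expOne_clamp {m0 : MeasurableSpace Ω} (μ : Measure Ω) [IsProbabilityMeasure μ] {E : Ω → ℝ}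
    (hE : IsExpOne μ E) : IsExpOne μ (fun ω => if 0 < E ω then E ω else 1) := by
  refine ⟨Measurable.ite (measurableSet_lt measurable_const hE.1) hE.1 measurable_const,
    fun x hx => ?_⟩
  rw [← hE.2 x hx]
  have h0 : ∀ᵐ ω ∂μ, 0 < E ω := by
    have h1 := hE.2 0 le_rfl
    simp only [neg_zero, Real.exp_zero, ENNReal.ofReal_one] at h1
    exact (mem_ae_iff_prob_eq_one (measurableSet_lt measurable_const hE.1)).2 h1
  refine measure_congr ?_
  rw [eventuallyEq_set]
  filter_upwards [h0] with ω hω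
  simp [hω]


/-- Inverting the Markovian projection for counting processes: there exist
an enlarged filtration `G` satisfying the usual conditions and a `G`-adapted counting process
`X` (with strictly increasing jump times `τ_1 < τ_2 < ⋯ → ∞` that are `G`-stopping times)
such that `X_t − ∫_0^t (η_s / E[η_s | X_{s-}]) λ(s, X_{s-}) ds` is a `G`-martingale. -/
theorem invert_markovian_projection_counting
    {m0 : MeasurableSpace Ω} (μ : Measure Ω) [IsProbabilityMeasure μ]
    (F : ℝ → MeasurableSpace Ω) (hUC : UsualConditions μ F)
    (L U : ℝ) (hL : 0 < L) (hLU : L < U)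
    (η : ℝ → Ω → ℝ) (hη_prog : ProgMeas F η)
    (hη_bdd : ∀ᵐ p ∂(μ.prod (volume.restrict (Set.Ici (0:ℝ)))),
      L ≤ η p.2 p.1 ∧ η p.2 p.1 ≤ U)
    (lam : ℝ → ℕ → ℝ) (hlam_meas : ∀ x : ℕ, Measurable (fun t => lam t x))
    (hlam_bdd : ∀ x : ℕ, ∀ᵐ t ∂(volume.restrict (Set.Ici (0:ℝ))),
      L ≤ lam t x ∧ lam t x ≤ U)
    (E : ℕ → Ω → ℝ) (hE : ∀ k, IsExpOne μ (E k))
    (hindep : iIndep (fun i : Option ℕ =>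
      Option.elim i (Finfty F)
        (fun k => MeasurableSpace.comap (E k) inferInstance)) μ) :
    ∃ (G : ℝ → MeasurableSpace Ω) (τ : ℕ → Ω → ℝ),
      UsualConditions μ G ∧
      (∀ t : ℝ, F t ≤ G t) ∧
      (∀ (k : ℕ) (t : ℝ), MeasurableSet[G t] {ω | τ k ω ≤ t}) ∧
      (∀ ω, τ 0 ω = 0) ∧
      (∀ᵐ ω ∂μ, StrictMono (fun k => τ k ω) ∧ Tendsto (fun k => τ k ω) atTop atTop) ∧
      (∀ t : ℝ, 0 ≤ t → Measurable[G t] (fun ω => countX τ t ω)) ∧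
      IsMartingale μ G (fun t ω =>
        (countX τ t ω : ℝ) -
          ∫ s in Set.Ioc 0 t,
            η s ω /
              (μ[η s | MeasurableSpace.comap (countXminus τ s) inferInstance]) ω *
              lam s (countXminus τ s ω)) := by
  classical
  set m : Option ℕ → MeasurableSpace Ω := fun i => Option.elim i (Finfty F)
    (fun k => MeasurableSpace.comap (E k) inferInstance) with hm_def
  obtain ⟨⟨hFmono, hFle⟩, hFrc, hFnull⟩ := hUC
  have hFinf : Finfty F ≤ m0 := iSup₂_le fun t _ => hFle t
  have hmle : ∀ i, m i ≤ m0 := by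
    rintro (_ | k)
    · exact hFinf
    · exact (hE k).1.comap_le
  set T : ℕ → Set (Option ℕ) := fun k => {i | ∀ j, i = some j → j < k} with hT
  set H : ℕ → MeasurableSpace Ω := fun k => ⨆ i ∈ T k, m i with hH
  have hmH : ∀ k i, i ∈ T k → m i ≤ H k := fun k i hi => le_iSup₂ (f := fun i _ => m i) i hi
  have hFH : ∀ k, Finfty F ≤ H k := fun k => hmH k none (fun j hj => by cases hj)
  have hFtH : ∀ t, 0 ≤ t → ∀ k, F t ≤ H k := fun t ht k =>
    le_trans (le_iSup₂ (f := fun t (_ : t ∈ Set.Ici (0:ℝ)) => F t) t ht) (hFH k)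
  set e : ℕ → Ω → ℝ := fun k ω => if 0 < E k ω then E k ω else 1 with he
  have heE : ∀ k, Measurable[MeasurableSpace.comap (E k) inferInstance] (e k) := by
    intro k
    have h1 : Measurable (fun x : ℝ => if 0 < x then x else 1) :=
      Measurable.ite measurableSet_Ioi measurable_id measurable_const
    exact h1.comp (comap_measurable (E k))
  set η' : ℝ → Ω → ℝ := clampη L U η with hη'
  have hηF : Measurable[MeasurableSpace.prod inferInstance (Finfty F)] (Function.uncurry η') := by
    refine clampη_meas (m := Finfty F) L U fun n => ?_
    refine (hη_prog n (Nat.cast_nonneg n)).mono ?_ le_rfl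
    exact sup_le_sup le_rfl (MeasurableSpace.comap_mono
      (le_iSup₂ (f := fun t (_ : t ∈ Set.Ici (0:ℝ)) => F t) (n : ℝ) (Set.mem_Ici.2 (Nat.cast_nonneg n))))
  have hηmono : ∀ m' : MeasurableSpace Ω, Finfty F ≤ m' →
      Measurable[MeasurableSpace.prod inferInstance m'] (Function.uncurry η') := fun m' h =>
    hηF.mono (sup_le_sup le_rfl (MeasurableSpace.comap_mono h)) le_rfl
  set l : ℕ → ℝ → ℝ := fun k s => max L (min U (lam s k)) with hl
  have hclL : ∀ x, L ≤ max L (min U x) := fun x => le_max_left _ _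
  have hclU : ∀ x, max L (min U x) ≤ U := fun x => max_le hLU.le (min_le_left _ _)
  have hcl : ∀ x, L ≤ x ∧ x ≤ U → max L (min U x) = x := fun x hx => by
    rw [min_eq_right hx.2, max_eq_right hx.1]
  obtain ⟨τ, a, S⟩ := exists_sys μ H η' L U e l
    (fun k => iSup₂_le fun i _ => hmle i)
    (fun j k hjk => iSup₂_le fun i hi => hmH k i fun q hq => (hi q hq).trans_le hjk)
    (fun s hs => hFtH 0 le_rfl 0 _ (hFnull s hs))
    (fun k => hηmono (H k) (hFH k)) (hηmono m0 hFinf) hL hLU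
    (fun s ω => by
      simp only [hη', clampη]
      split_ifs
      · exact hclL _
      · exact le_rfl)
    (fun s ω => by
      simp only [hη', clampη]
      split_ifs
      · exact hclU _
      · exact hLU.le)
    (fun k => expOne_clamp μ (hE k))
    (fun k ω => by
      simp only [he]
      split_ifs with h
      · exact h
      · exact one_pos)
    (fun k => (heE k).mono (hmH (k + 1) (some k) (fun j hj => by cases hj; exact Nat.lt_succ_self k))
      le_rfl)
    (fun k => by
      have h1 : Indep (⨆ i ∈ T k, m i) (⨆ i ∈ ({some k} : Set (Option ℕ)), m i) μ := by
        refine indep_iSup_of_disjoint hmle hindep ?_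
        rw [Set.disjoint_singleton_right]
        intro h
        exact lt_irrefl k (h k rfl)
      refine indep_of_indep_of_le_right h1 ?_
      rw [iSup_singleton]
      exact (heE k).comap_le)
    (fun k => measurable_const.max (measurable_const.min (hlam_meas k)))
    (fun k s => hclL _) (fun k s => hclU _)
  have h2 : ∀ᵐ ω ∂μ, ∀ᵐ s ∂(volume.restrict (Set.Ioi (0:ℝ))), η s ω = η' s ω := by
    have hh := Measure.ae_ae_of_ae_prod hη_bdd
    filter_upwards [hh] with ω hω
    rw [restrict_Ioi_eq_restrict_Ici]
    filter_upwards [hω, ae_restrict_mem measurableSet_Ici] with s h3 h4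
    simp only [hη', clampη]
    rw [if_pos (Set.mem_Ici.1 h4), hcl _ h3]
  have h1 : ∀ᵐ s ∂(volume.restrict (Set.Ioi (0:ℝ))), η s =ᵐ[μ] η' s := by
    have hsw : ∀ᵐ p ∂((volume.restrict (Set.Ici (0:ℝ))).prod μ), L ≤ η p.1 p.2 ∧ η p.1 p.2 ≤ U :=
      (Measure.measurePreserving_swap (μ := volume.restrict (Set.Ici (0:ℝ)))
        (ν := μ)).quasiMeasurePreserving.ae hη_bdd
    have hh := Measure.ae_ae_of_ae_prod hsw
    rw [restrict_Ioi_eq_restrict_Ici]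
    filter_upwards [hh, ae_restrict_mem measurableSet_Ici] with s h3 h4
    filter_upwards [h3] with ω h5
    simp only [hη', clampη]
    rw [if_pos (Set.mem_Ici.1 h4), hcl _ h5]
  have hlam' : ∀ k, ∀ᵐ s ∂(volume.restrict (Set.Ioi (0:ℝ))), lam s k = l k s := by
    intro k
    rw [restrict_Ioi_eq_restrict_Ici]
    filter_upwards [hlam_bdd k] with s h3
    exact (hcl _ h3).symm
  have hpath := S.path hlam' h1 h2
  have hmart := S.mart hpath
  set G : ℝ → MeasurableSpace Ω := fun t => if t < 0 then m0 else Gs m0 H τ t with hG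
  have hGpos : ∀ t, 0 ≤ t → G t = Gs m0 H τ t := fun t ht => if_neg (not_lt.2 ht)
  have hGneg : ∀ t, t < 0 → G t = m0 := fun t ht => if_pos ht
  refine ⟨G, τ, ⟨⟨?_, ?_⟩, ?_, ?_⟩, ?_, ?_, S.τ0, ?_, ?_, ?_⟩
  · intro s t hs hst
    rw [hGpos s hs, hGpos t (hs.trans hst)]
    exact Gs_mono m0 H τ hst
  · intro t
    rcases lt_or_ge t 0 with h | h
    · rw [hGneg t h]
    · rw [hGpos t h]
      exact Sys.Gs_le m0 H τ t
  · intro t ht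
    refine le_antisymm ?_ ?_
    · refine le_iInf₂ fun s hs => ?_
      rw [hGpos t ht, hGpos s (ht.trans (le_of_lt hs))]
      exact Gs_mono m0 H τ (le_of_lt hs)
    · intro A hA
      rw [hGpos t ht]
      refine Gs_rc m0 H τ t A fun s hs => ?_
      rw [← hGpos s (ht.trans hs.le)]
      exact iInf₂_le (f := fun s (_ : s ∈ Set.Ioi t) => G s) s hs A hA
  · intro s hs
    rw [hGpos 0 le_rfl]
    exact S.nullG hs 0
  · intro t
    rcases lt_or_ge t 0 with h | h
    · rw [hGneg t h]
      exact hFle t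
    · rw [hGpos t h]
      exact (hFtH t h 0).trans (S.H0G t)
  · intro k t
    rcases lt_or_ge t 0 with h | h
    · rw [hGneg t h]
      exact measurableSet_le (S.tm0 k) measurable_const
    · rw [hGpos t h]
      exact S.jump_meas k t
  · filter_upwards [S.nonexpl] with ω hω
    exact ⟨S.tmono ω, hω⟩
  · intro t ht
    rw [hGpos t ht]
    exact S.countX_meas t
  · refine ⟨hmart.1, fun t ht => ?_, fun s t hs hst => ?_⟩
    · rw [hGpos t ht]
      exact hmart.2.1 t ht
    · rw [hGpos s hs]
      exact hmart.2.2 s t hs hst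

end InvMarkovJump
end
end
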